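/- Mean-square convergence of RMSProp: lim_{n→∞} E[‖∇g(θ_n)‖²] = 0. -/

import Mathlib

open MeasureTheory Filter

/-!
With `β_n = 1 - 1 / n` the number `n * V n` is a running sum `S` of squared stochastic gradients, so
the step size is `1 / (√S + ε √n)`. It decreases in time, hence may be replaced by its predictable
predecessor at the price of a telescoping sum; this makes `g` plus a weighted second moment an
approximate supermartingale, and the energies `A_k (∇_i g)²` are summable in mean and almost surely.

The energy pays for the squared stochastic gradients wherever `|∇_i g| > δ₀`, and elsewhere they are
at most `δ₁²` by sharpness, so `S k` grows at most linearly and the step sizes are almost surely of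
order `1 / √k`. Steps taken while `‖∇g‖ ≥ ν` have summable squares and convergent noise, again by
the energy bound. Each sojourn of a trajectory away from the critical points then forces `g` to
decrease, and since the critical values are nowhere dense `g (θ n)` cannot oscillate; it converges
and `∇g (θ n) → 0` almost surely.

For the mean-square statement, non-flatness makes every coordinate drift inwards when `g` is large,
which bounds the fourth moments of `∇g (θ n)` and gives uniform integrability.
-/

/-! ### Smooth objectives -/

theorem abs_sub_sub_inner_gradient_le {E : Type*} [NormedAddCommGroup E] [InnerProductSpace ℝ E]
    [CompleteSpace E] {g : E → ℝ} {L : ℝ} (hL : 0 ≤ L) (hg : Differentiable ℝ g)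
    (hlip : ∀ x y, ‖gradient g x - gradient g y‖ ≤ L * ‖x - y‖) (x y : E) :
    |g y - g x - inner ℝ (gradient g x) (y - x)| ≤ L * ‖y - x‖ ^ 2 := by
  have mean_value := (convex_closedBall x ‖y - x‖).norm_image_sub_le_of_norm_fderiv_le' (𝕜 := ℝ)
    (f := g) (φ := fderiv ℝ g x) (C := L * ‖y - x‖) (x := x) (y := y) (fun z _ => hg z)
    (fun z hz => by
      rw [← toDual_gradient, ← toDual_gradient, ← map_sub, LinearIsometryEquiv.norm_map]
      refine (hlip z x).trans (mul_le_mul_of_nonneg_left ?_ hL)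
      simpa [dist_eq_norm] using hz)
    (by simp) (by simp [dist_eq_norm])
  rw [inner_gradient_left]
  simpa [Real.norm_eq_abs, pow_two, mul_assoc] using mean_value

/-- The standing assumptions on an objective `g`: it is nonnegative and differentiable, and its
gradient is Lipschitz with constant `L > 0`. -/
structure IsSmoothObjective {E : Type*} [NormedAddCommGroup E] [InnerProductSpace ℝ E]
    [CompleteSpace E] (g : E → ℝ) (L : ℝ) : Prop where
  pos : 0 < L
  nonneg : ∀ x, 0 ≤ g x
  differentiable : Differentiable ℝ g
  norm_gradient_sub_le : ∀ x y, ‖gradient g x - gradient g y‖ ≤ L * ‖x - y‖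

namespace IsSmoothObjective

variable {E : Type*} [NormedAddCommGroup E] [InnerProductSpace ℝ E] {g : E → ℝ} {L : ℝ}

section CompleteSpace

variable [CompleteSpace E]

theorem continuous_gradient (hg : IsSmoothObjective g L) : Continuous (gradient g) := by
  refine (LipschitzWith.of_dist_le_mul (K := L.toNNReal) fun x y => ?_).continuous
  rw [dist_eq_norm, dist_eq_norm, Real.coe_toNNReal L hg.pos.le]
  exact hg.norm_gradient_sub_le x y

theorem abs_sub_sub_inner_le (hg : IsSmoothObjective g L) (x y : E) :
    |g y - g x - inner ℝ (gradient g x) (y - x)| ≤ L * ‖y - x‖ ^ 2 :=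
  abs_sub_sub_inner_gradient_le hg.pos.le hg.differentiable hg.norm_gradient_sub_le x y

theorem norm_gradient_sq_le (hg : IsSmoothObjective g L) (x : E) :
    ‖gradient g x‖ ^ 2 ≤ 4 * L * g x := by
  have hL := hg.pos
  set y := x - (1 / (2 * L)) • gradient g x with hy
  have taylor : g y - g x + 1 / (2 * L) * ‖gradient g x‖ ^ 2 ≤
      L * ((1 / (2 * L)) ^ 2 * ‖gradient g x‖ ^ 2) := by
    simpa only [hy, sub_sub_cancel_left, inner_neg_right, inner_smul_right, norm_neg, norm_smul,
      real_inner_self_eq_norm_sq, Real.norm_eq_abs, mul_pow, sq_abs, sub_neg_eq_add]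
      using (abs_le.1 (hg.abs_sub_sub_inner_le x y)).2
  have gain : 1 / (2 * L) * ‖gradient g x‖ ^ 2 - L * ((1 / (2 * L)) ^ 2 * ‖gradient g x‖ ^ 2) =
      ‖gradient g x‖ ^ 2 / (4 * L) := by
    field_simp; ring
  have hle : ‖gradient g x‖ ^ 2 / (4 * L) ≤ g x := by linarith [hg.nonneg y]
  rwa [div_le_iff₀' (by positivity)] at hle

theorem norm_gradient_le_sqrt (hg : IsSmoothObjective g L) {R : ℝ} {x : E} (hx : g x ≤ R) :
    ‖gradient g x‖ ≤ √(4 * L * R) := by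
  have hL := hg.pos
  exact Real.le_sqrt_of_sq_le ((hg.norm_gradient_sq_le x).trans (by gcongr))

theorem eventually_le_add_of_norm_sub_le (hg : IsSmoothObjective g L) {x : ℕ → E} {R : ℝ}
    (hx : ∀ η > 0, ∀ᶠ k in atTop, g (x k) ≤ R → ‖x (k + 1) - x k‖ ≤ η) {η : ℝ} (hη : 0 < η) :
    ∀ᶠ k in atTop, g (x k) ≤ R → g (x (k + 1)) ≤ g (x k) + η := by
  have hL := hg.pos
  set M := √(4 * L * R) + L
  have hM0 : 0 < M := by positivity
  filter_upwards [hx (min 1 (η / M)) (by positivity)] with k hk hkR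
  obtain ⟨hr1, hrη⟩ := le_min_iff.1 (hk hkR)
  have taylor := (abs_le.1 (hg.abs_sub_sub_inner_le (x k) (x (k + 1)))).2
  have hinner : inner ℝ (gradient g (x k)) (x (k + 1) - x k) ≤
      √(4 * L * R) * ‖x (k + 1) - x k‖ := (real_inner_le_norm _ _).trans <|
    mul_le_mul_of_nonneg_right (hg.norm_gradient_le_sqrt hkR) (norm_nonneg _)
  have hsq : L * ‖x (k + 1) - x k‖ ^ 2 ≤ L * ‖x (k + 1) - x k‖ :=
    mul_le_mul_of_nonneg_left (pow_le_of_le_one (norm_nonneg _) hr1 two_ne_zero) hL.le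
  rw [le_div_iff₀ hM0] at hrη
  linarith

end CompleteSpace

theorem exists_pos_le_norm_gradient [ProperSpace E] (hg : IsSmoothObjective g L)
    (hcoer : Tendsto g (Bornology.cobounded E) atTop) {a b : ℝ}
    (hcrit : ∀ x, gradient g x = 0 → g x ∉ Set.Icc a b) :
    ∃ ν > 0, ∀ x, g x ∈ Set.Icc a b → ν ≤ ‖gradient g x‖ := by
  have hbdd : Bornology.IsBounded (g ⁻¹' Set.Icc a b) := by
    rw [← Bornology.isCobounded_compl_iff]
    filter_upwards [hcoer.eventually_gt_atTop b] with x hx using fun h => hx.not_ge h.2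
  have hK : IsCompact (g ⁻¹' Set.Icc a b) := Metric.isCompact_of_isClosed_isBounded
    (isClosed_Icc.preimage hg.differentiable.continuous) hbdd
  obtain hempty | hne := (g ⁻¹' Set.Icc a b).eq_empty_or_nonempty
  · exact ⟨1, one_pos, fun x hx => (hempty ▸ hx : x ∈ (∅ : Set E)).elim⟩
  · obtain ⟨y, hy, hmin⟩ := hK.exists_isMinOn hne hg.continuous_gradient.norm.continuousOn
    exact ⟨‖gradient g y‖, norm_pos_iff.2 fun h0 => hcrit y h0 hy, fun x hx => hmin hx⟩

end IsSmoothObjective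

/-! ### Perturbed descent sequences -/

theorem exists_norm_sum_Ico_lt {F : Type*} [NormedAddCommGroup F] {q : ℕ → F}
    (hq : CauchySeq fun n => ∑ k ∈ Finset.range n, q k) {η : ℝ} (hη : 0 < η) :
    ∃ N, ∀ s t, N ≤ s → s ≤ t → ‖∑ k ∈ Finset.Ico s t, q k‖ < η := by
  obtain ⟨N, hN⟩ := Metric.cauchySeq_iff.1 hq η hη
  refine ⟨N, fun s t hs hst => ?_⟩
  have := hN t (hs.trans hst) s hs
  rwa [dist_eq_norm, ← Finset.sum_Ico_eq_sub _ hst] at this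

theorem add_sum_Ico_le_of_forall_le_sub_add {f b q : ℕ → ℝ} {s t : ℕ} (hst : s ≤ t)
    (h : ∀ j, s ≤ j → j < t → f (j + 1) ≤ f j - b j + q j) :
    f t + ∑ j ∈ Finset.Ico s t, b j ≤ f s + ∑ j ∈ Finset.Ico s t, q j := by
  have hsum : ∑ j ∈ Finset.Ico s t, (f (j + 1) - f j) ≤ ∑ j ∈ Finset.Ico s t, (q j - b j) :=
    Finset.sum_le_sum fun j hj => by
      linarith [h j (Finset.mem_Ico.1 hj).1 (Finset.mem_Ico.1 hj).2]
  rw [Finset.sum_Ico_sub _ hst, Finset.sum_sub_distrib] at hsum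
  linarith

theorem norm_sub_sub_sum_Ico_le {F : Type*} [NormedAddCommGroup F] {x p : ℕ → F} {b : ℕ → ℝ}
    {s t : ℕ} (hst : s ≤ t) (h : ∀ j, s ≤ j → j < t → ‖x (j + 1) - x j - p j‖ ≤ b j) :
    ‖x t - x s - ∑ j ∈ Finset.Ico s t, p j‖ ≤ ∑ j ∈ Finset.Ico s t, b j := by
  rw [← Finset.sum_Ico_sub _ hst, ← Finset.sum_sub_distrib]
  exact norm_sum_le_of_le _ fun j hj => h j (Finset.mem_Ico.1 hj).1 (Finset.mem_Ico.1 hj).2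

theorem summable_of_eventually_le_sub_add {f b q : ℕ → ℝ} (hf : ∀ k, 0 ≤ f k)
    (hb : ∀ k, 0 ≤ b k) (hq : CauchySeq fun n => ∑ k ∈ Finset.range n, q k)
    (h : ∀ᶠ k in atTop, f (k + 1) ≤ f k - b k + q k) : Summable b := by
  obtain ⟨N₁, hN₁⟩ := eventually_atTop.1 h
  obtain ⟨N₂, hN₂⟩ := exists_norm_sum_Ico_lt hq one_pos
  set N := max N₁ N₂
  refine (summable_nat_add_iff N).1 (summable_of_sum_range_le (c := f N + 1) (fun k => hb _)
    fun n => ?_)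
  have hsum := add_sum_Ico_le_of_forall_le_sub_add (N.le_add_left n) (f := f) (b := b) (q := q)
    fun j hj _ => hN₁ j ((le_max_left _ _).trans hj)
  have hsmall := (abs_lt.1 (hN₂ N (n + N) (le_max_right _ _) (N.le_add_left n))).2
  rw [Finset.sum_Ico_eq_sum_range, Nat.add_sub_cancel] at hsum
  simp only [add_comm N] at hsum
  linarith [hf (n + N)]

theorem not_frequently_lt_and_frequently_gt_of_le_add {f q : ℕ → ℝ} {l u : ℝ} (hlu : l < u)
    (hq : CauchySeq fun n => ∑ k ∈ Finset.range n, q k)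
    (hjump : ∀ η > 0, ∀ᶠ k in atTop, f k ≤ u → f (k + 1) ≤ f k + η)
    (hstep : ∀ k, f k ∈ Set.Icc l u → f (k + 1) ≤ f k + q k) :
    ¬ ((∃ᶠ k in atTop, f k < l) ∧ ∃ᶠ k in atTop, u < f k) := by
  rintro ⟨hlow, hhigh⟩
  have hη : 0 < (u - l) / 3 := by linarith
  obtain ⟨N₁, hN₁⟩ := exists_norm_sum_Ico_lt hq hη
  obtain ⟨N₂, hN₂⟩ := eventually_atTop.1 (hjump _ hη)
  obtain ⟨s₀, hs₀, hs₀l⟩ := frequently_atTop.1 hlow (max N₁ N₂)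
  obtain ⟨t, hst, htu⟩ := frequently_atTop.1 hhigh s₀
  have hs₁ := (le_max_left N₁ N₂).trans hs₀
  have hs₂ := (le_max_right N₁ N₂).trans hs₀
  have last_entrance : ∀ n, s₀ ≤ n → f n < l ∨ ∃ s, s₀ ≤ s ∧ s ≤ n ∧ f s ≤ l + (u - l) / 3 ∧
      f n ≤ f s + ∑ k ∈ Finset.Ico s n, q k := by
    intro n hn
    induction n, hn using Nat.le_induction with
    | base => exact Or.inl hs₀l
    | succ n hn ih =>
      rcases lt_or_ge (f n) l with hnl | hnl
      · have hentry := hN₂ n (hs₂.trans hn) (by linarith)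
        exact Or.inr ⟨n + 1, by omega, le_rfl, by linarith, by simp⟩
      · obtain ⟨s, hs, hsn, hfs, hfn⟩ := ih.resolve_left hnl.not_gt
        have hsmall := (abs_lt.1 (hN₁ s n (hs₁.trans hs) hsn)).2
        have hdesc := hstep n ⟨hnl, by linarith⟩
        refine Or.inr ⟨s, hs, by omega, hfs, ?_⟩
        rw [Finset.sum_Ico_succ_top hsn]
        linarith
  obtain htl | ⟨s, hs, hs_le, hfs, hft⟩ := last_entrance t hst
  · linarith
  · linarith [(abs_lt.1 (hN₁ s t (hs₁.trans hs) hs_le)).2]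

theorem exists_Icc_subset_compl_of_isNowhereDense {s : Set ℝ} (hs : IsNowhereDense s) {a b : ℝ}
    (hab : a < b) : ∃ l u, a < l ∧ l < u ∧ u < b ∧ Set.Icc l u ⊆ sᶜ := by
  have hdense : Dense (closure s)ᶜ := interior_eq_empty_iff_dense_compl.1 hs
  obtain ⟨z, hz⟩ := hdense.inter_open_nonempty _ isOpen_Ioo (Set.nonempty_Ioo.2 hab)
  obtain ⟨r, hr, hball⟩ := Metric.isOpen_iff.1
    (isOpen_Ioo.inter isClosed_closure.isOpen_compl) z hz
  have hsub : Set.Icc (z - r / 2) (z + r / 2) ⊆ Metric.ball z r := by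
    rw [← Real.closedBall_eq_Icc]
    exact Metric.closedBall_subset_ball (by linarith)
  exact ⟨z - r / 2, z + r / 2, (hball (hsub ⟨le_rfl, by linarith⟩)).1.1, by linarith,
    (hball (hsub ⟨by linarith, le_rfl⟩)).1.2,
    fun y hy hys => (hball (hsub hy)).2 (subset_closure hys)⟩

/-- A sequence which, at points of bounded height `g ≤ R` and gradient norm at least `ν`, decreases
`g` and moves like a gradient step of size comparable to `a k`, up to perturbations `p` of the
position and `q` of the height whose series converge. The perturbations and the constants may
depend on `R` and `ν`. -/
def IsPerturbedDescent {E : Type*} [NormedAddCommGroup E] [InnerProductSpace ℝ E] [CompleteSpace E]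
    (g : E → ℝ) (a : ℕ → ℝ) (x : ℕ → E) : Prop :=
  ∀ R ν : ℝ, 0 < ν → ∃ (p : ℕ → E) (q : ℕ → ℝ) (c C : ℝ), 0 < c ∧ 0 < C ∧
    CauchySeq (fun n => ∑ k ∈ Finset.range n, p k) ∧
    CauchySeq (fun n => ∑ k ∈ Finset.range n, q k) ∧
    ∀ k, g (x k) ≤ R → ν ≤ ‖gradient g (x k)‖ →
      g (x (k + 1)) ≤ g (x k) - c * (a k * ‖gradient g (x k)‖ ^ 2) + q k ∧
      ‖x (k + 1) - x k - p k‖ ≤ C * (a k * ‖gradient g (x k)‖)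

namespace IsPerturbedDescent

variable {E : Type*} [NormedAddCommGroup E] [InnerProductSpace ℝ E]
  {g : E → ℝ} {L : ℝ} {x : ℕ → E} {a : ℕ → ℝ}

theorem not_frequently_lt_and_frequently_gt [ProperSpace E] (hx : IsPerturbedDescent g a x)
    (ha : ∀ k, 0 ≤ a k) (hg : IsSmoothObjective g L)
    (hcoer : Tendsto g (Bornology.cobounded E) atTop)
    (hstep : ∀ R, ∀ η > 0, ∀ᶠ k in atTop, g (x k) ≤ R → ‖x (k + 1) - x k‖ ≤ η)
    {l u : ℝ} (hlu : l < u) (hcrit : ∀ y, gradient g y = 0 → g y ∉ Set.Icc l u) :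
    ¬ ((∃ᶠ k in atTop, g (x k) < l) ∧ ∃ᶠ k in atTop, u < g (x k)) := by
  obtain ⟨ν, hν, hgrad⟩ := hg.exists_pos_le_norm_gradient hcoer hcrit
  obtain ⟨_, q, c, _, hc, -, -, hq, hdesc⟩ := hx u ν hν
  refine not_frequently_lt_and_frequently_gt_of_le_add (f := fun k => g (x k)) hlu hq
    (fun η hη => hg.eventually_le_add_of_norm_sub_le (hstep u) hη) fun k hk => ?_
  have hdecrease : 0 ≤ c * (a k * ‖gradient g (x k)‖ ^ 2) :=
    mul_nonneg hc.le (mul_nonneg (ha k) (sq_nonneg _))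
  linarith [(hdesc k hk.2 (hgrad _ hk)).1]

theorem exists_tendsto [ProperSpace E] (hx : IsPerturbedDescent g a x) (ha : ∀ k, 0 ≤ a k)
    (hg : IsSmoothObjective g L) (hcoer : Tendsto g (Bornology.cobounded E) atTop)
    (hstep : ∀ R, ∀ η > 0, ∀ᶠ k in atTop, g (x k) ≤ R → ‖x (k + 1) - x k‖ ≤ η)
    (hsard : IsNowhereDense (g '' {y | gradient g y = 0}))
    {B : ℝ} (hB : ∃ᶠ k in atTop, g (x k) ≤ B) :
    ∃ ℓ, Tendsto (fun k => g (x k)) atTop (nhds ℓ) := by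
  have no_upcrossing : ∀ b c : ℝ, b < c →
      ¬ ((∃ᶠ k in atTop, g (x k) < b) ∧ ∃ᶠ k in atTop, c < g (x k)) := by
    rintro b c hbc ⟨hlow, hhigh⟩
    obtain ⟨l, u, hl, hlu, hu, hsub⟩ :=
      exists_Icc_subset_compl_of_isNowhereDense hsard hbc
    exact hx.not_frequently_lt_and_frequently_gt ha hg hcoer hstep hlu
      (fun y hy hmem => hsub hmem ⟨y, hy, rfl⟩)
      ⟨hlow.mono fun k hk => hk.trans hl, hhigh.mono fun k hk => hu.trans hk⟩
  have hbelow : ∃ᶠ k in atTop, g (x k) < B + 1 := hB.mono fun k hk => by linarith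
  have habove : ∀ᶠ k in atTop, g (x k) ≤ B + 2 := by
    have := not_and.1 (no_upcrossing (B + 1) (B + 2) (by linarith)) hbelow
    simpa only [not_frequently, not_lt] using this
  exact tendsto_of_no_upcrossings dense_univ (fun b _ c _ => no_upcrossing b c)
    ⟨B + 2, eventually_map.2 habove⟩
    ⟨0, eventually_map.2 (Eventually.of_forall fun k => hg.nonneg _)⟩

section CompleteSpace

variable [CompleteSpace E]

theorem le_sum_mul_norm_gradient_sq {p : ℕ → E} {ν C : ℝ} {s t : ℕ} (ha : ∀ k, 0 ≤ a k)
    (hg : IsSmoothObjective g L) (hν : 0 < ν) (hC : 0 < C) (hst : s ≤ t)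
    (hp : ‖∑ j ∈ Finset.Ico s t, p j‖ < ν / (2 * L))
    (hdisp : ∀ j, s ≤ j → j < t → ‖x (j + 1) - x j - p j‖ ≤ C * (a j * ‖gradient g (x j)‖))
    (hlarge : ∀ j, s ≤ j → j < t → ν ≤ ‖gradient g (x j)‖)
    (hs : 2 * ν ≤ ‖gradient g (x s)‖) (ht : ‖gradient g (x t)‖ < ν) :
    ν ^ 2 / (2 * L * C) ≤ ∑ j ∈ Finset.Ico s t, a j * ‖gradient g (x j)‖ ^ 2 := by
  have hL := hg.pos
  have hdist : ν / L ≤ ‖x t - x s‖ := by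
    rw [div_le_iff₀' hL, norm_sub_rev]
    linarith [hg.norm_gradient_sub_le (x s) (x t),
      norm_sub_norm_le (gradient g (x s)) (gradient g (x t))]
  have hpath : ν / (2 * L) ≤ C * ∑ j ∈ Finset.Ico s t, a j * ‖gradient g (x j)‖ := by
    have htri := norm_sub_norm_le (x t - x s) (∑ j ∈ Finset.Ico s t, p j)
    have hsum := norm_sub_sub_sum_Ico_le hst hdisp
    have hhalf : ν / L = ν / (2 * L) + ν / (2 * L) := by field_simp; ring
    rw [← Finset.mul_sum] at hsum
    linarith
  calc ν ^ 2 / (2 * L * C) = ν * (ν / (2 * L) / C) := by field_simp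
    _ ≤ ν * ∑ j ∈ Finset.Ico s t, a j * ‖gradient g (x j)‖ := by
      gcongr
      rwa [div_le_iff₀' hC]
    _ ≤ ∑ j ∈ Finset.Ico s t, a j * ‖gradient g (x j)‖ ^ 2 := by
      rw [Finset.mul_sum]
      refine Finset.sum_le_sum fun j hj => ?_
      obtain ⟨hsj, hjt⟩ := Finset.mem_Ico.1 hj
      calc ν * (a j * ‖gradient g (x j)‖)
          ≤ ‖gradient g (x j)‖ * (a j * ‖gradient g (x j)‖) := by
            gcongr
            exacts [mul_nonneg (ha j) (norm_nonneg _), hlarge j hsj hjt]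
        _ = a j * ‖gradient g (x j)‖ ^ 2 := by ring

theorem frequently_norm_gradient_lt (hx : IsPerturbedDescent g a x) (ha : ∀ k, 0 ≤ a k)
    (ha' : ¬ Summable a) (hg : ∀ y, 0 ≤ g y) {R ν : ℝ} (hR : ∀ᶠ k in atTop, g (x k) ≤ R)
    (hν : 0 < ν) : ∃ᶠ k in atTop, ‖gradient g (x k)‖ < ν := by
  by_contra hlarge
  simp only [not_frequently, not_lt] at hlarge
  obtain ⟨_, q, c, _, hc, -, -, hq, hdesc⟩ := hx R ν hν
  have hsum : Summable fun k => c * (a k * ‖gradient g (x k)‖ ^ 2) :=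
    summable_of_eventually_le_sub_add (fun k => hg (x k))
      (fun k => mul_nonneg hc.le (mul_nonneg (ha k) (sq_nonneg _))) hq
      (by filter_upwards [hR, hlarge] with k hkR hkν using (hdesc k hkR hkν).1)
  have hdom : Summable fun k => a k * ν ^ 2 :=
    ((summable_mul_left_iff hc.ne').1 hsum).of_norm_bounded_eventually_nat (by
      filter_upwards [hlarge] with k hk
      rw [Real.norm_of_nonneg (mul_nonneg (ha k) (sq_nonneg ν))]
      exact mul_le_mul_of_nonneg_left (pow_le_pow_left₀ hν.le hk 2) (ha k))
  exact ha' ((summable_mul_right_iff (pow_pos hν 2).ne').1 hdom)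

/-- Whenever the gradient norm falls from `2 * ν` to `ν`, the sequence has travelled a distance of
order `ν`, which costs a fixed amount of `g`; a convergent sequence of heights cannot afford this
infinitely often. -/
theorem tendsto_gradient (hx : IsPerturbedDescent g a x) (ha : ∀ k, 0 ≤ a k)
    (ha' : ¬ Summable a) (hg : IsSmoothObjective g L)
    {ℓ : ℝ} (hℓ : Tendsto (fun k => g (x k)) atTop (nhds ℓ)) :
    Tendsto (fun k => gradient g (x k)) atTop (nhds 0) := by
  by_contra hcon
  obtain ⟨ν, hν, hfreq⟩ : ∃ ν > 0, ∃ᶠ k in atTop, 2 * ν ≤ ‖gradient g (x k)‖ := by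
    simp only [Metric.tendsto_nhds, dist_zero_right, not_forall, not_eventually, not_lt] at hcon
    obtain ⟨e, he, hf⟩ := hcon
    exact ⟨e / 2, by positivity, hf.mono fun k hk => by linarith⟩
  have hL := hg.pos
  obtain ⟨p, q, c, C, hc, hC, hp, hq, hdesc⟩ := hx (ℓ + 1) ν hν
  set D := ν ^ 2 / (2 * L * C)
  have hD0 : 0 < D := by positivity
  have hbdd : ∀ᶠ k in atTop, g (x k) ≤ ℓ + 1 := hℓ.eventually (eventually_le_nhds (by linarith))
  obtain ⟨N₁, hN₁⟩ := exists_norm_sum_Ico_lt hp (show 0 < ν / (2 * L) by positivity)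
  obtain ⟨N₂, hN₂⟩ := exists_norm_sum_Ico_lt hq (show 0 < c * D / 4 by positivity)
  obtain ⟨N₃, hN₃⟩ := Metric.cauchySeq_iff.1 hℓ.cauchySeq (c * D / 4) (by positivity)
  obtain ⟨N₄, hN₄⟩ := eventually_atTop.1 hbdd
  obtain ⟨s, hs, hsν⟩ := frequently_atTop.1 hfreq (max (max N₁ N₂) (max N₃ N₄))
  simp only [max_le_iff] at hs
  obtain ⟨⟨hs₁, hs₂⟩, hs₃, hs₄⟩ := hs
  obtain ⟨t, ⟨hst, htν⟩, hfirst⟩ : ∃ t, (s ≤ t ∧ ‖gradient g (x t)‖ < ν) ∧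
      ∀ j < t, ¬ (s ≤ j ∧ ‖gradient g (x j)‖ < ν) := by
    classical
    have hexit := frequently_atTop.1 (hx.frequently_norm_gradient_lt ha ha' hg.nonneg hbdd hν) s
    exact ⟨Nat.find hexit, Nat.find_spec hexit, fun j => Nat.find_min hexit⟩
  have hlarge : ∀ j, s ≤ j → j < t → ν ≤ ‖gradient g (x j)‖ := fun j hsj hjt =>
    not_lt.1 fun hlt => hfirst j hjt ⟨hsj, hlt⟩
  have hrun := fun j hsj hjt => hdesc j (hN₄ j (hs₄.trans hsj)) (hlarge j hsj hjt)
  have hcost := le_sum_mul_norm_gradient_sq ha hg hν hC hst (hN₁ s t hs₁ hst)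
    (fun j hsj hjt => (hrun j hsj hjt).2) hlarge hsν htν
  have hfall := add_sum_Ico_le_of_forall_le_sub_add (f := fun k => g (x k)) hst
    fun j hsj hjt => (hrun j hsj hjt).1
  rw [← Finset.mul_sum] at hfall
  linarith [mul_le_mul_of_nonneg_left hcost hc.le, mul_pos hc hD0,
    (abs_lt.1 (hN₂ s t hs₂ hst)).2, (abs_lt.1 (hN₃ t (hs₃.trans hst) s hs₃)).1]

end CompleteSpace

end IsPerturbedDescent

/-! ### The Lyapunov function along one preconditioned step -/

/-- The step `x' = x - A' * X` (coordinate-wise) in the direction `X`, preconditioned by `A'`, where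
`A'` is nonnegative and has decreased from its previous value `A`. -/
structure IsPreconditionedStep {ι : Type*} (A A' X : ι → ℝ) (x x' : EuclideanSpace ℝ ι) :
    Prop where
  nonneg : ∀ i, 0 ≤ A' i
  le : ∀ i, A' i ≤ A i
  eq_sub : ∀ i, x' i = x i - A' i * X i

/-- The Lyapunov function: the objective plus the conditional second moment bound of the stochastic
gradient, weighted by the preconditioner `A` known before the gradient is drawn. -/
noncomputable def lyapunov {ι : Type*} [Fintype ι] (g : EuclideanSpace ℝ ι → ℝ) (σ₀ σ₁ : ℝ)
    (A : ι → ℝ) (x : EuclideanSpace ℝ ι) : ℝ :=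
  g x + ∑ i, A i * (σ₀ * gradient g x i ^ 2 + σ₁)

theorem abs_sum_mul_sq_sub_sq_le {ι : Type*} [Fintype ι] {w : ι → ℝ} {α : ℝ} (hw : ∀ i, 0 ≤ w i)
    (hwα : ∀ i, w i ≤ α) (hα : 0 ≤ α) (y z : EuclideanSpace ℝ ι) :
    |∑ i, w i * (y i ^ 2 - z i ^ 2)| ≤ α * (‖y - z‖ * (2 * ‖z‖ + ‖y - z‖)) := by
  have cauchy_schwarz : ∑ i, |(y - z) i| * |(y + z) i| ≤ ‖y - z‖ * ‖y + z‖ := by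
    simpa only [EuclideanSpace.norm_eq, Real.norm_eq_abs] using
      Real.sum_mul_le_sqrt_mul_sqrt Finset.univ (fun i => |(y - z) i|) fun i => |(y + z) i|
  have triangle : ‖y + z‖ ≤ 2 * ‖z‖ + ‖y - z‖ := by
    calc ‖y + z‖ = ‖(2 : ℝ) • z + (y - z)‖ := by rw [two_smul]; abel_nf
      _ ≤ ‖(2 : ℝ) • z‖ + ‖y - z‖ := norm_add_le _ _
      _ = 2 * ‖z‖ + ‖y - z‖ := by rw [norm_smul, Real.norm_two]
  calc |∑ i, w i * (y i ^ 2 - z i ^ 2)| ≤ ∑ i, |w i * (y i ^ 2 - z i ^ 2)| :=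
        Finset.abs_sum_le_sum_abs _ _
    _ ≤ ∑ i, α * (|(y - z) i| * |(y + z) i|) := by
      gcongr with i
      rw [abs_mul, abs_of_nonneg (hw i), ← abs_mul, PiLp.sub_apply, PiLp.add_apply,
        mul_comm (_ - _), ← sq_sub_sq]
      exact mul_le_mul_of_nonneg_right (hwα i) (abs_nonneg _)
    _ ≤ α * (‖y - z‖ * (2 * ‖z‖ + ‖y - z‖)) := by
      rw [← Finset.mul_sum]
      gcongr
      exact cauchy_schwarz.trans (by gcongr)

theorem mul_le_sq_mul_sq_div_add (h X : ℝ) {T : ℝ} (hT : 0 < T) :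
    h * X ≤ h ^ 2 * X ^ 2 / (4 * T) + T := by
  have square : h ^ 2 * X ^ 2 / (4 * T) + T - h * X = (h * X - 2 * T) ^ 2 / (4 * T) := by
    field_simp; ring
  have : 0 ≤ (h * X - 2 * T) ^ 2 / (4 * T) := by positivity
  linarith

/-- The dependence of the new weight `a'` on `X` costs `(a - a') * h * X`; by the inequality of
arithmetic and geometric means, this is paid for by the decrease `(a - a') * (σ₀ * h ^ 2 + σ₁)` of
the correction term. -/
theorem lyapunov_coordinate_sub_le {a a' α σ₀ σ₁ : ℝ} (ha' : 0 ≤ a') (haa : a' ≤ a) (hα : a ≤ α)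
    (hσ₀ : 0 ≤ σ₀) (hσ₁ : 0 < σ₁) (h h' X : ℝ) :
    -(h * (a' * X)) + a' * (σ₀ * h' ^ 2 + σ₁) - a * (σ₀ * h ^ 2 + σ₁) ≤
      -(1 / 2) * (a * h ^ 2) + a * h * (h - X)
        + a * h ^ 2 / 4 * (X ^ 2 / (σ₀ * h ^ 2 + σ₁) - 1)
        + (4 * σ₀ ^ 2 + σ₀) * α * (h' - h) ^ 2 := by
  set T := σ₀ * h ^ 2 + σ₁ with hT
  have hT0 : 0 < T := by positivity
  have amgm : (a - a') * (h * X) ≤ a * (h ^ 2 * X ^ 2 / (4 * T)) + (a - a') * T := by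
    have hle : (a - a') * (h ^ 2 * X ^ 2 / (4 * T)) ≤ a * (h ^ 2 * X ^ 2 / (4 * T)) :=
      mul_le_mul_of_nonneg_right (by linarith) (by positivity)
    have := mul_le_mul_of_nonneg_left (mul_le_sq_mul_sq_div_add h X hT0) (sub_nonneg.2 haa)
    linarith
  have moment_change : σ₀ * (h' ^ 2 - h ^ 2) ≤ h ^ 2 / 4 + (4 * σ₀ ^ 2 + σ₀) * (h' - h) ^ 2 := by
    linarith [sq_nonneg (h / 2 - 2 * σ₀ * (h' - h))]
  have weighted_change : a' * (σ₀ * (h' ^ 2 - h ^ 2)) ≤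
      a * (h ^ 2 / 4) + (4 * σ₀ ^ 2 + σ₀) * α * (h' - h) ^ 2 := by
    calc a' * (σ₀ * (h' ^ 2 - h ^ 2))
        ≤ a' * (h ^ 2 / 4) + a' * ((4 * σ₀ ^ 2 + σ₀) * (h' - h) ^ 2) := by
          rw [← mul_add]; gcongr
      _ ≤ a * (h ^ 2 / 4) + α * ((4 * σ₀ ^ 2 + σ₀) * (h' - h) ^ 2) := by
          gcongr; exact haa.trans hα
      _ = _ := by ring
  have hsplit : a' * (σ₀ * h' ^ 2 + σ₁) = a' * (σ₀ * (h' ^ 2 - h ^ 2)) + a' * T := by rw [hT]; ring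
  have hquot : a * h ^ 2 / 4 * (X ^ 2 / T - 1) =
      a * (h ^ 2 * X ^ 2 / (4 * T)) - a * h ^ 2 / 4 := by
    field_simp
  rw [hsplit, hquot]
  linarith

namespace IsPreconditionedStep

variable {ι : Type*} [Fintype ι] {g : EuclideanSpace ℝ ι → ℝ} {L σ₀ σ₁ α : ℝ}
  {x x' : EuclideanSpace ℝ ι} {A A' X : ι → ℝ}

theorem norm_sub_sq_eq (h : IsPreconditionedStep A A' X x x') :
    ‖x' - x‖ ^ 2 = ∑ i, (A' i * X i) ^ 2 := by
  simp [EuclideanSpace.real_norm_sq_eq, h.eq_sub]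

theorem norm_sub_sq_le (h : IsPreconditionedStep A A' X x x') :
    ‖x' - x‖ ^ 2 ≤ ∑ i, A i ^ 2 * X i ^ 2 := by
  rw [h.norm_sub_sq_eq]
  gcongr with i
  rw [mul_pow]
  gcongr
  exacts [h.nonneg i, h.le i]

theorem inner_sub_eq (h : IsPreconditionedStep A A' X x x') (y : EuclideanSpace ℝ ι) :
    inner ℝ y (x' - x) = ∑ i, -(y i * (A' i * X i)) := by
  simp [PiLp.inner_apply, h.eq_sub, mul_comm]

theorem lyapunov_le (h : IsPreconditionedStep A A' X x x') (hg : IsSmoothObjective g L)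
    (hσ₀ : 0 ≤ σ₀) (hσ₁ : 0 < σ₁) (hα : 0 ≤ α) (hAα : ∀ i, A i ≤ α) :
    lyapunov g σ₀ σ₁ A' x' ≤ lyapunov g σ₀ σ₁ A x
      + ∑ i, (-(1 / 2) * (A i * gradient g x i ^ 2)
        + A i * gradient g x i * (gradient g x i - X i)
        + A i * gradient g x i ^ 2 / 4 * (X i ^ 2 / (σ₀ * gradient g x i ^ 2 + σ₁) - 1)
        + (L + (4 * σ₀ ^ 2 + σ₀) * α * L ^ 2) * (A i ^ 2 * X i ^ 2)) := by
  have hL := hg.pos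
  have taylor := (abs_le.1 (hg.abs_sub_sub_inner_le x x')).2
  rw [h.inner_sub_eq] at taylor
  have gradient_change : ∑ i, (gradient g x' i - gradient g x i) ^ 2 ≤ L ^ 2 * ‖x' - x‖ ^ 2 := by
    rw [← mul_pow]
    simpa only [EuclideanSpace.real_norm_sq_eq, PiLp.sub_apply] using
      pow_le_pow_left₀ (norm_nonneg _) (hg.norm_gradient_sub_le x' x) 2
  have coordinates := Finset.sum_le_sum fun i (_ : i ∈ Finset.univ) =>
    lyapunov_coordinate_sub_le (h.nonneg i) (h.le i) (hAα i) hσ₀ hσ₁ (gradient g x i)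
      (gradient g x' i) (X i)
  have hchange := mul_le_mul_of_nonneg_left gradient_change
    (show 0 ≤ (4 * σ₀ ^ 2 + σ₀) * α by positivity)
  have hstep := mul_le_mul_of_nonneg_left h.norm_sub_sq_le
    (show 0 ≤ L + (4 * σ₀ ^ 2 + σ₀) * α * L ^ 2 by positivity)
  simp only [Finset.sum_add_distrib, Finset.sum_sub_distrib, ← Finset.mul_sum]
    at coordinates taylor ⊢
  unfold lyapunov
  linarith

theorem abs_lyapunov_sub_le (h : IsPreconditionedStep A A' X x x') (hg : IsSmoothObjective g L)
    (hσ₀ : 0 ≤ σ₀) (hσ₁ : 0 ≤ σ₁) (hα : 0 ≤ α) (hAα : ∀ i, A i ≤ α) :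
    |lyapunov g σ₀ σ₁ A' x' - lyapunov g σ₀ σ₁ A x| ≤
      ((1 + 2 * L * σ₀ * α) * ‖gradient g x‖ + (L + L ^ 2 * σ₀ * α) * ‖x' - x‖) * ‖x' - x‖
        + ∑ i, A i * (σ₀ * gradient g x i ^ 2 + σ₁) := by
  have taylor := abs_le.1 (hg.abs_sub_sub_inner_le x x')
  have cauchy_schwarz := abs_le.1 (abs_real_inner_le_norm (gradient g x) (x' - x))
  have gradient_change : σ₀ * |∑ i, A' i * (gradient g x' i ^ 2 - gradient g x i ^ 2)| ≤
      σ₀ * (α * (L * ‖x' - x‖ * (2 * ‖gradient g x‖ + L * ‖x' - x‖))) := by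
    have hlip := hg.norm_gradient_sub_le x' x
    have := abs_sum_mul_sq_sub_sq_le h.nonneg (fun i => (h.le i).trans (hAα i)) hα
      (gradient g x') (gradient g x)
    gcongr
    exact this.trans (by gcongr; exact (norm_nonneg _).trans hlip)
  rw [← abs_of_nonneg hσ₀, ← abs_mul, abs_of_nonneg hσ₀] at gradient_change
  have weight_change : ∑ i, (A i - A' i) * (σ₀ * gradient g x i ^ 2 + σ₁) ≤
      ∑ i, A i * (σ₀ * gradient g x i ^ 2 + σ₁) := by
    gcongr with i
    exact sub_le_self _ (h.nonneg i)
  have weight_change_nonneg : 0 ≤ ∑ i, (A i - A' i) * (σ₀ * gradient g x i ^ 2 + σ₁) :=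
    Finset.sum_nonneg fun i _ => mul_nonneg (sub_nonneg.2 (h.le i)) (by positivity)
  have decomposition : lyapunov g σ₀ σ₁ A' x' - lyapunov g σ₀ σ₁ A x =
      (g x' - g x) + σ₀ * ∑ i, A' i * (gradient g x' i ^ 2 - gradient g x i ^ 2)
        - ∑ i, (A i - A' i) * (σ₀ * gradient g x i ^ 2 + σ₁) := by
    have : ∑ i, A' i * (σ₀ * gradient g x' i ^ 2 + σ₁) =
        σ₀ * ∑ i, A' i * (gradient g x' i ^ 2 - gradient g x i ^ 2)
          + ∑ i, A i * (σ₀ * gradient g x i ^ 2 + σ₁)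
          - ∑ i, (A i - A' i) * (σ₀ * gradient g x i ^ 2 + σ₁) := by
      rw [Finset.mul_sum, ← Finset.sum_add_distrib, ← Finset.sum_sub_distrib]
      exact Finset.sum_congr rfl fun i _ => by ring
    unfold lyapunov
    linarith
  rw [abs_le] at gradient_change ⊢
  constructor <;> linarith

theorem sq_lyapunov_sub_le {D : ℝ} (h : IsPreconditionedStep A A' X x x')
    (hg : IsSmoothObjective g L) (hσ₀ : 0 ≤ σ₀) (hσ₁ : 0 ≤ σ₁) (hα : 0 ≤ α) (hAα : ∀ i, A i ≤ α)
    (hD : ‖x' - x‖ ≤ D) :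
    (lyapunov g σ₀ σ₁ A' x' - lyapunov g σ₀ σ₁ A x) ^ 2 ≤
      2 * ((1 + 2 * L * σ₀ * α) * ‖gradient g x‖ + (L + L ^ 2 * σ₀ * α) * D) ^ 2
        * ∑ i, A i ^ 2 * X i ^ 2
      + 2 * (∑ i, A i * (σ₀ * gradient g x i ^ 2 + σ₁)) ^ 2 := by
  have hL := hg.pos
  set T := ∑ i, A i * (σ₀ * gradient g x i ^ 2 + σ₁)
  set M := (1 + 2 * L * σ₀ * α) * ‖gradient g x‖ + (L + L ^ 2 * σ₀ * α) * D with hM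
  have hsub : |lyapunov g σ₀ σ₁ A' x' - lyapunov g σ₀ σ₁ A x| ≤ M * ‖x' - x‖ + T :=
    (h.abs_lyapunov_sub_le hg hσ₀ hσ₁ hα hAα).trans (by rw [hM]; gcongr)
  calc (lyapunov g σ₀ σ₁ A' x' - lyapunov g σ₀ σ₁ A x) ^ 2
      = |lyapunov g σ₀ σ₁ A' x' - lyapunov g σ₀ σ₁ A x| ^ 2 := (sq_abs _).symm
    _ ≤ (M * ‖x' - x‖ + T) ^ 2 := pow_le_pow_left₀ (abs_nonneg _) hsub 2
    _ ≤ 2 * M ^ 2 * ‖x' - x‖ ^ 2 + 2 * T ^ 2 := by linarith [sq_nonneg (M * ‖x' - x‖ - T)]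
    _ ≤ 2 * M ^ 2 * ∑ i, A i ^ 2 * X i ^ 2 + 2 * T ^ 2 := by gcongr; exact h.norm_sub_sq_le

end IsPreconditionedStep

/-! ### Stochastic gradient descent with an adapted preconditioner -/

/-- Bounded real random variables that are strongly measurable for a sub-σ-algebra `m`. -/
def BoundedMeasurable {Ω : Type*} (m : MeasurableSpace Ω) (f : Ω → ℝ) : Prop :=
  StronglyMeasurable[m] f ∧ ∃ C, ∀ ω, |f ω| ≤ C

namespace BoundedMeasurable

variable {Ω : Type*} {m m0 : MeasurableSpace Ω} {f f' : Ω → ℝ}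

theorem const (c : ℝ) : BoundedMeasurable m fun _ => c :=
  ⟨stronglyMeasurable_const, |c|, fun _ => le_rfl⟩

theorem add (hf : BoundedMeasurable m f) (hf' : BoundedMeasurable m f') :
    BoundedMeasurable m fun ω => f ω + f' ω := by
  obtain ⟨h, C, hC⟩ := hf
  obtain ⟨h', C', hC'⟩ := hf'
  exact ⟨h.add h', C + C', fun ω => (abs_add_le _ _).trans (add_le_add (hC ω) (hC' ω))⟩

theorem mul (hf : BoundedMeasurable m f) (hf' : BoundedMeasurable m f') :
    BoundedMeasurable m fun ω => f ω * f' ω := by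
  obtain ⟨h, C, hC⟩ := hf
  obtain ⟨h', C', hC'⟩ := hf'
  refine ⟨h.mul h', C * C', fun ω => ?_⟩
  rw [abs_mul]
  exact mul_le_mul (hC ω) (hC' ω) (abs_nonneg _) ((abs_nonneg _).trans (hC ω))

theorem neg (hf : BoundedMeasurable m f) : BoundedMeasurable m fun ω => -f ω := by
  obtain ⟨h, C, hC⟩ := hf
  exact ⟨h.neg, C, fun ω => by rw [abs_neg]; exact hC ω⟩

theorem sub (hf : BoundedMeasurable m f) (hf' : BoundedMeasurable m f') :
    BoundedMeasurable m fun ω => f ω - f' ω := by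
  simpa only [sub_eq_add_neg] using hf.add hf'.neg

protected theorem pow (hf : BoundedMeasurable m f) (n : ℕ) :
    BoundedMeasurable m fun ω => f ω ^ n := by
  induction n with
  | zero => simpa using const 1
  | succ n ih => simpa only [pow_succ] using ih.mul hf

theorem sum {ι : Type*} {s : Finset ι} {F : ι → Ω → ℝ} (hF : ∀ i, BoundedMeasurable m (F i)) :
    BoundedMeasurable m fun ω => ∑ i ∈ s, F i ω := by
  classical
  induction s using Finset.induction_on with
  | empty => simpa using const 0
  | insert i s hi ih => simpa only [Finset.sum_insert hi] using (hF i).add ih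

theorem max (hf : BoundedMeasurable m f) (hf' : BoundedMeasurable m f') :
    BoundedMeasurable m fun ω => max (f ω) (f' ω) := by
  obtain ⟨h, C, hC⟩ := hf
  obtain ⟨h', C', hC'⟩ := hf'
  exact ⟨h.sup h', Max.max C C', fun ω =>
    abs_max_le_max_abs_abs.trans (max_le_max (hC ω) (hC' ω))⟩

theorem inv {c : ℝ} (hf : BoundedMeasurable m f) (hc : 0 < c) (h : ∀ ω, c ≤ f ω) :
    BoundedMeasurable m fun ω => (f ω)⁻¹ := by
  refine ⟨(hf.1.measurable.inv).stronglyMeasurable, c⁻¹, fun ω => ?_⟩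
  rw [abs_of_nonneg (inv_nonneg.2 (hc.le.trans (h ω)))]
  exact inv_anti₀ hc (h ω)

theorem indicator {s : Set Ω} (hf : BoundedMeasurable m f) (hs : MeasurableSet[m] s) :
    BoundedMeasurable m (s.indicator f) := by
  obtain ⟨h, C, hC⟩ := hf
  refine ⟨h.indicator hs, C, fun ω => ?_⟩
  by_cases hω : ω ∈ s
  · rw [Set.indicator_of_mem hω]
    exact hC ω
  · rw [Set.indicator_of_notMem hω, abs_zero]
    exact (abs_nonneg _).trans (hC ω)

theorem integrable {P : Measure Ω} [IsFiniteMeasure P] (hf : BoundedMeasurable m f)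
    (hm : m ≤ m0) : Integrable f P := by
  obtain ⟨h, C, hC⟩ := hf
  exact Integrable.of_bound (h.mono hm).aestronglyMeasurable C (Eventually.of_forall hC)

theorem integrable_mul {P : Measure Ω} (hf : BoundedMeasurable m f) (hm : m ≤ m0)
    (hf' : Integrable f' P) : Integrable (fun ω => f ω * f' ω) P := by
  obtain ⟨h, C, hC⟩ := hf
  exact hf'.bdd_mul (h.mono hm).aestronglyMeasurable (Eventually.of_forall hC)

theorem integral_mul_eq_of_condExp_eq {P : Measure Ω} [IsFiniteMeasure P] (hm : m ≤ m0)
    {X Y : Ω → ℝ} (hf : BoundedMeasurable m f) (hX : Integrable X P)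
    (hXY : P[X | m] =ᵐ[P] Y) : ∫ ω, f ω * X ω ∂P = ∫ ω, f ω * Y ω ∂P := by
  have h := condExp_mul_of_stronglyMeasurable_left hf.1 (hf.integrable_mul hm hX) hX
  calc ∫ ω, f ω * X ω ∂P = ∫ ω, (P[f * X | m]) ω ∂P := (integral_condExp hm).symm
    _ = _ := integral_congr_ae (by
      filter_upwards [h, hXY] with ω h1 h2
      rw [h1, Pi.mul_apply, h2])

theorem integral_mul_le_of_condExp_le {P : Measure Ω} [IsFiniteMeasure P] (hm : m ≤ m0)
    {X Y : Ω → ℝ} (hf : BoundedMeasurable m f) (hf0 : ∀ ω, 0 ≤ f ω) (hX : Integrable X P)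
    (hY : Integrable Y P) (hXY : P[X | m] ≤ᵐ[P] Y) :
    ∫ ω, f ω * X ω ∂P ≤ ∫ ω, f ω * Y ω ∂P := by
  rw [hf.integral_mul_eq_of_condExp_eq hm hX EventuallyEq.rfl]
  refine integral_mono_ae (hf.integrable_mul hm integrable_condExp)
    (hf.integrable_mul hm hY) ?_
  filter_upwards [hXY] with ω h
  exact mul_le_mul_of_nonneg_left h (hf0 ω)

end BoundedMeasurable

/-- Stochastic gradient descent `x (k + 1) = x k - A (k + 1) * X k` with a nonincreasing
coordinate-wise preconditioner `A` of order `1 / √k`: the update at step `k` uses the preconditioner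
`A (k + 1)`, which may depend on the stochastic gradient `X k`. -/
structure IsPreconditionedSGD {ι : Type*} [Fintype ι] {Ω : Type*} {m0 : MeasurableSpace Ω}
    (P : Measure Ω) (ℱ : Filtration ℕ m0) (g : EuclideanSpace ℝ ι → ℝ) (σ₀ σ₁ ε : ℝ)
    (x : ℕ → Ω → EuclideanSpace ℝ ι) (X A : ℕ → Ω → ι → ℝ) : Prop where
  x_meas : ∀ k, StronglyMeasurable[ℱ k] (x k)
  A_meas : ∀ k i, StronglyMeasurable[ℱ k] fun ω => A k ω i
  X_meas : ∀ k i, StronglyMeasurable[ℱ (k + 1)] fun ω => X k ω i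
  integrable_X_sq : ∀ k i, Integrable (fun ω => X k ω i ^ 2) P
  isPreconditionedStep : ∀ k ω,
    IsPreconditionedStep (A k ω) (A (k + 1) ω) (X k ω) (x k ω) (x (k + 1) ω)
  A_le : ∀ k ω i, A k ω i ≤ 1 / (ε * √(k + 1))
  abs_mul_le_one : ∀ k ω i, |A (k + 1) ω i * X k ω i| ≤ 1
  exists_norm_zero_le : ∃ B, ∀ ω, ‖x 0 ω‖ ≤ B
  unbiased : ∀ k i, P[fun ω => X k ω i | ℱ k] =ᵐ[P] fun ω => gradient g (x k ω) i
  second_moment_le : ∀ k i, P[fun ω => X k ω i ^ 2 | ℱ k] ≤ᵐ[P]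
    fun ω => σ₀ * gradient g (x k ω) i ^ 2 + σ₁

namespace IsPreconditionedSGD

variable {ι : Type*} [Fintype ι] {Ω : Type*} {m0 : MeasurableSpace Ω} {P : Measure Ω}
  {ℱ : Filtration ℕ m0} {g : EuclideanSpace ℝ ι → ℝ} {σ₀ σ₁ ε : ℝ}
  {x : ℕ → Ω → EuclideanSpace ℝ ι} {X A : ℕ → Ω → ι → ℝ}

theorem A_nonneg (h : IsPreconditionedSGD P ℱ g σ₀ σ₁ ε x X A) (k : ℕ) (ω : Ω) (i : ι) :
    0 ≤ A k ω i :=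
  ((h.isPreconditionedStep k ω).nonneg i).trans ((h.isPreconditionedStep k ω).le i)

theorem norm_step_le (h : IsPreconditionedSGD P ℱ g σ₀ σ₁ ε x X A) (k : ℕ) (ω : Ω) :
    ‖x (k + 1) ω - x k ω‖ ≤ √(Fintype.card ι) := by
  apply Real.le_sqrt_of_sq_le
  rw [(h.isPreconditionedStep k ω).norm_sub_sq_eq]
  refine (Finset.sum_le_card_nsmul _ _ 1 fun i _ => ?_).trans (by simp)
  rw [← sq_abs]
  exact pow_le_one₀ (abs_nonneg _) (h.abs_mul_le_one k ω i)

theorem exists_norm_le (h : IsPreconditionedSGD P ℱ g σ₀ σ₁ ε x X A) (k : ℕ) :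
    ∃ B, ∀ ω, ‖x k ω‖ ≤ B := by
  induction k with
  | zero => exact h.exists_norm_zero_le
  | succ k ih =>
    obtain ⟨B, hB⟩ := ih
    refine ⟨B + √(Fintype.card ι), fun ω => ?_⟩
    have := norm_add_le (x k ω) (x (k + 1) ω - x k ω)
    rw [add_sub_cancel] at this
    linarith [hB ω, h.norm_step_le k ω]

theorem boundedMeasurable_comp (h : IsPreconditionedSGD P ℱ g σ₀ σ₁ ε x X A) (k : ℕ)
    {φ : EuclideanSpace ℝ ι → ℝ} (hφ : Continuous φ) :
    BoundedMeasurable (ℱ k) fun ω => φ (x k ω) := by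
  obtain ⟨B, hB⟩ := h.exists_norm_le k
  obtain ⟨C, hC⟩ :=
    (isCompact_closedBall (0 : EuclideanSpace ℝ ι) B).exists_bound_of_continuousOn
    hφ.continuousOn
  exact ⟨hφ.comp_stronglyMeasurable (h.x_meas k), C, fun ω => hC _ (by simpa using hB ω)⟩

theorem boundedMeasurable_A (h : IsPreconditionedSGD P ℱ g σ₀ σ₁ ε x X A) (k : ℕ) (i : ι) :
    BoundedMeasurable (ℱ k) fun ω => A k ω i :=
  ⟨h.A_meas k i, _, fun ω => (abs_of_nonneg (h.A_nonneg k ω i)).trans_le (h.A_le k ω i)⟩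

theorem boundedMeasurable_gradient (h : IsPreconditionedSGD P ℱ g σ₀ σ₁ ε x X A)
    (hg : Continuous (gradient g)) (k : ℕ) (i : ι) :
    BoundedMeasurable (ℱ k) fun ω => gradient g (x k ω) i :=
  h.boundedMeasurable_comp k (φ := fun y => gradient g y i) (by fun_prop)

theorem boundedMeasurable_moment (h : IsPreconditionedSGD P ℱ g σ₀ σ₁ ε x X A)
    (hg : Continuous (gradient g)) (k : ℕ) (i : ι) :
    BoundedMeasurable (ℱ k) fun ω => σ₀ * gradient g (x k ω) i ^ 2 + σ₁ :=
  ((BoundedMeasurable.const σ₀).mul ((h.boundedMeasurable_gradient hg k i).pow 2)).add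
    (BoundedMeasurable.const σ₁)

theorem boundedMeasurable_lyapunov (h : IsPreconditionedSGD P ℱ g σ₀ σ₁ ε x X A)
    (hg : Continuous g) (hg' : Continuous (gradient g)) (k : ℕ) :
    BoundedMeasurable (ℱ k) fun ω => lyapunov g σ₀ σ₁ (A k ω) (x k ω) :=
  (h.boundedMeasurable_comp k hg).add (BoundedMeasurable.sum fun i =>
    (h.boundedMeasurable_A k i).mul (h.boundedMeasurable_moment hg' k i))

theorem memLp_X (h : IsPreconditionedSGD P ℱ g σ₀ σ₁ ε x X A) (k : ℕ) (i : ι) :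
    MemLp (fun ω => X k ω i) 2 P :=
  (memLp_two_iff_integrable_sq ((h.X_meas k i).mono (ℱ.le _)).aestronglyMeasurable).2
    (h.integrable_X_sq k i)

variable [IsProbabilityMeasure P]

theorem integrable_X (h : IsPreconditionedSGD P ℱ g σ₀ σ₁ ε x X A) (k : ℕ) (i : ι) :
    Integrable (fun ω => X k ω i) P :=
  (h.memLp_X k i).integrable one_le_two

theorem integral_mul_noise_eq_zero (h : IsPreconditionedSGD P ℱ g σ₀ σ₁ ε x X A)
    (hg : Continuous (gradient g)) {k : ℕ} (i : ι) {f : Ω → ℝ}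
    (hf : BoundedMeasurable (ℱ k) f) :
    ∫ ω, f ω * (gradient g (x k ω) i - X k ω i) ∂P = 0 := by
  simp only [mul_sub]
  rw [integral_sub ((hf.mul (h.boundedMeasurable_gradient hg k i)).integrable (ℱ.le k))
    (hf.integrable_mul (ℱ.le k) (h.integrable_X k i)),
    hf.integral_mul_eq_of_condExp_eq (ℱ.le k) (h.integrable_X k i) (h.unbiased k i), sub_self]

theorem integral_mul_sq_le (h : IsPreconditionedSGD P ℱ g σ₀ σ₁ ε x X A)
    (hg : Continuous (gradient g)) {k : ℕ} (i : ι) {f : Ω → ℝ}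
    (hf : BoundedMeasurable (ℱ k) f) (hf0 : ∀ ω, 0 ≤ f ω) :
    ∫ ω, f ω * X k ω i ^ 2 ∂P ≤ ∫ ω, f ω * (σ₀ * gradient g (x k ω) i ^ 2 + σ₁) ∂P :=
  hf.integral_mul_le_of_condExp_le (ℱ.le k) hf0 (h.integrable_X_sq k i)
    ((h.boundedMeasurable_moment hg k i).integrable (ℱ.le k)) (h.second_moment_le k i)

theorem integral_le_of_le (h : IsPreconditionedSGD P ℱ g σ₀ σ₁ ε x X A)
    (hg : Continuous (gradient g)) {k : ℕ} {Y u b : Ω → ℝ} {p r : ι → Ω → ℝ}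
    (hY : Integrable Y P) (hu : BoundedMeasurable (ℱ k) u)
    (hp : ∀ i, BoundedMeasurable (ℱ k) (p i)) (hr : ∀ i, BoundedMeasurable (ℱ k) (r i))
    (hr0 : ∀ i ω, 0 ≤ r i ω) (hb : Integrable b P)
    (hY_le : ∀ ω, Y ω ≤ u ω + ∑ i, (p i ω * (gradient g (x k ω) i - X k ω i)
      + r i ω * X k ω i ^ 2))
    (hle_b : ∀ ω, u ω + ∑ i, r i ω * (σ₀ * gradient g (x k ω) i ^ 2 + σ₁) ≤ b ω) :
    ∫ ω, Y ω ∂P ≤ ∫ ω, b ω ∂P := by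
  have hm := ℱ.le k
  have noise_int (i) : Integrable (fun ω => p i ω * (gradient g (x k ω) i - X k ω i)) P :=
    (hp i).integrable_mul hm
      (((h.boundedMeasurable_gradient hg k i).integrable hm).sub (h.integrable_X k i))
  have square_int (i) : Integrable (fun ω => r i ω * X k ω i ^ 2) P :=
    (hr i).integrable_mul hm (h.integrable_X_sq k i)
  have moment_int (i) : Integrable (fun ω => r i ω * (σ₀ * gradient g (x k ω) i ^ 2 + σ₁)) P :=
    ((hr i).mul (h.boundedMeasurable_moment hg k i)).integrable hm
  have summand_int (i) : Integrable (fun ω => p i ω * (gradient g (x k ω) i - X k ω i)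
      + r i ω * X k ω i ^ 2) P := (noise_int i).add (square_int i)
  have sum_int := integrable_finsetSum Finset.univ fun i _ => summand_int i
  have sum_moment_int := integrable_finsetSum Finset.univ fun i _ => moment_int i
  calc ∫ ω, Y ω ∂P ≤ ∫ ω, (u ω + ∑ i, (p i ω * (gradient g (x k ω) i - X k ω i)
      + r i ω * X k ω i ^ 2)) ∂P := integral_mono hY ((hu.integrable hm).add sum_int) hY_le
    _ = ∫ ω, u ω ∂P + ∑ i, (∫ ω, p i ω * (gradient g (x k ω) i - X k ω i) ∂P
        + ∫ ω, r i ω * X k ω i ^ 2 ∂P) := by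
      rw [integral_add (hu.integrable hm) sum_int,
        integral_finsetSum _ fun i _ => summand_int i]
      exact congrArg _ (Finset.sum_congr rfl fun i _ =>
        integral_add (noise_int i) (square_int i))
    _ ≤ ∫ ω, u ω ∂P + ∑ i, ∫ ω, r i ω * (σ₀ * gradient g (x k ω) i ^ 2 + σ₁) ∂P := by
      gcongr with i
      rw [h.integral_mul_noise_eq_zero hg i (hp i), zero_add]
      exact h.integral_mul_sq_le hg i (hr i) (hr0 i)
    _ = ∫ ω, (u ω + ∑ i, r i ω * (σ₀ * gradient g (x k ω) i ^ 2 + σ₁)) ∂P := by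
      rw [integral_add (hu.integrable hm) sum_moment_int,
        integral_finsetSum _ fun i _ => moment_int i]
    _ ≤ ∫ ω, b ω ∂P :=
      integral_mono ((hu.integrable hm).add sum_moment_int) hb hle_b

end IsPreconditionedSGD

/-! ### The squared excess of the Lyapunov function above a high level -/

section LyapunovBounds

variable {ι : Type*} [Fintype ι] {g : EuclideanSpace ℝ ι → ℝ} {L σ₀ σ₁ a : ℝ}
  {x x' : EuclideanSpace ℝ ι} {A A' X : ι → ℝ}

theorem le_lyapunov (hσ₀ : 0 ≤ σ₀) (hσ₁ : 0 ≤ σ₁) (hA : ∀ i, 0 ≤ A i) :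
    g x ≤ lyapunov g σ₀ σ₁ A x :=
  le_add_of_nonneg_right (Finset.sum_nonneg fun i _ => mul_nonneg (hA i) (by positivity))

theorem IsSmoothObjective.lyapunov_le (hg : IsSmoothObjective g L) (hσ₀ : 0 ≤ σ₀) (hσ₁ : 0 ≤ σ₁)
    (ha : 0 ≤ a) (hA : ∀ i, A i ≤ a) (ha₀ : 4 * L * σ₀ * a ≤ 1 / 5)
    (ha₁ : Fintype.card ι * σ₁ * a ≤ 1) :
    lyapunov g σ₀ σ₁ A x ≤ 6 / 5 * g x + 1 := by
  have hgrad := mul_le_mul_of_nonneg_left (hg.norm_gradient_sq_le x)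
    (show 0 ≤ a * σ₀ by positivity)
  have hsmall := mul_le_mul_of_nonneg_right ha₀ (hg.nonneg x)
  have correction : ∑ i, A i * (σ₀ * gradient g x i ^ 2 + σ₁) ≤
      a * (σ₀ * ‖gradient g x‖ ^ 2 + Fintype.card ι * σ₁) := by
    calc ∑ i, A i * (σ₀ * gradient g x i ^ 2 + σ₁)
        ≤ ∑ i, a * (σ₀ * gradient g x i ^ 2 + σ₁) :=
          Finset.sum_le_sum fun i _ => mul_le_mul_of_nonneg_right (hA i) (by positivity)
      _ = a * (σ₀ * ‖gradient g x‖ ^ 2 + Fintype.card ι * σ₁) := by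
          rw [← Finset.mul_sum, Finset.sum_add_distrib, ← Finset.mul_sum,
            ← EuclideanSpace.real_norm_sq_eq, Finset.sum_const, Finset.card_univ, nsmul_eq_mul]
  unfold lyapunov
  linarith

theorem IsSmoothObjective.le_mul_add_mul_norm_sub_sq (hg : IsSmoothObjective g L)
    (x x' : EuclideanSpace ℝ ι) : g x' ≤ 11 / 10 * g x + 11 * L * ‖x' - x‖ ^ 2 := by
  have hL := hg.pos
  have taylor := (abs_le.1 (hg.abs_sub_sub_inner_le x x')).2
  have cauchy_schwarz := real_inner_le_norm (gradient g x) (x' - x)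
  have amgm : ‖gradient g x‖ * ‖x' - x‖ ≤
      ‖gradient g x‖ ^ 2 / (40 * L) + 10 * L * ‖x' - x‖ ^ 2 := by
    have square : ‖gradient g x‖ ^ 2 / (40 * L) + 10 * L * ‖x' - x‖ ^ 2
        - ‖gradient g x‖ * ‖x' - x‖ = (‖gradient g x‖ - 20 * L * ‖x' - x‖) ^ 2 / (40 * L) := by
      field_simp; ring
    have : 0 ≤ (‖gradient g x‖ - 20 * L * ‖x' - x‖) ^ 2 / (40 * L) := by positivity
    linarith
  have hgrad : ‖gradient g x‖ ^ 2 / (40 * L) ≤ g x / 10 := by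
    rw [div_le_iff₀ (by positivity)]
    linarith [hg.norm_gradient_sq_le x]
  linarith

theorem IsPreconditionedStep.lyapunov_le_of_lt_half {K : ℝ} (h : IsPreconditionedStep A A' X x x')
    (hg : IsSmoothObjective g L) (hσ₀ : 0 ≤ σ₀) (hσ₁ : 0 ≤ σ₁)
    (ha : 0 ≤ a) (hA : ∀ i, A i ≤ a) (ha₀ : 4 * L * σ₀ * a ≤ 1 / 5)
    (ha₁ : Fintype.card ι * σ₁ * a ≤ 1) (hD : ‖x' - x‖ ≤ √(Fintype.card ι))
    (hK : 40 * L * Fintype.card ι + 3 ≤ K) (hx : lyapunov g σ₀ σ₁ A x < K / 2) :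
    lyapunov g σ₀ σ₁ A' x' ≤ K := by
  have hL := hg.pos
  have upper := hg.lyapunov_le (x := x') hσ₀ hσ₁ ha (fun i => (h.le i).trans (hA i)) ha₀ ha₁
  have lower := le_lyapunov (g := g) (x := x) hσ₀ hσ₁ fun i => (h.nonneg i).trans (h.le i)
  have hstep : L * ‖x' - x‖ ^ 2 ≤ L * Fintype.card ι := by
    gcongr
    exact (Real.le_sqrt (norm_nonneg _) (Nat.cast_nonneg _)).1 hD
  have hcard : 0 ≤ L * Fintype.card ι := by positivity
  linarith [hg.le_mul_add_mul_norm_sub_sq x x']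

end LyapunovBounds

/-- The part of the upper bound for the next squared excess `(W' - K)⁺ ^ 2` of the Lyapunov function
above the level `K` that does not involve the stochastic gradient; here `W` is the present value of
the Lyapunov function and `v` the gradient. Second order terms are only present for `K / 2 ≤ W`,
since otherwise `W' ≤ K`. -/
noncomputable def excessDrift {ι : Type*} [Fintype ι] (σ₀ σ₁ K W : ℝ) (A : ι → ℝ)
    (v : EuclideanSpace ℝ ι) : ℝ :=
  (W - K)⁺ ^ 2 + 2 * (W - K)⁺ * ∑ i, (-(3 / 4) * (A i * v i ^ 2))
    + (Set.Ici (K / 2)).indicator 1 W * (2 * (∑ i, A i * (σ₀ * v i ^ 2 + σ₁)) ^ 2)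

/-- The coefficient of `X i ^ 2`, where `X` is the stochastic gradient, in the same upper bound. -/
noncomputable def excessMomentCoeff {ι : Type*} [Fintype ι] (σ₀ σ₁ c₁ c₂ c₃ K W : ℝ) (A : ι → ℝ)
    (v : EuclideanSpace ℝ ι) (i : ι) : ℝ :=
  2 * (W - K)⁺ * (A i * v i ^ 2 / 4 * (σ₀ * v i ^ 2 + σ₁)⁻¹ + c₃ * A i ^ 2)
    + (Set.Ici (K / 2)).indicator 1 W * (2 * (c₁ * ‖v‖ + c₂) ^ 2 * A i ^ 2)

theorem sq_posPart_le (w w' : ℝ) :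
    w'⁺ ^ 2 ≤ w⁺ ^ 2 + 2 * w⁺ * (w' - w) + (w' - w) ^ 2 := by
  simp only [posPart_def]
  rcases le_total w' 0 with h' | h' <;> rcases le_total w 0 with h | h <;>
    simp only [sup_of_le_left, sup_of_le_right, h', h] <;> nlinarith [sq_nonneg w']

section ExcessStep

variable {ι : Type*} [Fintype ι] {g : EuclideanSpace ℝ ι → ℝ} {L σ₀ σ₁ α K : ℝ}
  {x x' : EuclideanSpace ℝ ι} {A A' X : ι → ℝ}

theorem IsPreconditionedStep.sq_posPart_lyapunov_le_of_le (h : IsPreconditionedStep A A' X x x')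
    (hg : IsSmoothObjective g L) (hσ₀ : 0 ≤ σ₀) (hσ₁ : 0 < σ₁) (hα : 0 ≤ α) (hAα : ∀ i, A i ≤ α)
    {D : ℝ} (hD : ‖x' - x‖ ≤ D) (hx : K / 2 ≤ lyapunov g σ₀ σ₁ A x) :
    (lyapunov g σ₀ σ₁ A' x' - K)⁺ ^ 2 ≤
      excessDrift σ₀ σ₁ K (lyapunov g σ₀ σ₁ A x) A (gradient g x)
      + ∑ i, (2 * (lyapunov g σ₀ σ₁ A x - K)⁺ * (A i * gradient g x i) * (gradient g x i - X i)
        + excessMomentCoeff σ₀ σ₁ (1 + 2 * L * σ₀ * α) ((L + L ^ 2 * σ₀ * α) * D)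
            (L + (4 * σ₀ ^ 2 + σ₀) * α * L ^ 2) K (lyapunov g σ₀ σ₁ A x) A (gradient g x) i
          * X i ^ 2) := by
  have first_order := h.lyapunov_le hg hσ₀ hσ₁ hα hAα
  have second_order := h.sq_lyapunov_sub_le hg hσ₀ hσ₁.le hα hAα hD
  have expansion := sq_posPart_le (lyapunov g σ₀ σ₁ A x - K) (lyapunov g σ₀ σ₁ A' x' - K)
  rw [sub_sub_sub_cancel_right] at expansion
  have weighted := mul_le_mul_of_nonneg_left (sub_le_iff_le_add'.2 first_order)
    (mul_nonneg zero_le_two (posPart_nonneg (lyapunov g σ₀ σ₁ A x - K)))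
  simp only [excessDrift, excessMomentCoeff, Set.indicator_of_mem (Set.mem_Ici.2 hx), Pi.one_apply]
  set W := lyapunov g σ₀ σ₁ A x
  set c₃ := L + (4 * σ₀ ^ 2 + σ₀) * α * L ^ 2
  set M := (1 + 2 * L * σ₀ * α) * ‖gradient g x‖ + (L + L ^ 2 * σ₀ * α) * D
  have regroup : ∑ i, (2 * (W - K)⁺ * (A i * gradient g x i) * (gradient g x i - X i)
        + (2 * (W - K)⁺ * (A i * gradient g x i ^ 2 / 4 * (σ₀ * gradient g x i ^ 2 + σ₁)⁻¹
            + c₃ * A i ^ 2) + 1 * (2 * M ^ 2 * A i ^ 2)) * X i ^ 2) =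
      2 * (W - K)⁺ * ∑ i, (-(1 / 2) * (A i * gradient g x i ^ 2)
        + A i * gradient g x i * (gradient g x i - X i)
        + A i * gradient g x i ^ 2 / 4 * (X i ^ 2 / (σ₀ * gradient g x i ^ 2 + σ₁) - 1)
        + c₃ * (A i ^ 2 * X i ^ 2))
      + 2 * M ^ 2 * ∑ i, A i ^ 2 * X i ^ 2
      - 2 * (W - K)⁺ * ∑ i, (-(3 / 4) * (A i * gradient g x i ^ 2)) := by
    simp only [Finset.mul_sum, ← Finset.sum_add_distrib, ← Finset.sum_sub_distrib]
    exact Finset.sum_congr rfl fun i _ => by ring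
  linarith

theorem IsPreconditionedStep.sq_posPart_lyapunov_le (h : IsPreconditionedStep A A' X x x')
    (hg : IsSmoothObjective g L) (hσ₀ : 0 ≤ σ₀) (hσ₁ : 0 < σ₁) (hα : 0 ≤ α) (hAα : ∀ i, A i ≤ α)
    {a : ℝ} (ha : 0 ≤ a) (hA : ∀ i, A i ≤ a) (ha₀ : 4 * L * σ₀ * a ≤ 1 / 5)
    (ha₁ : Fintype.card ι * σ₁ * a ≤ 1) (hD : ‖x' - x‖ ≤ √(Fintype.card ι))
    (hK : 40 * L * Fintype.card ι + 3 ≤ K) :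
    (lyapunov g σ₀ σ₁ A' x' - K)⁺ ^ 2 ≤
      excessDrift σ₀ σ₁ K (lyapunov g σ₀ σ₁ A x) A (gradient g x)
      + ∑ i, (2 * (lyapunov g σ₀ σ₁ A x - K)⁺ * (A i * gradient g x i) * (gradient g x i - X i)
        + excessMomentCoeff σ₀ σ₁ (1 + 2 * L * σ₀ * α) ((L + L ^ 2 * σ₀ * α) * √(Fintype.card ι))
            (L + (4 * σ₀ ^ 2 + σ₀) * α * L ^ 2) K (lyapunov g σ₀ σ₁ A x) A (gradient g x) i
          * X i ^ 2) := by
  rcases lt_or_ge (lyapunov g σ₀ σ₁ A x) (K / 2) with hx | hx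
  · have hL := hg.pos
    have hcard : 0 ≤ L * Fintype.card ι := by positivity
    have hx' := h.lyapunov_le_of_lt_half hg hσ₀ hσ₁.le ha hA ha₀ ha₁ hD hK hx
    simp only [excessDrift, excessMomentCoeff, Set.indicator_of_notMem (mt Set.mem_Ici.1 hx.not_ge),
      posPart_eq_zero.2 (sub_nonpos.2 hx'),
      posPart_eq_zero.2 (show lyapunov g σ₀ σ₁ A x - K ≤ 0 by linarith)]
    simp
  · exact h.sq_posPart_lyapunov_le_of_le hg hσ₀ hσ₁ hα hAα hD hx

end ExcessStep

section Drift

variable {ι : Type*} [Fintype ι] {σ₀ σ₁ a δ : ℝ} {A : ι → ℝ} {v : EuclideanSpace ℝ ι}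

theorem sum_mul_moment_le (hσ₁ : 0 ≤ σ₁) (hδ : 0 < δ) (hA : ∀ i, 0 ≤ A i)
    (hv : ∀ i, δ ≤ |v i|) :
    ∑ i, A i * (σ₀ * v i ^ 2 + σ₁) ≤ (σ₀ + σ₁ / δ ^ 2) * ∑ i, A i * v i ^ 2 := by
  rw [Finset.mul_sum]
  refine Finset.sum_le_sum fun i _ => ?_
  have hδv : σ₁ ≤ σ₁ / δ ^ 2 * v i ^ 2 := by
    rw [← sq_abs (v i), div_mul_eq_mul_div, le_div_iff₀ (by positivity)]
    gcongr
    exact hv i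
  linarith [mul_le_mul_of_nonneg_left hδv (hA i)]

theorem sum_mul_sq_le (hA : ∀ i, A i ≤ a) (v : EuclideanSpace ℝ ι) :
    ∑ i, A i * v i ^ 2 ≤ a * ‖v‖ ^ 2 := by
  rw [EuclideanSpace.real_norm_sq_eq, Finset.mul_sum]
  gcongr with i
  exact hA i

theorem sum_sq_mul_le {w : ι → ℝ} (hA : ∀ i, 0 ≤ A i) (hAa : ∀ i, A i ≤ a) (hw : ∀ i, 0 ≤ w i) :
    ∑ i, A i ^ 2 * w i ≤ a * ∑ i, A i * w i := by
  rw [Finset.mul_sum]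
  refine Finset.sum_le_sum fun i _ => ?_
  rw [sq, mul_assoc]
  exact mul_le_mul_of_nonneg_right (hAa i) (mul_nonneg (hA i) (hw i))

theorem mul_add_sq_le_of_le {c₁ c₂ t : ℝ} (hc₁ : 0 ≤ c₁) (hc₂ : 0 ≤ c₂) (hδ : 0 < δ)
    (ht : δ ≤ t) : (c₁ * t + c₂) ^ 2 ≤ (2 * c₁ ^ 2 + 2 * (c₂ / δ) ^ 2) * t ^ 2 := by
  have ht0 := hδ.le.trans ht
  have hle : c₂ ≤ c₂ / δ * t := by
    rw [div_mul_eq_mul_div, le_div_iff₀ hδ]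
    gcongr
  calc (c₁ * t + c₂) ^ 2 ≤ (c₁ * t + c₂ / δ * t) ^ 2 := by gcongr
    _ ≤ (2 * c₁ ^ 2 + 2 * (c₂ / δ) ^ 2) * t ^ 2 := by
      linarith [sq_nonneg (c₁ * t - c₂ / δ * t)]

theorem moment_coordinate_le {w α c h : ℝ} (hσ₀ : 0 ≤ σ₀) (hσ₁ : 0 < σ₁) (hc : 0 ≤ c)
    (hw : 0 ≤ w) (hwα : w ≤ α) (hα : c * σ₀ * α ≤ 1 / 4) :
    (w * h ^ 2 / 4 * (σ₀ * h ^ 2 + σ₁)⁻¹ + c * w ^ 2) * (σ₀ * h ^ 2 + σ₁) ≤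
      1 / 2 * (w * h ^ 2) + c * σ₁ * α ^ 2 := by
  have : 0 < σ₀ * h ^ 2 + σ₁ := by positivity
  have expand : (w * h ^ 2 / 4 * (σ₀ * h ^ 2 + σ₁)⁻¹ + c * w ^ 2) * (σ₀ * h ^ 2 + σ₁) =
      w * h ^ 2 / 4 + c * σ₀ * w * (w * h ^ 2) + c * σ₁ * w ^ 2 := by
    field_simp
    ring
  have absorb : c * σ₀ * w * (w * h ^ 2) ≤ 1 / 4 * (w * h ^ 2) := by
    gcongr
    exact le_trans (by gcongr) hα
  have hsq : c * σ₁ * w ^ 2 ≤ c * σ₁ * α ^ 2 := by gcongr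
  linarith

theorem excessDrift_add_sum_eq_of_le {c₁ c₂ c₃ K W : ℝ} (hσ₀ : 0 ≤ σ₀) (hσ₁ : 0 < σ₁)
    (hW : K / 2 ≤ W) :
    excessDrift σ₀ σ₁ K W A v
        + ∑ i, excessMomentCoeff σ₀ σ₁ c₁ c₂ c₃ K W A v i * (σ₀ * v i ^ 2 + σ₁) =
      (W - K)⁺ ^ 2 - (W - K)⁺ * ∑ i, A i * v i ^ 2
        + 2 * (∑ i, A i * (σ₀ * v i ^ 2 + σ₁)) ^ 2
        + (2 * (W - K)⁺ * c₃ + 2 * (c₁ * ‖v‖ + c₂) ^ 2)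
          * ∑ i, A i ^ 2 * (σ₀ * v i ^ 2 + σ₁) := by
  have moment_pos (i) : 0 < σ₀ * v i ^ 2 + σ₁ := by positivity
  simp only [excessDrift, excessMomentCoeff, Set.indicator_of_mem (Set.mem_Ici.2 hW), Pi.one_apply,
    one_mul]
  have regroup : ∑ i, (2 * (W - K)⁺ * (A i * v i ^ 2 / 4 * (σ₀ * v i ^ 2 + σ₁)⁻¹ + c₃ * A i ^ 2)
        + 2 * (c₁ * ‖v‖ + c₂) ^ 2 * A i ^ 2) * (σ₀ * v i ^ 2 + σ₁) =
      (W - K)⁺ / 2 * ∑ i, A i * v i ^ 2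
        + (2 * (W - K)⁺ * c₃ + 2 * (c₁ * ‖v‖ + c₂) ^ 2)
          * ∑ i, A i ^ 2 * (σ₀ * v i ^ 2 + σ₁) := by
    simp only [Finset.mul_sum, ← Finset.sum_add_distrib]
    refine Finset.sum_congr rfl fun i _ => ?_
    field_simp [(moment_pos i).ne']
    ring
  rw [regroup, ← Finset.mul_sum]
  ring

/-- The dissipation `(W - K)⁺ * ∑ i, A i * v i ^ 2` absorbs the second order terms, up to the
part of `W` below the level `K`, as soon as the weights are small. -/
theorem excessDrift_add_sum_le_of_le [Nonempty ι] {c₁ c₂ c₃ K L W : ℝ} (hσ₀ : 0 ≤ σ₀)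
    (hσ₁ : 0 < σ₁) (hδ : 0 < δ) (hc₁ : 0 ≤ c₁) (hc₂ : 0 ≤ c₂) (hc₃ : 0 ≤ c₃) (hL : 0 ≤ L)
    (hA : ∀ i, 0 ≤ A i) (ha : 0 ≤ a) (hAa : ∀ i, A i ≤ a)
    (ha₁ : c₃ * (σ₀ + σ₁ / δ ^ 2) * a ≤ 1 / 4)
    (ha₂ : 8 * L * (σ₀ + σ₁ / δ ^ 2) * (2 * c₁ ^ 2 + 2 * (c₂ / δ) ^ 2 + (σ₀ + σ₁ / δ ^ 2)) * a
      ≤ 1 / 2)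
    (hW : K / 2 ≤ W) (hv : ∀ i, δ ≤ |v i|) (hvW : ‖v‖ ^ 2 ≤ 4 * L * W) :
    excessDrift σ₀ σ₁ K W A v
        + ∑ i, excessMomentCoeff σ₀ σ₁ c₁ c₂ c₃ K W A v i * (σ₀ * v i ^ 2 + σ₁) ≤
      (W - K)⁺ ^ 2
        + 8 * L * (σ₀ + σ₁ / δ ^ 2) * (2 * c₁ ^ 2 + 2 * (c₂ / δ) ^ 2 + (σ₀ + σ₁ / δ ^ 2)) * K * a
          * ∑ i, A i * v i ^ 2 := by
  have sum_moment := sum_mul_moment_le (σ₀ := σ₀) hσ₁.le hδ hA hv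
  have sum_sq_moment := sum_sq_mul_le (w := fun i => σ₀ * v i ^ 2 + σ₁) hA hAa
    fun i => by positivity
  have sum_nonneg : 0 ≤ ∑ i, A i * (σ₀ * v i ^ 2 + σ₁) :=
    Finset.sum_nonneg fun i _ => mul_nonneg (hA i) (by positivity)
  have energy_nonneg : 0 ≤ ∑ i, A i * v i ^ 2 :=
    Finset.sum_nonneg fun i _ => mul_nonneg (hA i) (sq_nonneg _)
  have energy_le : ∑ i, A i * v i ^ 2 ≤ a * (4 * L * W) :=
    (sum_mul_sq_le hAa v).trans (by gcongr)
  have le_norm : δ ≤ ‖v‖ := (hv (Classical.arbitrary ι)).trans (PiLp.norm_apply_le v _)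
  have step_sq := (mul_add_sq_le_of_le hc₁ hc₂ hδ le_norm).trans
    (mul_le_mul_of_nonneg_left hvW (by positivity))
  rw [excessDrift_add_sum_eq_of_le hσ₀ hσ₁ hW]
  set c₄ := σ₀ + σ₁ / δ ^ 2
  set c₅ := 2 * c₁ ^ 2 + 2 * (c₂ / δ) ^ 2
  set p := (W - K)⁺
  set Q := ∑ i, A i * v i ^ 2
  have hp : 0 ≤ p := posPart_nonneg _
  have : 0 ≤ c₄ := by positivity
  have second_order : (2 * p * c₃ + 2 * (c₁ * ‖v‖ + c₂) ^ 2)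
      * ∑ i, A i ^ 2 * (σ₀ * v i ^ 2 + σ₁) ≤
      (2 * p * c₃ + 2 * (c₅ * (4 * L * W))) * (a * (c₄ * Q)) := by
    have : 0 ≤ c₅ * (4 * L * W) := mul_nonneg (by positivity) ((sq_nonneg _).trans hvW)
    gcongr
    exact sum_sq_moment.trans (by gcongr)
  have sq_correction : (∑ i, A i * (σ₀ * v i ^ 2 + σ₁)) ^ 2 ≤ c₄ ^ 2 * Q * (a * (4 * L * W)) := by
    calc _ ≤ (c₄ * Q) ^ 2 := by gcongr
      _ = c₄ ^ 2 * Q * Q := by ring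
      _ ≤ _ := by gcongr
  have absorb₁ := mul_le_mul_of_nonneg_right ha₁ (mul_nonneg hp energy_nonneg)
  have absorb₂ := mul_le_mul_of_nonneg_right ha₂ (mul_nonneg hp energy_nonneg)
  have low_part := mul_le_mul_of_nonneg_left (sub_le_iff_le_add.1 (le_posPart (W - K)))
    (show 0 ≤ 8 * L * c₄ * (c₅ + c₄) * a * Q by positivity)
  linarith

theorem excessMomentCoeff_nonneg {c₁ c₂ c₃ K W : ℝ} (hσ₀ : 0 ≤ σ₀) (hσ₁ : 0 ≤ σ₁) (hc₃ : 0 ≤ c₃)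
    {i : ι} (hA : 0 ≤ A i) : 0 ≤ excessMomentCoeff σ₀ σ₁ c₁ c₂ c₃ K W A v i := by
  have : 0 ≤ (W - K)⁺ := posPart_nonneg _
  have : 0 ≤ (Set.Ici (K / 2)).indicator (1 : ℝ → ℝ) W :=
    Set.indicator_nonneg (fun _ _ => zero_le_one) W
  unfold excessMomentCoeff
  positivity

theorem excessDrift_add_sum_eq_of_lt {c₁ c₂ c₃ K W : ℝ} (hK : 0 ≤ K) (hW : W < K / 2) :
    excessDrift σ₀ σ₁ K W A v
        + ∑ i, excessMomentCoeff σ₀ σ₁ c₁ c₂ c₃ K W A v i * (σ₀ * v i ^ 2 + σ₁) = 0 := by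
  simp [excessDrift, excessMomentCoeff, hW, posPart_eq_zero.2 (show W - K ≤ 0 by linarith)]

theorem IsSmoothObjective.excessDrift_add_sum_le [Nonempty ι] {g : EuclideanSpace ℝ ι → ℝ}
    {L c₁ c₂ c₃ K₀ K : ℝ} {x : EuclideanSpace ℝ ι} (hg : IsSmoothObjective g L) (hσ₀ : 0 ≤ σ₀)
    (hσ₁ : 0 < σ₁) (hδ : 0 < δ) (hc₁ : 0 ≤ c₁) (hc₂ : 0 ≤ c₂) (hc₃ : 0 ≤ c₃) (hA : ∀ i, 0 ≤ A i)
    (ha : 0 ≤ a) (hAa : ∀ i, A i ≤ a) (ha₀ : 4 * L * σ₀ * a ≤ 1 / 5)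
    (ha₁ : Fintype.card ι * σ₁ * a ≤ 1) (ha₂ : c₃ * (σ₀ + σ₁ / δ ^ 2) * a ≤ 1 / 4)
    (ha₃ : 8 * L * (σ₀ + σ₁ / δ ^ 2) * (2 * c₁ ^ 2 + 2 * (c₂ / δ) ^ 2 + (σ₀ + σ₁ / δ ^ 2)) * a
      ≤ 1 / 2)
    (hK₀ : 0 ≤ K₀) (hK : 3 + 12 / 5 * K₀ ≤ K)
    (hgrad : ∀ y, K₀ ≤ g y → ∀ i, δ ≤ |gradient g y i|) :
    excessDrift σ₀ σ₁ K (lyapunov g σ₀ σ₁ A x) A (gradient g x)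
        + ∑ i, excessMomentCoeff σ₀ σ₁ c₁ c₂ c₃ K (lyapunov g σ₀ σ₁ A x) A (gradient g x) i
          * (σ₀ * gradient g x i ^ 2 + σ₁) ≤
      (lyapunov g σ₀ σ₁ A x - K)⁺ ^ 2
        + 8 * L * (σ₀ + σ₁ / δ ^ 2) * (2 * c₁ ^ 2 + 2 * (c₂ / δ) ^ 2 + (σ₀ + σ₁ / δ ^ 2)) * K * a
          * ∑ i, A i * gradient g x i ^ 2 := by
  have hL := hg.pos
  rcases lt_or_ge (lyapunov g σ₀ σ₁ A x) (K / 2) with hx | hx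
  · rw [excessDrift_add_sum_eq_of_lt (by linarith) hx]
    have : 0 ≤ K := by linarith
    have : 0 ≤ ∑ i, A i * gradient g x i ^ 2 :=
      Finset.sum_nonneg fun i _ => mul_nonneg (hA i) (sq_nonneg _)
    positivity
  · have upper := hg.lyapunov_le (x := x) hσ₀ hσ₁.le ha hAa ha₀ ha₁
    refine excessDrift_add_sum_le_of_le hσ₀ hσ₁ hδ hc₁ hc₂ hc₃ hL.le hA ha hAa ha₂ ha₃ hx
      (hgrad x (by linarith)) ((hg.norm_gradient_sq_le x).trans ?_)
    gcongr
    exact le_lyapunov hσ₀ hσ₁.le hA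

end Drift

theorem IsSmoothObjective.norm_gradient_pow_four_le {E : Type*} [NormedAddCommGroup E]
    [InnerProductSpace ℝ E] [CompleteSpace E] {g : E → ℝ} {L K W : ℝ} {x : E}
    (hg : IsSmoothObjective g L) (hx : g x ≤ W) :
    ‖gradient g x‖ ^ 4 ≤ 32 * L ^ 2 * ((W - K)⁺ ^ 2 + K ^ 2) := by
  have hL := hg.pos
  have g_le : g x ≤ (W - K)⁺ + K := hx.trans (sub_le_iff_le_add.1 (le_posPart _))
  calc ‖gradient g x‖ ^ 4 = (‖gradient g x‖ ^ 2) ^ 2 := by ring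
    _ ≤ (4 * L * ((W - K)⁺ + K)) ^ 2 := by
      gcongr
      exact (hg.norm_gradient_sq_le x).trans (by gcongr)
    _ = 16 * L ^ 2 * ((W - K)⁺ + K) ^ 2 := by ring
    _ ≤ 16 * L ^ 2 * (2 * ((W - K)⁺ ^ 2 + K ^ 2)) := by
      gcongr
      exact add_sq_le
    _ = 32 * L ^ 2 * ((W - K)⁺ ^ 2 + K ^ 2) := by ring

/-! ### Moment bounds for preconditioned stochastic gradient descent -/

theorem exists_eventually_le_of_eventually_le_add {f q : ℕ → ℝ} (hq0 : ∀ k, 0 ≤ q k)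
    (hq : Summable q) (h : ∀ᶠ k in atTop, f (k + 1) ≤ f k + q k) :
    ∃ C, ∀ᶠ k in atTop, f k ≤ C := by
  obtain ⟨N, hN⟩ := eventually_atTop.1 h
  refine ⟨f N + ∑' k, q k, eventually_atTop.2 ⟨N, fun k hk => ?_⟩⟩
  have hsum := add_sum_Ico_le_of_forall_le_sub_add (b := fun _ => 0) hk fun j hj _ => by
    simpa only [sub_zero] using hN j hj
  rw [Finset.sum_const_zero, add_zero] at hsum
  exact hsum.trans (by gcongr; exact hq.sum_le_tsum _ fun j _ => hq0 j)

theorem tendsto_one_div_mul_sqrt_succ (ε : ℝ) :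
    Tendsto (fun k : ℕ => 1 / (ε * √(k + 1))) atTop (nhds 0) := by
  have h : Tendsto (fun k : ℕ => √((k : ℝ) + 1)) atTop atTop :=
    Real.tendsto_sqrt_atTop.comp (tendsto_atTop_add_const_right _ _ tendsto_natCast_atTop_atTop)
  simpa [mul_comm] using h.inv_tendsto_atTop.const_mul ε⁻¹

theorem eventually_mul_one_div_mul_sqrt_succ_le (ε c : ℝ) {b : ℝ} (hb : 0 < b) :
    ∀ᶠ k : ℕ in atTop, c * (1 / (ε * √(k + 1))) ≤ b :=
  ((tendsto_one_div_mul_sqrt_succ ε).const_mul c).eventually_le_const (by rwa [mul_zero])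

theorem summable_one_div_sqrt_succ_pow_three :
    Summable fun k : ℕ => (1 / √((k : ℝ) + 1)) ^ 3 := by
  have h := (summable_nat_add_iff 1).2
    (Real.summable_one_div_nat_rpow.2 (show (1 : ℝ) < 3 / 2 by norm_num))
  refine h.congr fun k => ?_
  rw [one_div_pow, Real.sqrt_eq_rpow, ← Real.rpow_natCast, ← Real.rpow_mul (by positivity)]
  norm_num

theorem one_div_sqrt_succ_antitone : Antitone fun k : ℕ => 1 / √((k : ℝ) + 1) := by
  intro j k hjk
  dsimp only
  gcongr

theorem exists_forall_le_imp_of_cobounded {E : Type*} [PseudoMetricSpace E] [ProperSpace E]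
    {g : E → ℝ} (hg : Continuous g) {p : E → Prop} (hp : ∀ᶠ y in Bornology.cobounded E, p y) :
    ∃ K, 0 ≤ K ∧ ∀ y, K ≤ g y → p y := by
  have hb : Bornology.IsBounded {y | p y}ᶜ :=
    Bornology.isBounded_def.2 (by rw [compl_compl]; exact hp)
  obtain ⟨C, hC⟩ := hb.isCompact_closure.exists_bound_of_continuousOn hg.continuousOn
  refine ⟨|C| + 1, by positivity, fun y hy => ?_⟩
  by_contra hcon
  have := (le_abs_self _).trans (hC y (subset_closure hcon))
  linarith [le_abs_self C]

namespace IsPreconditionedSGD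

variable {ι : Type*} [Fintype ι] {Ω : Type*} {m0 : MeasurableSpace Ω} {P : Measure Ω}
  {ℱ : Filtration ℕ m0} {g : EuclideanSpace ℝ ι → ℝ} {L σ₀ σ₁ ε : ℝ}
  {x : ℕ → Ω → EuclideanSpace ℝ ι} {X A : ℕ → Ω → ι → ℝ}

theorem A_le_inv (h : IsPreconditionedSGD P ℱ g σ₀ σ₁ ε x X A) (hε : 0 < ε) (k : ℕ) (ω : Ω)
    (i : ι) : A k ω i ≤ 1 / ε := by
  refine (h.A_le k ω i).trans (one_div_le_one_div_of_le hε ?_)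
  exact le_mul_of_one_le_right hε.le (Real.one_le_sqrt.2 (by linarith [k.cast_nonneg (α := ℝ)]))

theorem energy_nonneg (h : IsPreconditionedSGD P ℱ g σ₀ σ₁ ε x X A) (k : ℕ) (ω : Ω) :
    0 ≤ ∑ i, A k ω i * gradient g (x k ω) i ^ 2 :=
  Finset.sum_nonneg fun i _ => mul_nonneg (h.A_nonneg k ω i) (sq_nonneg _)

theorem boundedMeasurable_energy (h : IsPreconditionedSGD P ℱ g σ₀ σ₁ ε x X A)
    (hg : Continuous (gradient g)) (k : ℕ) :
    BoundedMeasurable (ℱ k) fun ω => ∑ i, A k ω i * gradient g (x k ω) i ^ 2 :=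
  BoundedMeasurable.sum fun i =>
    (h.boundedMeasurable_A k i).mul ((h.boundedMeasurable_gradient hg k i).pow 2)

theorem boundedMeasurable_momentCoeff (h : IsPreconditionedSGD P ℱ g σ₀ σ₁ ε x X A)
    (hg : Continuous (gradient g)) (hσ₀ : 0 ≤ σ₀) (hσ₁ : 0 < σ₁) (c : ℝ) (k : ℕ) (i : ι) :
    BoundedMeasurable (ℱ k) fun ω => A k ω i * gradient g (x k ω) i ^ 2 / 4
      * (σ₀ * gradient g (x k ω) i ^ 2 + σ₁)⁻¹ + c * A k ω i ^ 2 := by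
  have hA := h.boundedMeasurable_A k i
  have moment_inv := (h.boundedMeasurable_moment hg k i).inv hσ₁ fun _ =>
    le_add_of_nonneg_left (by positivity)
  simpa only [div_eq_mul_inv] using
    (((hA.mul ((h.boundedMeasurable_gradient hg k i).pow 2)).mul (.const _)).mul moment_inv).add
      ((BoundedMeasurable.const c).mul (hA.pow 2))

theorem boundedMeasurable_excess (h : IsPreconditionedSGD P ℱ g σ₀ σ₁ ε x X A)
    (hg : IsSmoothObjective g L) (K : ℝ) (k : ℕ) :
    BoundedMeasurable (ℱ k) fun ω => (lyapunov g σ₀ σ₁ (A k ω) (x k ω) - K)⁺ :=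
  ((h.boundedMeasurable_lyapunov hg.differentiable.continuous hg.continuous_gradient k).sub
    (.const K)).max (.const 0)

theorem boundedMeasurable_indicator_lyapunov (h : IsPreconditionedSGD P ℱ g σ₀ σ₁ ε x X A)
    (hg : IsSmoothObjective g L) (K : ℝ) (k : ℕ) :
    BoundedMeasurable (ℱ k) fun ω =>
      (Set.Ici K).indicator (1 : ℝ → ℝ) (lyapunov g σ₀ σ₁ (A k ω) (x k ω)) :=
  (BoundedMeasurable.const 1).indicator ((h.boundedMeasurable_lyapunov
    hg.differentiable.continuous hg.continuous_gradient k).1.measurable measurableSet_Ici)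

theorem boundedMeasurable_excessDrift (h : IsPreconditionedSGD P ℱ g σ₀ σ₁ ε x X A)
    (hg : IsSmoothObjective g L) (K : ℝ) (k : ℕ) :
    BoundedMeasurable (ℱ k) fun ω => excessDrift σ₀ σ₁ K (lyapunov g σ₀ σ₁ (A k ω) (x k ω))
      (A k ω) (gradient g (x k ω)) := by
  have hgc := hg.continuous_gradient
  have excess := h.boundedMeasurable_excess hg K k
  have dissipation : BoundedMeasurable (ℱ k) fun ω =>
      ∑ i, (-(3 / 4) * (A k ω i * gradient g (x k ω) i ^ 2)) := .sum fun i =>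
    (BoundedMeasurable.const _).mul
      ((h.boundedMeasurable_A k i).mul ((h.boundedMeasurable_gradient hgc k i).pow 2))
  have correction : BoundedMeasurable (ℱ k) fun ω =>
      ∑ i, A k ω i * (σ₀ * gradient g (x k ω) i ^ 2 + σ₁) := .sum fun i =>
    (h.boundedMeasurable_A k i).mul (h.boundedMeasurable_moment hgc k i)
  exact ((excess.pow 2).add (((BoundedMeasurable.const 2).mul excess).mul dissipation)).add
    ((h.boundedMeasurable_indicator_lyapunov hg _ k).mul
      ((BoundedMeasurable.const 2).mul (correction.pow 2)))

theorem boundedMeasurable_excessMomentCoeff (h : IsPreconditionedSGD P ℱ g σ₀ σ₁ ε x X A)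
    (hg : IsSmoothObjective g L) (hσ₀ : 0 ≤ σ₀) (hσ₁ : 0 < σ₁) (c₁ c₂ c₃ K : ℝ) (k : ℕ) (i : ι) :
    BoundedMeasurable (ℱ k) fun ω => excessMomentCoeff σ₀ σ₁ c₁ c₂ c₃ K
      (lyapunov g σ₀ σ₁ (A k ω) (x k ω)) (A k ω) (gradient g (x k ω)) i := by
  have step_coeff : BoundedMeasurable (ℱ k) fun ω => 2 * (c₁ * ‖gradient g (x k ω)‖ + c₂) ^ 2 :=
    h.boundedMeasurable_comp k (φ := fun y => 2 * (c₁ * ‖gradient g y‖ + c₂) ^ 2)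
      (by have := hg.continuous_gradient; fun_prop)
  exact (((BoundedMeasurable.const 2).mul (h.boundedMeasurable_excess hg K k)).mul
    (h.boundedMeasurable_momentCoeff hg.continuous_gradient hσ₀ hσ₁ c₃ k i)).add
      ((h.boundedMeasurable_indicator_lyapunov hg _ k).mul
        (step_coeff.mul ((h.boundedMeasurable_A k i).pow 2)))

variable [IsProbabilityMeasure P]

theorem eventually_integral_lyapunov_succ_le (h : IsPreconditionedSGD P ℱ g σ₀ σ₁ ε x X A)
    (hg : IsSmoothObjective g L) (hσ₀ : 0 ≤ σ₀) (hσ₁ : 0 < σ₁) (hε : 0 < ε) :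
    ∃ C, ∀ᶠ k : ℕ in atTop,
      ∫ ω, lyapunov g σ₀ σ₁ (A (k + 1) ω) (x (k + 1) ω) ∂P ≤
        ∫ ω, lyapunov g σ₀ σ₁ (A k ω) (x k ω) ∂P
          - 1 / 4 * ∫ ω, ∑ i, A k ω i * gradient g (x k ω) i ^ 2 ∂P + C * (1 / √(k + 1)) ^ 2 := by
  have hL := hg.pos
  have hgc := hg.continuous_gradient
  set c := L + (4 * σ₀ ^ 2 + σ₀) * (1 / ε) * L ^ 2
  refine ⟨c * Fintype.card ι * σ₁ / ε ^ 2, ?_⟩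
  filter_upwards [eventually_mul_one_div_mul_sqrt_succ_le ε (c * σ₀)
    (show (0 : ℝ) < 1 / 4 by norm_num)] with k hk
  have hW (k) := h.boundedMeasurable_lyapunov hg.differentiable.continuous hgc k
  have hQ := h.boundedMeasurable_energy hgc k
  have hWQ (b : ℝ) := (hW k).sub ((BoundedMeasurable.const b).mul hQ)
  have pathwise := h.integral_le_of_le hgc (k := k)
    (b := fun ω => lyapunov g σ₀ σ₁ (A k ω) (x k ω)
      - 1 / 4 * ∑ i, A k ω i * gradient g (x k ω) i ^ 2
      + Fintype.card ι * (c * σ₁ * (1 / (ε * √(k + 1))) ^ 2))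
    ((hW (k + 1)).integrable (ℱ.le _)) (hWQ (3 / 4))
    (fun i => (h.boundedMeasurable_A k i).mul (h.boundedMeasurable_gradient hgc k i))
    (h.boundedMeasurable_momentCoeff hgc hσ₀ hσ₁ c k)
    (fun i ω => by
      have := h.A_nonneg k ω i
      positivity)
    (((hWQ _).add (.const _)).integrable (ℱ.le k))
    (fun ω => by
      refine ((h.isPreconditionedStep k ω).lyapunov_le hg hσ₀ hσ₁ (by positivity)
        (h.A_le_inv hε k ω)).trans_eq ?_
      rw [sub_add_eq_add_sub, add_sub_assoc, Finset.mul_sum, ← Finset.sum_sub_distrib]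
      exact congrArg _ (Finset.sum_congr rfl fun i _ => by ring))
    (fun ω => by
      have coordinate := Finset.sum_le_sum fun i (_ : i ∈ Finset.univ) =>
        moment_coordinate_le (h := gradient g (x k ω) i) hσ₀ hσ₁ (show 0 ≤ c by positivity)
          (h.A_nonneg k ω i) (h.A_le k ω i) hk
      rw [Finset.sum_add_distrib, ← Finset.mul_sum, Finset.sum_const, Finset.card_univ,
        nsmul_eq_mul] at coordinate
      linarith)
  rw [integral_add ((hWQ _).integrable (ℱ.le k)) (integrable_const _),
    integral_sub ((hW k).integrable (ℱ.le k)) ((hQ.integrable (ℱ.le k)).const_mul _),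
    integral_const_mul, integral_const, probReal_univ, one_smul] at pathwise
  exact pathwise.trans_eq (by field_simp)

theorem summable_integral_energy (h : IsPreconditionedSGD P ℱ g σ₀ σ₁ ε x X A)
    (hg : IsSmoothObjective g L) (hσ₀ : 0 ≤ σ₀) (hσ₁ : 0 < σ₁) (hε : 0 < ε) :
    Summable fun k : ℕ =>
      1 / √(k + 1) * ∫ ω, ∑ i, A k ω i * gradient g (x k ω) i ^ 2 ∂P := by
  obtain ⟨C, hdescent⟩ := h.eventually_integral_lyapunov_succ_le hg hσ₀ hσ₁ hε
  have hW (k) : 0 ≤ ∫ ω, lyapunov g σ₀ σ₁ (A k ω) (x k ω) ∂P := integral_nonneg fun ω =>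
    (hg.nonneg _).trans (le_lyapunov hσ₀ hσ₁.le (h.A_nonneg k ω))
  refine (summable_mul_left_iff (show (1 / 4 : ℝ) ≠ 0 by norm_num)).1
    (summable_of_eventually_le_sub_add
      (f := fun k => 1 / √((k : ℝ) + 1) * ∫ ω, lyapunov g σ₀ σ₁ (A k ω) (x k ω) ∂P)
      (fun k => mul_nonneg (by positivity) (hW k))
      (fun k => mul_nonneg (by norm_num)
        (mul_nonneg (by positivity) (integral_nonneg (h.energy_nonneg k))))
      (summable_one_div_sqrt_succ_pow_three.mul_left C).hasSum.tendsto_sum_nat.cauchySeq ?_)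
  filter_upwards [hdescent] with k hk
  have weight_le := mul_le_mul_of_nonneg_right (one_div_sqrt_succ_antitone k.le_succ) (hW (k + 1))
  have weighted := mul_le_mul_of_nonneg_left hk (show 0 ≤ 1 / √((k : ℝ) + 1) by positivity)
  linarith

theorem eventually_integral_sq_excess_succ_le [Nonempty ι]
    (h : IsPreconditionedSGD P ℱ g σ₀ σ₁ ε x X A) (hg : IsSmoothObjective g L) (hσ₀ : 0 ≤ σ₀)
    (hσ₁ : 0 < σ₁) (hε : 0 < ε) {δ : ℝ} (hδ : 0 < δ)
    (hflat : ∀ᶠ y in Bornology.cobounded (EuclideanSpace ℝ ι), ∀ i, δ ≤ |gradient g y i|) :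
    ∃ K C, 0 ≤ C ∧ ∀ᶠ k : ℕ in atTop,
      ∫ ω, (lyapunov g σ₀ σ₁ (A (k + 1) ω) (x (k + 1) ω) - K)⁺ ^ 2 ∂P ≤
        ∫ ω, (lyapunov g σ₀ σ₁ (A k ω) (x k ω) - K)⁺ ^ 2 ∂P
          + C * (1 / √(k + 1) * ∫ ω, ∑ i, A k ω i * gradient g (x k ω) i ^ 2 ∂P) := by
  have hL := hg.pos
  have hgc := hg.continuous_gradient
  obtain ⟨K₀, hK₀, hgrad⟩ := exists_forall_le_imp_of_cobounded hg.differentiable.continuous hflat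
  set K := 40 * L * Fintype.card ι + 3 + 12 / 5 * K₀ with hK
  set c₁ := 1 + 2 * L * σ₀ * (1 / ε)
  set c₂ := (L + L ^ 2 * σ₀ * (1 / ε)) * √(Fintype.card ι)
  set c₃ := L + (4 * σ₀ ^ 2 + σ₀) * (1 / ε) * L ^ 2
  set c₄ := σ₀ + σ₁ / δ ^ 2
  set c₅ := 8 * L * c₄ * (2 * c₁ ^ 2 + 2 * (c₂ / δ) ^ 2 + c₄)
  refine ⟨K, c₅ * K / ε, by positivity, ?_⟩
  filter_upwards [
    eventually_mul_one_div_mul_sqrt_succ_le ε (4 * L * σ₀) (show (0 : ℝ) < 1 / 5 by norm_num),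
    eventually_mul_one_div_mul_sqrt_succ_le ε (Fintype.card ι * σ₁) one_pos,
    eventually_mul_one_div_mul_sqrt_succ_le ε (c₃ * c₄) (show (0 : ℝ) < 1 / 4 by norm_num),
    eventually_mul_one_div_mul_sqrt_succ_le ε c₅ one_half_pos] with k ha₀ ha₁ ha₂ ha₃
  have excess (k) := (h.boundedMeasurable_excess hg K k).pow 2
  have energy := (BoundedMeasurable.const (c₅ * K * (1 / (ε * √(k + 1))))).mul
    (h.boundedMeasurable_energy hgc k)
  have pathwise := h.integral_le_of_le hgc ((excess (k + 1)).integrable (ℱ.le _))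
    (h.boundedMeasurable_excessDrift hg K k)
    (fun i => ((BoundedMeasurable.const 2).mul (h.boundedMeasurable_excess hg K k)).mul
      ((h.boundedMeasurable_A k i).mul (h.boundedMeasurable_gradient hgc k i)))
    (h.boundedMeasurable_excessMomentCoeff hg hσ₀ hσ₁ c₁ c₂ c₃ K k)
    (fun i ω => excessMomentCoeff_nonneg hσ₀ hσ₁.le (by positivity) (h.A_nonneg k ω i))
    (((excess k).add energy).integrable (ℱ.le k))
    (fun ω => (h.isPreconditionedStep k ω).sq_posPart_lyapunov_le hg hσ₀ hσ₁ (by positivity)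
      (h.A_le_inv hε k ω) (by positivity) (h.A_le k ω) ha₀ ha₁ (h.norm_step_le k ω)
      (by linarith))
    (fun ω => hg.excessDrift_add_sum_le hσ₀ hσ₁ hδ (by positivity) (by positivity)
      (by positivity) (h.A_nonneg k ω) (by positivity) (h.A_le k ω) ha₀ ha₁ ha₂ ha₃ hK₀
      (by rw [hK]; linarith [show 0 ≤ L * Fintype.card ι by positivity]) hgrad)
  rw [integral_add ((excess k).integrable (ℱ.le k)) (energy.integrable (ℱ.le k)),
    integral_const_mul] at pathwise
  exact pathwise.trans_eq (by field_simp)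

theorem exists_integral_norm_gradient_pow_four_le [Nonempty ι]
    (h : IsPreconditionedSGD P ℱ g σ₀ σ₁ ε x X A) (hg : IsSmoothObjective g L) (hσ₀ : 0 ≤ σ₀)
    (hσ₁ : 0 < σ₁) (hε : 0 < ε) {δ : ℝ} (hδ : 0 < δ)
    (hflat : ∀ᶠ y in Bornology.cobounded (EuclideanSpace ℝ ι), ∀ i, δ ≤ |gradient g y i|) :
    ∃ C, ∀ᶠ k in atTop, ∫ ω, ‖gradient g (x k ω)‖ ^ 4 ∂P ≤ C := by
  have hL := hg.pos
  obtain ⟨K, C, hC, hdrift⟩ :=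
    h.eventually_integral_sq_excess_succ_le hg hσ₀ hσ₁ hε hδ hflat
  obtain ⟨C', hC'⟩ := exists_eventually_le_of_eventually_le_add
    (f := fun k => ∫ ω, (lyapunov g σ₀ σ₁ (A k ω) (x k ω) - K)⁺ ^ 2 ∂P)
    (fun k => mul_nonneg hC (mul_nonneg (by positivity) (integral_nonneg (h.energy_nonneg k))))
    ((h.summable_integral_energy hg hσ₀ hσ₁ hε).mul_left C) hdrift
  refine ⟨32 * L ^ 2 * (C' + K ^ 2), hC'.mono fun k hk => ?_⟩
  have excess_int := ((h.boundedMeasurable_excess hg K k).pow 2).integrable (P := P) (ℱ.le k)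
  have pow_four := (h.boundedMeasurable_comp k hg.continuous_gradient.norm).pow 4
  calc ∫ ω, ‖gradient g (x k ω)‖ ^ 4 ∂P
      ≤ ∫ ω, 32 * L ^ 2 * ((lyapunov g σ₀ σ₁ (A k ω) (x k ω) - K)⁺ ^ 2 + K ^ 2) ∂P :=
        integral_mono (pow_four.integrable (ℱ.le k))
          ((excess_int.add (integrable_const _)).const_mul _) fun ω =>
            hg.norm_gradient_pow_four_le (le_lyapunov hσ₀ hσ₁.le (h.A_nonneg k ω))
    _ = 32 * L ^ 2 * (∫ ω, (lyapunov g σ₀ σ₁ (A k ω) (x k ω) - K)⁺ ^ 2 ∂P + K ^ 2) := by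
        rw [integral_const_mul, integral_add excess_int (integrable_const _), integral_const,
          probReal_univ, one_smul]
    _ ≤ 32 * L ^ 2 * (C' + K ^ 2) := by gcongr

end IsPreconditionedSGD

/-! ### Almost sure convergence of series -/

theorem ae_summable_of_summable_integral {Ω : Type*} {m0 : MeasurableSpace Ω} {P : Measure Ω}
    {f : ℕ → Ω → ℝ} (hf : ∀ k, Integrable (f k) P) (hf0 : ∀ k ω, 0 ≤ f k ω)
    (hs : Summable fun k => ∫ ω, f k ω ∂P) : ∀ᵐ ω ∂P, Summable fun k => f k ω := by
  have lintegral_ne_top : ∫⁻ ω, ∑' k, ENNReal.ofReal (f k ω) ∂P ≠ ⊤ := by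
    rw [lintegral_tsum fun k => (hf k).aemeasurable.ennreal_ofReal]
    convert hs.tsum_ofReal_ne_top using 3 with k
    rw [ofReal_integral_eq_lintegral_ofReal (hf k) (Eventually.of_forall (hf0 k))]
  filter_upwards [ae_lt_top' (AEMeasurable.tsum fun k =>
    (hf k).aemeasurable.ennreal_ofReal) lintegral_ne_top] with ω hω
  simpa only [ENNReal.toReal_ofReal (hf0 _ ω)] using ENNReal.summable_toReal hω.ne

section MartingaleDifferences

variable {Ω : Type*} {m0 : MeasurableSpace Ω} {P : Measure Ω} [IsProbabilityMeasure P]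

theorem integral_mul_eq_zero_of_condExp_eq_zero {m : MeasurableSpace Ω} (hm : m ≤ m0)
    {M D : Ω → ℝ} (hM : StronglyMeasurable[m] M) (hM2 : MemLp M 2 P) (hD : MemLp D 2 P)
    (hcond : P[D | m] =ᵐ[P] 0) : ∫ ω, M ω * D ω ∂P = 0 := by
  have pull_out := condExp_mul_of_stronglyMeasurable_left hM (hM2.integrable_mul hD)
    (hD.integrable one_le_two)
  calc ∫ ω, M ω * D ω ∂P = ∫ ω, (P[M * D | m]) ω ∂P := (integral_condExp hm).symm
    _ = ∫ _, (0 : ℝ) ∂P := integral_congr_ae (by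
        filter_upwards [pull_out, hcond] with ω h1 h2
        rw [h1, Pi.mul_apply, h2, Pi.zero_apply, mul_zero])
    _ = 0 := integral_zero _ _

variable {ℱ : Filtration ℕ m0} {D : ℕ → Ω → ℝ}

theorem stronglyMeasurable_sum_range (hm : ∀ k, StronglyMeasurable[ℱ (k + 1)] (D k)) (n : ℕ) :
    StronglyMeasurable[ℱ n] fun ω => ∑ k ∈ Finset.range n, D k ω :=
  Finset.stronglyMeasurable_fun_sum _ fun _ hk => (hm _).mono (ℱ.mono (Finset.mem_range.1 hk))

theorem integral_sq_sum_range_eq_sum (hm : ∀ k, StronglyMeasurable[ℱ (k + 1)] (D k))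
    (hD : ∀ k, MemLp (D k) 2 P) (hcond : ∀ k, P[D k | ℱ k] =ᵐ[P] 0) (n : ℕ) :
    ∫ ω, (∑ k ∈ Finset.range n, D k ω) ^ 2 ∂P = ∑ k ∈ Finset.range n, ∫ ω, D k ω ^ 2 ∂P := by
  induction n with
  | zero => simp
  | succ n ih =>
    have partial_sum_memLp : MemLp (fun ω => ∑ k ∈ Finset.range n, D k ω) 2 P :=
      memLp_finsetSum _ fun k _ => hD k
    have cross_int : Integrable (fun ω => 2 * ((∑ k ∈ Finset.range n, D k ω) * D n ω)) P :=
      (partial_sum_memLp.integrable_mul (hD n)).const_mul 2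
    have square_add_cross_int : Integrable (fun ω => (∑ k ∈ Finset.range n, D k ω) ^ 2 +
        2 * ((∑ k ∈ Finset.range n, D k ω) * D n ω)) P :=
      partial_sum_memLp.integrable_sq.add cross_int
    have cross_integral := integral_mul_eq_zero_of_condExp_eq_zero (ℱ.le n)
      (stronglyMeasurable_sum_range hm n) partial_sum_memLp (hD n) (hcond n)
    simp only [Finset.sum_range_succ, add_sq, mul_assoc]
    rw [integral_add square_add_cross_int (hD n).integrable_sq,
      integral_add partial_sum_memLp.integrable_sq cross_int, integral_const_mul, cross_integral,
      ih, mul_zero, add_zero]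

theorem integral_abs_le_one_add_integral_sq {f : Ω → ℝ} (hf : MemLp f 2 P) :
    ∫ ω, |f ω| ∂P ≤ 1 + ∫ ω, f ω ^ 2 ∂P := by
  calc ∫ ω, |f ω| ∂P ≤ ∫ ω, (1 + f ω ^ 2) ∂P :=
        integral_mono (hf.integrable one_le_two).abs ((integrable_const 1).add hf.integrable_sq)
          fun ω => by
            dsimp only
            rw [← sq_abs]
            nlinarith [sq_nonneg (|f ω| - 1), abs_nonneg (f ω)]
    _ = 1 + ∫ ω, f ω ^ 2 ∂P := by
        rw [integral_add (integrable_const 1) hf.integrable_sq, integral_const, probReal_univ,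
          one_smul]

theorem ae_cauchySeq_sum_of_summable_integral_sq
    (hm : ∀ k, StronglyMeasurable[ℱ (k + 1)] (D k)) (hD : ∀ k, MemLp (D k) 2 P)
    (hcond : ∀ k, P[D k | ℱ k] =ᵐ[P] 0) (hs : Summable fun k => ∫ ω, D k ω ^ 2 ∂P) :
    ∀ᵐ ω ∂P, CauchySeq fun n => ∑ k ∈ Finset.range n, D k ω := by
  set M : ℕ → Ω → ℝ := fun n ω => ∑ k ∈ Finset.range n, D k ω
  have memLp (n) : MemLp (M n) 2 P := memLp_finsetSum _ fun k _ => hD k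
  have martingale : Martingale M ℱ P := martingale_of_condExp_sub_eq_zero_nat
    (stronglyMeasurable_sum_range hm) (fun n => (memLp n).integrable one_le_two) fun n => by
      have : M (n + 1) - M n = D n := funext fun ω => by simp [M, Finset.sum_range_succ]
      rw [this]
      exact hcond n
  have bounded (n) : eLpNorm (M n) 1 P ≤ (1 + ∑' k, ∫ ω, D k ω ^ 2 ∂P).toNNReal := by
    rw [eLpNorm_one_eq_lintegral_enorm,
      ← ofReal_integral_norm_eq_lintegral_enorm ((memLp n).integrable one_le_two)]
    refine ENNReal.ofReal_le_ofReal ((integral_abs_le_one_add_integral_sq (memLp n)).trans ?_)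
    rw [integral_sq_sum_range_eq_sum hm hD hcond]
    gcongr
    exact hs.sum_le_tsum _ fun k _ => integral_nonneg fun ω => sq_nonneg _
  filter_upwards [martingale.submartingale.exists_ae_tendsto_of_bdd bounded] with ω ⟨c, hc⟩
  exact hc.cauchySeq

end MartingaleDifferences

namespace IsPreconditionedSGD

variable {ι : Type*} [Fintype ι] {Ω : Type*} {m0 : MeasurableSpace Ω} {P : Measure Ω}
  [IsProbabilityMeasure P] {ℱ : Filtration ℕ m0} {g : EuclideanSpace ℝ ι → ℝ} {σ₀ σ₁ ε : ℝ}
  {x : ℕ → Ω → EuclideanSpace ℝ ι} {X A : ℕ → Ω → ι → ℝ}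

theorem ae_summable_mul_sq (h : IsPreconditionedSGD P ℱ g σ₀ σ₁ ε x X A)
    (hg : Continuous (gradient g)) (i : ι) {f u : ℕ → Ω → ℝ}
    (hf : ∀ k, BoundedMeasurable (ℱ k) (f k)) (hf0 : ∀ k ω, 0 ≤ f k ω)
    (hu : ∀ k, Integrable (u k) P)
    (hfu : ∀ k ω, f k ω * (σ₀ * gradient g (x k ω) i ^ 2 + σ₁) ≤ u k ω)
    (hs : Summable fun k => ∫ ω, u k ω ∂P) :
    ∀ᵐ ω ∂P, Summable fun k => f k ω * X k ω i ^ 2 :=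
  ae_summable_of_summable_integral
    (fun k => (hf k).integrable_mul (ℱ.le k) (h.integrable_X_sq k i))
    (fun k ω => mul_nonneg (hf0 k ω) (sq_nonneg _))
    (hs.of_nonneg_of_le (fun k => integral_nonneg fun ω => mul_nonneg (hf0 k ω) (sq_nonneg _))
      fun k => (h.integral_mul_sq_le hg i (hf k) (hf0 k)).trans
        (integral_mono (((hf k).mul (h.boundedMeasurable_moment hg k i)).integrable (ℱ.le k))
          (hu k) (hfu k)))

theorem memLp_noise (h : IsPreconditionedSGD P ℱ g σ₀ σ₁ ε x X A)
    (hg : Continuous (gradient g)) (k : ℕ) (i : ι) :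
    MemLp (fun ω => gradient g (x k ω) i - X k ω i) 2 P := by
  have hgrad := h.boundedMeasurable_gradient hg k i
  exact ((memLp_two_iff_integrable_sq (hgrad.1.mono (ℱ.le k)).aestronglyMeasurable).2
    ((hgrad.pow 2).integrable (ℱ.le k))).sub (h.memLp_X k i)

theorem condExp_mul_noise_eq_zero (h : IsPreconditionedSGD P ℱ g σ₀ σ₁ ε x X A)
    (hg : Continuous (gradient g)) (k : ℕ) (i : ι) {f : Ω → ℝ}
    (hf : BoundedMeasurable (ℱ k) f) :
    P[fun ω => f ω * (gradient g (x k ω) i - X k ω i) | ℱ k] =ᵐ[P] 0 := by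
  have hgrad := h.boundedMeasurable_gradient hg k i
  have noise_int := (h.memLp_noise hg k i).integrable one_le_two
  have noise_zero : P[fun ω => gradient g (x k ω) i - X k ω i | ℱ k] =ᵐ[P] 0 := by
    refine (condExp_sub (hgrad.integrable (ℱ.le k)) (h.integrable_X k i) _).trans ?_
    rw [condExp_of_stronglyMeasurable (ℱ.le k) hgrad.1 (hgrad.integrable (ℱ.le k))]
    filter_upwards [h.unbiased k i] with ω hω
    rw [Pi.sub_apply, hω, sub_self, Pi.zero_apply]
  refine (condExp_mul_of_stronglyMeasurable_left hf.1
    (hf.integrable_mul (ℱ.le k) noise_int) noise_int).trans ?_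
  filter_upwards [noise_zero] with ω hω
  rw [Pi.mul_apply, hω, Pi.zero_apply, mul_zero]

theorem integral_sq_mul_noise_le (h : IsPreconditionedSGD P ℱ g σ₀ σ₁ ε x X A)
    (hg : Continuous (gradient g)) (k : ℕ) (i : ι) {f : Ω → ℝ}
    (hf : BoundedMeasurable (ℱ k) f) :
    ∫ ω, (f ω * (gradient g (x k ω) i - X k ω i)) ^ 2 ∂P ≤
      ∫ ω, f ω ^ 2 * (σ₀ * gradient g (x k ω) i ^ 2 + σ₁) ∂P := by
  have hgrad := h.boundedMeasurable_gradient hg k i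
  have noise_memLp := h.memLp_noise hg k i
  have weight := ((hf.pow 2).mul hgrad).mul (.const 2)
  have first_order := weight.integrable_mul (ℱ.le k) (noise_memLp.integrable one_le_two)
  have second_order := (hf.pow 2).integrable_mul (ℱ.le k) (h.integrable_X_sq k i)
  calc ∫ ω, (f ω * (gradient g (x k ω) i - X k ω i)) ^ 2 ∂P
      ≤ ∫ ω, (f ω ^ 2 * gradient g (x k ω) i * 2 * (gradient g (x k ω) i - X k ω i)
          + f ω ^ 2 * X k ω i ^ 2) ∂P := by
        refine integral_mono ?_ (first_order.add second_order) fun ω => ?_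
        · simp only [mul_pow]
          exact (hf.pow 2).integrable_mul (ℱ.le k) noise_memLp.integrable_sq
        · linarith [sq_nonneg (f ω * gradient g (x k ω) i)]
    _ = ∫ ω, f ω ^ 2 * X k ω i ^ 2 ∂P := by
        rw [integral_add first_order second_order, h.integral_mul_noise_eq_zero hg i weight,
          zero_add]
    _ ≤ _ := h.integral_mul_sq_le hg i (hf.pow 2) fun ω => sq_nonneg _

theorem ae_cauchySeq_noise (h : IsPreconditionedSGD P ℱ g σ₀ σ₁ ε x X A)
    (hg : Continuous (gradient g)) (i : ι) {f u : ℕ → Ω → ℝ}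
    (hf : ∀ k, BoundedMeasurable (ℱ k) (f k)) (hu : ∀ k, Integrable (u k) P)
    (hfu : ∀ k ω, f k ω ^ 2 * (σ₀ * gradient g (x k ω) i ^ 2 + σ₁) ≤ u k ω)
    (hs : Summable fun k => ∫ ω, u k ω ∂P) :
    ∀ᵐ ω ∂P, CauchySeq fun n =>
      ∑ k ∈ Finset.range n, f k ω * (gradient g (x k ω) i - X k ω i) := by
  have hgrad (k) := h.boundedMeasurable_gradient hg k i
  have meas (k) : StronglyMeasurable[ℱ (k + 1)]
      fun ω => f k ω * (gradient g (x k ω) i - X k ω i) :=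
    ((hf k).1.mono (ℱ.mono k.le_succ)).mul
      (((hgrad k).1.mono (ℱ.mono k.le_succ)).sub (h.X_meas k i))
  refine ae_cauchySeq_sum_of_summable_integral_sq meas
    (fun k => (memLp_two_iff_integrable_sq ((meas k).mono (ℱ.le _)).aestronglyMeasurable).2 ?_)
    (fun k => h.condExp_mul_noise_eq_zero hg k i (hf k))
    (hs.of_nonneg_of_le (fun k => integral_nonneg fun ω => sq_nonneg _) fun k =>
      (h.integral_sq_mul_noise_le hg k i (hf k)).trans (integral_mono
        ((((hf k).pow 2).mul (h.boundedMeasurable_moment hg k i)).integrable (ℱ.le k))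
        (hu k) (hfu k)))
  simp only [mul_pow]
  exact ((hf k).pow 2).integrable_mul (ℱ.le k) (h.memLp_noise hg k i).integrable_sq

end IsPreconditionedSGD

/-! ### RMSProp runs -/

/-- The RMSProp preconditioner, in terms of the running sum `s` of squared stochastic gradients:
the step size `1 / √(k + 1)` divided by `√(s i / (k + 1)) + ε`. -/
noncomputable def rmsPreconditioner {ι : Type*} (ε : ℝ) (k : ℕ) (s : ι → ℝ) (i : ι) : ℝ :=
  1 / (√(s i) + ε * √(k + 1))

section Preconditioner

variable {ι : Type*} {ε : ℝ} {s s' : ι → ℝ} {i : ι}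

theorem rmsPreconditioner_nonneg (hε : 0 < ε) (k : ℕ) : 0 ≤ rmsPreconditioner ε k s i := by
  unfold rmsPreconditioner
  positivity

theorem rmsPreconditioner_le (hε : 0 < ε) (k : ℕ) :
    rmsPreconditioner ε k s i ≤ 1 / (ε * √(k + 1)) := by
  unfold rmsPreconditioner
  gcongr
  exact le_add_of_nonneg_left (Real.sqrt_nonneg _)

theorem rmsPreconditioner_succ_le (hε : 0 < ε) (k : ℕ) (h : s i ≤ s' i) :
    rmsPreconditioner ε (k + 1) s' i ≤ rmsPreconditioner ε k s i := by
  unfold rmsPreconditioner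
  push_cast
  gcongr
  linarith

theorem le_rmsPreconditioner (hε : 0 < ε) {C : ℝ} (k : ℕ) (h : s i ≤ C * (k + 1)) :
    1 / √(k + 1) * (1 / (√C + ε)) ≤ rmsPreconditioner ε k s i := by
  have sqrt_le : √(s i) ≤ √C * √(k + 1) :=
    (Real.sqrt_le_sqrt h).trans (Real.sqrt_mul' _ (by positivity)).le
  unfold rmsPreconditioner
  rw [div_mul_div_comm, one_mul]
  gcongr
  linarith

theorem abs_rmsPreconditioner_mul_le_one (hε : 0 < ε) (k : ℕ) {t : ℝ} (ht : t ^ 2 ≤ s i) :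
    |rmsPreconditioner ε k s i * t| ≤ 1 := by
  rw [abs_mul, abs_of_nonneg (rmsPreconditioner_nonneg hε k), rmsPreconditioner,
    one_div_mul_eq_div]
  refine div_le_one_of_le₀ ?_ (by positivity)
  exact (Real.abs_le_sqrt ht).trans (le_add_of_nonneg_right (by positivity))

theorem sq_rmsPreconditioner_le (hε : 0 < ε) (k : ℕ) :
    rmsPreconditioner ε k s i ^ 2 ≤ 1 / ε ^ 2 * (1 / (k + 1)) := by
  calc rmsPreconditioner ε k s i ^ 2 ≤ (1 / (ε * √(k + 1))) ^ 2 :=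
        pow_le_pow_left₀ (rmsPreconditioner_nonneg hε k) (rmsPreconditioner_le hε k) 2
    _ = 1 / ε ^ 2 * (1 / (k + 1)) := by
        rw [div_pow, mul_pow, Real.sq_sqrt (by positivity), div_mul_div_comm, one_pow, one_mul]

theorem sqrt_add_sq_le (a t : ℝ) : √(a + t ^ 2) ≤ √a + |t| := by
  refine Real.sqrt_le_iff.2 ⟨by positivity, ?_⟩
  have := mul_nonneg (Real.sqrt_nonneg a) (abs_nonneg t)
  rw [add_sq, Real.sq_sqrt', sq_abs]
  linarith [le_max_left a 0]

theorem sqrt_add_one_le {a : ℝ} (ha : 0 < a) : √(a + 1) ≤ √a + 1 / √a := by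
  have sq_eq : (√a + 1 / √a) ^ 2 = a + 2 + (1 / √a) ^ 2 := by
    rw [add_sq, Real.sq_sqrt ha.le]
    field_simp
  refine Real.sqrt_le_iff.2 ⟨by positivity, ?_⟩
  linarith [sq_nonneg (1 / √a)]

theorem rmsPreconditioner_sub_le (hε : 0 < ε) (k : ℕ) {t : ℝ} (h : s' i = s i + t ^ 2) :
    rmsPreconditioner ε k s i - rmsPreconditioner ε (k + 1) s' i ≤
      (|t| + ε * (1 / √(k + 1))) / (ε * √(k + 1)) ^ 2 := by
  have growth_sum := sqrt_add_sq_le (s i) t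
  have growth_index := mul_le_mul_of_nonneg_left
    (sqrt_add_one_le (a := k + 1) (by positivity)) hε.le
  have denominator : (ε * √(k + 1)) ^ 2 ≤
      (√(s i) + ε * √(k + 1)) * (√(s i + t ^ 2) + ε * √(k + 1 + 1)) := by
    rw [pow_two]
    refine mul_le_mul (le_add_of_nonneg_left (Real.sqrt_nonneg _)) ?_ (by positivity)
      (by positivity)
    calc ε * √(k + 1) ≤ ε * √(k + 1 + 1) := by
          gcongr
          linarith
      _ ≤ _ := le_add_of_nonneg_left (Real.sqrt_nonneg _)
  unfold rmsPreconditioner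
  rw [h, div_sub_div _ _ (by positivity) (by positivity)]
  push_cast
  exact div_le_div₀ (by positivity) (by linarith) (by positivity) denominator

/-- The bound, up to a constant, on the error `(A k - A (k + 1)) * t` committed by preconditioning
a stochastic gradient `t` with `A (k + 1)` instead of the predictable `A k`. -/
noncomputable def lagBound (k : ℕ) (t : ℝ) : ℝ :=
  1 / (k + 1) * t ^ 2 + 1 / ((k : ℝ) + 1) ^ 2

theorem abs_rmsPreconditioner_sub_mul_le (hε : 0 < ε) (k : ℕ) {t : ℝ}
    (h : s' i = s i + t ^ 2) :
    |(rmsPreconditioner ε k s i - rmsPreconditioner ε (k + 1) s' i) * t| ≤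
      (2 / ε ^ 2 + 1) * lagBound k t := by
  have sub_nonneg := sub_nonneg.2 (rmsPreconditioner_succ_le hε k
    (le_of_le_of_eq (le_add_of_nonneg_right (sq_nonneg t)) h.symm))
  rw [abs_mul, abs_of_nonneg sub_nonneg, lagBound]
  have sq_sqrt : √((k : ℝ) + 1) ^ 2 = k + 1 := Real.sq_sqrt (by positivity)
  set r := √((k : ℝ) + 1)
  have : 0 < r := by positivity
  have am_gm : ε / r * |t| ≤ t ^ 2 + (ε / r) ^ 2 := by
    rw [← sq_abs t]
    nlinarith [sq_nonneg (|t| - ε / r), sq_nonneg (|t| + ε / r)]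
  calc (rmsPreconditioner ε k s i - rmsPreconditioner ε (k + 1) s' i) * |t|
      ≤ (|t| + ε * (1 / r)) / (ε * r) ^ 2 * |t| :=
        mul_le_mul_of_nonneg_right (rmsPreconditioner_sub_le hε k h) (abs_nonneg t)
    _ = 1 / (ε * r) ^ 2 * (t ^ 2 + ε / r * |t|) := by
        rw [← sq_abs t]
        ring
    _ ≤ 1 / (ε * r) ^ 2 * (2 * t ^ 2 + (ε / r) ^ 2) :=
        mul_le_mul_of_nonneg_left (by linarith) (by positivity)
    _ = 2 / ε ^ 2 * (1 / (k + 1) * t ^ 2) + 1 / ((k : ℝ) + 1) ^ 2 := by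
        rw [← sq_sqrt]
        field_simp
    _ ≤ (2 / ε ^ 2 + 1) * (1 / (k + 1) * t ^ 2 + 1 / ((k : ℝ) + 1) ^ 2) := by
        have : 0 ≤ 1 / ((k : ℝ) + 1) * t ^ 2 := by positivity
        have : 0 ≤ 2 / ε ^ 2 * (1 / ((k : ℝ) + 1) ^ 2) := by positivity
        linarith

end Preconditioner

/-- A deterministic run of RMSProp along the stochastic gradients `X`, in terms of the sums `S` of
their squares. -/
structure IsRMSPropRun {ι : Type*} (ε : ℝ) (x : ℕ → EuclideanSpace ℝ ι) (X S : ℕ → ι → ℝ) :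
    Prop where
  zero_nonneg : ∀ i, 0 ≤ S 0 i
  sum_succ : ∀ k i, S (k + 1) i = S k i + X k i ^ 2
  succ_eq_sub : ∀ k i, x (k + 1) i = x k i - rmsPreconditioner ε (k + 1) (S (k + 1)) i * X k i

open Classical in
/-- The indicator that the gradient is at least `ν` while the objective and the averaged squared
stochastic gradients are at most `R`. -/
noncomputable def gate {ι : Type*} [Fintype ι] (g : EuclideanSpace ℝ ι → ℝ) (R ν : ℝ) (k : ℕ)
    (y : EuclideanSpace ℝ ι) (s : ι → ℝ) : ℝ :=
  if ν ≤ ‖gradient g y‖ ∧ g y ≤ R ∧ ∀ i, s i ≤ R * (k + 1) then 1 else 0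

/-- The path property which holds almost surely for the steps selected by `gate g R ν`: the series
of the noise, of the noise tested against the gradient, and of the squared steps converge. -/
structure GatedSeriesConverge {ι : Type*} [Fintype ι] (g : EuclideanSpace ℝ ι → ℝ) (ε R ν : ℝ)
    (x : ℕ → EuclideanSpace ℝ ι) (X S : ℕ → ι → ℝ) : Prop where
  cauchySeq_noise : ∀ i, CauchySeq fun n => ∑ k ∈ Finset.range n,
    gate g R ν k (x k) (S k) * rmsPreconditioner ε k (S k) i * (gradient g (x k) i - X k i)
  cauchySeq_gradient_mul_noise : ∀ i, CauchySeq fun n => ∑ k ∈ Finset.range n,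
    gate g R ν k (x k) (S k) * rmsPreconditioner ε k (S k) i * gradient g (x k) i
      * (gradient g (x k) i - X k i)
  summable_sq : ∀ i, Summable fun k : ℕ =>
    gate g R ν k (x k) (S k) * (1 / (k + 1)) * X k i ^ 2

theorem sq_apply_le_norm_sq {ι : Type*} [Fintype ι] (y : EuclideanSpace ℝ ι) (i : ι) :
    y i ^ 2 ≤ ‖y‖ ^ 2 := by
  rw [EuclideanSpace.real_norm_sq_eq]
  exact Finset.single_le_sum (fun j _ => sq_nonneg (y j)) (Finset.mem_univ i)

section Gate

variable {ι : Type*} [Fintype ι] {g : EuclideanSpace ℝ ι → ℝ} {R ν : ℝ} {k : ℕ}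
  {y : EuclideanSpace ℝ ι} {s : ι → ℝ}

theorem gate_eq_one (hν : ν ≤ ‖gradient g y‖) (hR : g y ≤ R) (hs : ∀ i, s i ≤ R * (k + 1)) :
    gate g R ν k y s = 1 :=
  if_pos ⟨hν, hR, hs⟩

theorem gate_nonneg : 0 ≤ gate g R ν k y s := by
  unfold gate
  split_ifs <;> norm_num

theorem gate_le_one : gate g R ν k y s ≤ 1 := by
  unfold gate
  split_ifs <;> norm_num

end Gate

theorem cauchySeq_sum_of_coordinates {ι : Type*} [Finite ι] {p : ℕ → EuclideanSpace ℝ ι}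
    (h : ∀ i, CauchySeq fun n => ∑ k ∈ Finset.range n, p k i) :
    CauchySeq fun n => ∑ k ∈ Finset.range n, p k := by
  choose l hl using fun i => cauchySeq_tendsto_of_complete (h i)
  refine Tendsto.cauchySeq (x := WithLp.toLp 2 l)
    ((((PiLp.continuous_toLp 2 fun _ : ι => ℝ).tendsto l).comp
      (tendsto_pi_nhds.2 hl)).congr fun n => ?_)
  ext i
  simp

theorem cauchySeq_sum_sum {ι : Type*} [Fintype ι] {q : ℕ → ι → ℝ}
    (h : ∀ i, CauchySeq fun n => ∑ k ∈ Finset.range n, q k i) :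
    CauchySeq fun n => ∑ k ∈ Finset.range n, ∑ i, q k i := by
  choose l hl using fun i => cauchySeq_tendsto_of_complete (h i)
  exact ((tendsto_finsetSum Finset.univ fun i _ => hl i).congr fun n =>
    Finset.sum_comm).cauchySeq

theorem cauchySeq_sum_add {a b : ℕ → ℝ} (ha : CauchySeq fun n => ∑ k ∈ Finset.range n, a k)
    (hb : Summable b) : CauchySeq fun n => ∑ k ∈ Finset.range n, (a k + b k) := by
  simp only [Finset.sum_add_distrib]
  exact ha.add hb.hasSum.tendsto_sum_nat.cauchySeq

theorem GatedSeriesConverge.summable_lagBound {ι : Type*} [Fintype ι]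
    {g : EuclideanSpace ℝ ι → ℝ} {ε R ν : ℝ} {x : ℕ → EuclideanSpace ℝ ι} {X S : ℕ → ι → ℝ}
    (h : GatedSeriesConverge g ε R ν x X S) (i : ι) :
    Summable fun k => gate g R ν k (x k) (S k) * lagBound k (X k i) := by
  have summable_one_div_succ_sq : Summable fun k : ℕ => 1 / ((k : ℝ) + 1) ^ 2 := by
    simpa using (summable_nat_add_iff 1).2 (Real.summable_one_div_nat_pow.2 one_lt_two)
  have gated : Summable fun k : ℕ => gate g R ν k (x k) (S k) * (1 / ((k : ℝ) + 1) ^ 2) :=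
    summable_one_div_succ_sq.of_nonneg_of_le
      (fun k => mul_nonneg gate_nonneg (by positivity))
      fun k => mul_le_of_le_one_left (by positivity) gate_le_one
  refine ((h.summable_sq i).add gated).congr fun k => ?_
  rw [lagBound, mul_add, mul_assoc]

namespace IsRMSPropRun

variable {ι : Type*} {g : EuclideanSpace ℝ ι → ℝ} {L ε R ν : ℝ}
  {x : ℕ → EuclideanSpace ℝ ι} {X S : ℕ → ι → ℝ}

theorem sum_nonneg (h : IsRMSPropRun ε x X S) (k : ℕ) (i : ι) : 0 ≤ S k i := by
  induction k with
  | zero => exact h.zero_nonneg i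
  | succ k ih =>
    rw [h.sum_succ]
    positivity

theorem isPreconditionedStep (h : IsRMSPropRun ε x X S) (hε : 0 < ε) (k : ℕ) :
    IsPreconditionedStep (rmsPreconditioner ε k (S k)) (rmsPreconditioner ε (k + 1) (S (k + 1)))
      (X k) (x k) (x (k + 1)) where
  nonneg _ := rmsPreconditioner_nonneg hε _
  le i := rmsPreconditioner_succ_le hε k <|
    (le_add_of_nonneg_right (sq_nonneg (X k i))).trans_eq (h.sum_succ k i).symm
  eq_sub := h.succ_eq_sub k

theorem sq_rmsPreconditioner_succ_mul_le (h : IsRMSPropRun ε x X S) (hε : 0 < ε) (k : ℕ) (i : ι) :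
    (rmsPreconditioner ε (k + 1) (S (k + 1)) i * X k i) ^ 2 ≤
      1 / ε ^ 2 * (1 / (k + 1) * X k i ^ 2) := by
  have step := h.isPreconditionedStep hε k
  rw [mul_pow, ← mul_assoc]
  gcongr
  exact (pow_le_pow_left₀ (step.nonneg i) (step.le i) 2).trans (sq_rmsPreconditioner_le hε k)

/-- The descent inequality of one coordinate, with the predictable preconditioner in the noise. -/
theorem neg_mul_add_mul_sq_le (h : IsRMSPropRun ε x X S) (hε : 0 < ε) (hL : 0 ≤ L) {k : ℕ} {i : ι}
    (hS : S k i ≤ R * (k + 1)) {b H : ℝ} (hb : |b| ≤ H) :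
    -(b * (rmsPreconditioner ε (k + 1) (S (k + 1)) i * X k i)) +
        L * (rmsPreconditioner ε (k + 1) (S (k + 1)) i * X k i) ^ 2 ≤
      -(1 / (√R + ε) * (1 / √(k + 1))) * b ^ 2 +
        (rmsPreconditioner ε k (S k) i * b * (b - X k i) +
          (H * (2 / ε ^ 2 + 1) + L * (1 / ε ^ 2)) * lagBound k (X k i)) := by
  have descent := mul_le_mul_of_nonneg_right (le_rmsPreconditioner hε k hS) (sq_nonneg b)
  have sq_step := mul_le_mul_of_nonneg_left (h.sq_rmsPreconditioner_succ_mul_le hε k i) hL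
  have le_lagBound : L * (1 / ε ^ 2 * (1 / (k + 1) * X k i ^ 2)) ≤
      L * (1 / ε ^ 2) * lagBound k (X k i) := by
    rw [mul_assoc L, lagBound]
    gcongr
    exact le_add_of_nonneg_right (by positivity)
  have lag : b * ((rmsPreconditioner ε k (S k) i -
      rmsPreconditioner ε (k + 1) (S (k + 1)) i) * X k i) ≤
      H * ((2 / ε ^ 2 + 1) * lagBound k (X k i)) := by
    refine (le_abs_self _).trans ?_
    rw [abs_mul]
    exact mul_le_mul hb (abs_rmsPreconditioner_sub_mul_le hε k (h.sum_succ k i)) (abs_nonneg _)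
      ((abs_nonneg b).trans hb)
  linarith

variable [Fintype ι]

theorem le_sub_add_sum (h : IsRMSPropRun ε x X S) (hg : IsSmoothObjective g L) (hε : 0 < ε)
    {k : ℕ} (hS : ∀ i, S k i ≤ R * (k + 1)) {B : ℝ} (hB : g (x k) ≤ B) :
    g (x (k + 1)) ≤ g (x k) - 1 / (√R + ε) * (1 / √(k + 1) * ‖gradient g (x k)‖ ^ 2) +
      ∑ i, (rmsPreconditioner ε k (S k) i * gradient g (x k) i * (gradient g (x k) i - X k i) +
        (√(4 * L * B) * (2 / ε ^ 2 + 1) + L * (1 / ε ^ 2)) * lagBound k (X k i)) := by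
  have step := h.isPreconditionedStep hε k
  have smooth := (abs_le.1 (hg.abs_sub_sub_inner_le (x k) (x (k + 1)))).2
  rw [step.inner_sub_eq, step.norm_sub_sq_eq] at smooth
  have coordinates := Finset.sum_le_sum fun i (_ : i ∈ Finset.univ) =>
    h.neg_mul_add_mul_sq_le hε hg.pos.le (hS i)
      ((PiLp.norm_apply_le (gradient g (x k)) i).trans (hg.norm_gradient_le_sqrt hB))
  rw [Finset.sum_add_distrib, Finset.sum_add_distrib, ← Finset.mul_sum, ← Finset.mul_sum,
    ← EuclideanSpace.real_norm_sq_eq] at coordinates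
  linarith

theorem norm_step_sub_le (h : IsRMSPropRun ε x X S) (hε : 0 < ε) (k : ℕ) :
    ‖x (k + 1) - x k - WithLp.toLp 2 fun i =>
        rmsPreconditioner ε k (S k) i * (gradient g (x k) i - X k i) +
        (rmsPreconditioner ε k (S k) i - rmsPreconditioner ε (k + 1) (S (k + 1)) i) * X k i‖ ≤
      1 / ε * (1 / √(k + 1) * ‖gradient g (x k)‖) := by
  refine le_of_sq_le_sq ?_ (by positivity)
  rw [EuclideanSpace.real_norm_sq_eq, ← mul_assoc, mul_pow,
    EuclideanSpace.real_norm_sq_eq (gradient g (x k)), Finset.mul_sum]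
  refine Finset.sum_le_sum fun i _ => ?_
  have coordinate : (x (k + 1) - x k - WithLp.toLp 2 fun i =>
      rmsPreconditioner ε k (S k) i * (gradient g (x k) i - X k i) +
      (rmsPreconditioner ε k (S k) i - rmsPreconditioner ε (k + 1) (S (k + 1)) i) * X k i) i =
      -(rmsPreconditioner ε k (S k) i * gradient g (x k) i) := by
    simp only [PiLp.sub_apply, h.succ_eq_sub]
    ring
  rw [coordinate, neg_sq, mul_pow, one_div_mul_one_div]
  gcongr
  exacts [rmsPreconditioner_nonneg hε k, rmsPreconditioner_le hε k]

theorem isPerturbedDescent (h : IsRMSPropRun ε x X S) (hg : IsSmoothObjective g L) (hε : 0 < ε)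
    {C : ℝ} (hSC : ∀ k i, S k i ≤ C * (k + 1))
    (hgate : ∀ R j : ℕ, GatedSeriesConverge g ε R (1 / (j + 1)) x X S) :
    IsPerturbedDescent g (fun k => 1 / √(k + 1)) x := by
  intro B ν hν
  obtain ⟨R, hR⟩ := exists_nat_ge (max B C)
  obtain ⟨j, hj⟩ := exists_nat_one_div_lt hν
  have hSR (k) (i) : S k i ≤ R * ((k : ℝ) + 1) := (hSC k i).trans (by
    gcongr
    exact (le_max_right B C).trans hR)
  have series := hgate R j
  set I : ℕ → ℝ := fun k => gate g R (1 / (j + 1)) k (x k) (S k)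
  have open_gate (k) (hB : g (x k) ≤ B) (hk : ν ≤ ‖gradient g (x k)‖) : I k = 1 :=
    gate_eq_one (hj.le.trans hk) (hB.trans ((le_max_left B C).trans hR)) (hSR k)
  have summable_lag (i) : Summable fun k => I k * ((rmsPreconditioner ε k (S k) i -
      rmsPreconditioner ε (k + 1) (S (k + 1)) i) * X k i) := by
    refine ((series.summable_lagBound i).mul_left (2 / ε ^ 2 + 1)).of_norm_bounded fun k => ?_
    rw [Real.norm_eq_abs, abs_mul, abs_of_nonneg gate_nonneg, mul_left_comm]
    exact mul_le_mul_of_nonneg_left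
      (abs_rmsPreconditioner_sub_mul_le hε k (h.sum_succ k i)) gate_nonneg
  refine ⟨fun k => WithLp.toLp 2 fun i =>
      I k * rmsPreconditioner ε k (S k) i * (gradient g (x k) i - X k i) +
      I k * ((rmsPreconditioner ε k (S k) i -
        rmsPreconditioner ε (k + 1) (S (k + 1)) i) * X k i),
    fun k => ∑ i, (I k * rmsPreconditioner ε k (S k) i * gradient g (x k) i *
        (gradient g (x k) i - X k i) +
      (√(4 * L * B) * (2 / ε ^ 2 + 1) + L * (1 / ε ^ 2)) * (I k * lagBound k (X k i))),
    1 / (√R + ε), 1 / ε, by positivity, by positivity,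
    cauchySeq_sum_of_coordinates fun i =>
      cauchySeq_sum_add (series.cauchySeq_noise i) (summable_lag i),
    cauchySeq_sum_sum fun i => cauchySeq_sum_add (series.cauchySeq_gradient_mul_noise i)
      ((series.summable_lagBound i).mul_left _),
    fun k hB hk => ⟨?_, ?_⟩⟩
  · simpa only [open_gate k hB hk, one_mul] using h.le_sub_add_sum hg hε (hSR k) hB
  · simpa only [open_gate k hB hk, one_mul] using h.norm_step_sub_le hε k

/-- Along the coordinates with a large gradient the gate is open, and along the others the
stochastic gradient is bounded. -/
theorem eventually_norm_step_le (h : IsRMSPropRun ε x X S) (hε : 0 < ε) {C δ₀ δ₁ : ℝ}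
    (hδ₀ : 0 < δ₀) (hSC : ∀ k i, S k i ≤ C * (k + 1))
    (hsharp : ∀ k i, |gradient g (x k) i| ≤ δ₀ → |X k i| ≤ δ₁)
    (hgate : ∀ R j : ℕ, GatedSeriesConverge g ε R (1 / (j + 1)) x X S) (B : ℝ) {η : ℝ}
    (hη : 0 < η) : ∀ᶠ k in atTop, g (x k) ≤ B → ‖x (k + 1) - x k‖ ≤ η := by
  obtain ⟨R, hR⟩ := exists_nat_ge (max B C)
  obtain ⟨j, hj⟩ := exists_nat_one_div_lt hδ₀
  set I : ℕ → ℝ := fun k => gate g R (1 / (j + 1)) k (x k) (S k)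
  have bound_tendsto : Tendsto (fun k : ℕ => ∑ i, 1 / ε ^ 2 * (1 / ((k : ℝ) + 1) * δ₁ ^ 2
      + I k * (1 / (k + 1)) * X k i ^ 2)) atTop (nhds 0) := by
    rw [← Finset.sum_const_zero (ι := ι) (s := Finset.univ)]
    refine tendsto_finsetSum _ fun i _ => ?_
    simpa only [zero_mul, zero_add, mul_zero] using
      ((tendsto_one_div_add_atTop_nhds_zero_nat.mul_const (δ₁ ^ 2)).add
        ((hgate R j).summable_sq i).tendsto_atTop_zero).const_mul (1 / ε ^ 2)
  filter_upwards [bound_tendsto.eventually_le_const (show 0 < η ^ 2 by positivity)] with k hk hB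
  refine le_of_sq_le_sq (le_trans ?_ hk) hη.le
  rw [(h.isPreconditionedStep hε k).norm_sub_sq_eq]
  refine Finset.sum_le_sum fun i _ => (h.sq_rmsPreconditioner_succ_mul_le hε k i).trans ?_
  gcongr
  rcases le_or_gt |gradient g (x k) i| δ₀ with small | large
  · calc 1 / ((k : ℝ) + 1) * X k i ^ 2 ≤ 1 / ((k : ℝ) + 1) * δ₁ ^ 2 := by
          rw [← sq_abs]
          gcongr
          exact hsharp k i small
      _ ≤ _ := le_add_of_nonneg_right
          (mul_nonneg (mul_nonneg gate_nonneg (by positivity)) (sq_nonneg _))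
  · have open_gate : I k = 1 := gate_eq_one
      ((hj.trans large).le.trans (PiLp.norm_apply_le (gradient g (x k)) i))
      (hB.trans ((le_max_left B C).trans hR)) fun i => (hSC k i).trans (by
        gcongr
        exact (le_max_right B C).trans hR)
    rw [open_gate, one_mul]
    exact le_add_of_nonneg_left (by positivity)

end IsRMSPropRun

/-! ### Energy bounds for RMSProp -/

theorem le_div_sq_mul_sq {c ν b : ℝ} (hc : 0 ≤ c) (hν : 0 < ν) (h : ν ≤ |b|) :
    c ≤ c / ν ^ 2 * b ^ 2 := by
  rw [div_mul_eq_mul_div, le_div_iff₀ (by positivity), ← sq_abs b]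
  gcongr

theorem affine_moment_le {σ₀ σ₁ ν b : ℝ} (hσ₁ : 0 ≤ σ₁) (hν : 0 < ν) (h : ν ≤ |b|) :
    σ₀ * b ^ 2 + σ₁ ≤ (σ₀ + σ₁ / ν ^ 2) * b ^ 2 := by
  linarith [le_div_sq_mul_sq hσ₁ hν h]

theorem one_div_succ_eq (k : ℕ) : 1 / ((k : ℝ) + 1) = 1 / √(k + 1) * (1 / √(k + 1)) := by
  rw [div_mul_div_comm, Real.mul_self_sqrt (by positivity), one_mul]

section Energy

variable {ι : Type*} [Fintype ι] {ε : ℝ} {k : ℕ} {s : ι → ℝ}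

theorem rmsPreconditioner_energy_nonneg (hε : 0 < ε) (b : ι → ℝ) :
    0 ≤ 1 / √((k : ℝ) + 1) * ∑ i, rmsPreconditioner ε k s i * b i ^ 2 :=
  mul_nonneg (by positivity) (Finset.sum_nonneg fun _ _ =>
    mul_nonneg (rmsPreconditioner_nonneg hε k) (sq_nonneg _))

theorem rmsPreconditioner_mul_sq_le_energy (hε : 0 < ε) (b : ι → ℝ) (i : ι) :
    1 / √((k : ℝ) + 1) * (rmsPreconditioner ε k s i * b i ^ 2) ≤
      1 / √((k : ℝ) + 1) * ∑ i, rmsPreconditioner ε k s i * b i ^ 2 := by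
  gcongr
  exact Finset.single_le_sum (f := fun i => rmsPreconditioner ε k s i * b i ^ 2)
    (fun i _ => mul_nonneg (rmsPreconditioner_nonneg hε k) (sq_nonneg _)) (Finset.mem_univ i)

theorem one_div_succ_mul_norm_sq_le (hε : 0 < ε) {C : ℝ} (hs : ∀ i, s i ≤ C * (k + 1))
    (b : EuclideanSpace ℝ ι) :
    1 / ((k : ℝ) + 1) * ‖b‖ ^ 2 ≤
      (√C + ε) * (1 / √(k + 1) * ∑ i, rmsPreconditioner ε k s i * b i ^ 2) := by
  have coordinates : 1 / √((k : ℝ) + 1) * (1 / (√C + ε)) * ‖b‖ ^ 2 ≤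
      ∑ i, rmsPreconditioner ε k s i * b i ^ 2 := by
    rw [EuclideanSpace.real_norm_sq_eq, Finset.mul_sum]
    gcongr with i
    exact le_rmsPreconditioner hε k (hs i)
  calc 1 / ((k : ℝ) + 1) * ‖b‖ ^ 2
      = (√C + ε) * (1 / √(k + 1) * (1 / √(k + 1) * (1 / (√C + ε)) * ‖b‖ ^ 2)) := by
        rw [one_div_succ_eq]
        field_simp
    _ ≤ _ := by gcongr

variable {g : EuclideanSpace ℝ ι → ℝ} {R ν : ℝ} {y : EuclideanSpace ℝ ι}

theorem gate_sq : gate g R ν k y s ^ 2 = gate g R ν k y s := by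
  unfold gate
  split_ifs <;> norm_num

theorem gate_mul_moment_le {σ₀ σ₁ : ℝ} (hε : 0 < ε) (hν : 0 < ν) (hσ₀ : 0 ≤ σ₀) (hσ₁ : 0 ≤ σ₁)
    (i : ι) :
    gate g R ν k y s * (1 / (k + 1)) * (σ₀ * gradient g y i ^ 2 + σ₁) ≤
      (σ₀ + σ₁ / ν ^ 2) * (√R + ε) *
        (1 / √(k + 1) * ∑ i, rmsPreconditioner ε k s i * gradient g y i ^ 2) := by
  unfold gate
  split_ifs with hgate
  · have moment_le : σ₀ * gradient g y i ^ 2 + σ₁ ≤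
        (σ₀ + σ₁ / ν ^ 2) * ‖gradient g y‖ ^ 2 :=
      (add_le_add_left (mul_le_mul_of_nonneg_left (sq_apply_le_norm_sq _ i) hσ₀) σ₁).trans
        (affine_moment_le hσ₁ hν (hgate.1.trans_eq (abs_norm _).symm))
    have energy_ge := one_div_succ_mul_norm_sq_le hε hgate.2.2 (gradient g y)
    calc 1 * (1 / ((k : ℝ) + 1)) * (σ₀ * gradient g y i ^ 2 + σ₁)
        ≤ 1 * (1 / ((k : ℝ) + 1)) * ((σ₀ + σ₁ / ν ^ 2) * ‖gradient g y‖ ^ 2) := by gcongr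
      _ = (σ₀ + σ₁ / ν ^ 2) * (1 / ((k : ℝ) + 1) * ‖gradient g y‖ ^ 2) := by ring
      _ ≤ _ := by
        rw [mul_assoc (σ₀ + σ₁ / ν ^ 2)]
        gcongr
  · rw [zero_mul, zero_mul]
    exact mul_nonneg (by positivity) (rmsPreconditioner_energy_nonneg hε _)

theorem sq_gate_mul_rmsPreconditioner_mul_le (hε : 0 < ε) {p H : ℝ}
    (hp : g y ≤ R → p ^ 2 ≤ H) (i : ι) :
    (gate g R ν k y s * rmsPreconditioner ε k s i * p) ^ 2 ≤
      H / ε ^ 2 * (gate g R ν k y s * (1 / (k + 1))) := by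
  rw [mul_pow, mul_pow, gate_sq]
  unfold gate
  split_ifs with hgate
  · have := mul_le_mul (sq_rmsPreconditioner_le (s := s) (i := i) hε k) (hp hgate.2.1)
      (sq_nonneg _) (by positivity)
    rw [one_mul, one_mul]
    exact this.trans_eq (by ring)
  · simp

end Energy

theorem not_summable_one_div_succ : ¬ Summable fun k : ℕ => 1 / ((k : ℝ) + 1) := fun h =>
  Real.not_summable_one_div_natCast ((summable_nat_add_iff 1).1 (by simpa using h))

theorem not_summable_one_div_sqrt_succ : ¬ Summable fun k : ℕ => 1 / √((k : ℝ) + 1) := fun h =>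
  not_summable_one_div_succ (h.of_nonneg_of_le (fun k => by positivity) fun k => by
    gcongr
    exact Real.sqrt_le_self_iff.2 (.inr (by linarith [k.cast_nonneg (α := ℝ)])))

theorem frequently_le_of_summable_energy {ι : Type*} [Fintype ι] {g : EuclideanSpace ℝ ι → ℝ}
    {ε C δ K : ℝ} (hε : 0 < ε) (hδ : 0 < δ) (hK : ∀ y, K ≤ g y → δ ≤ ‖gradient g y‖)
    {x : ℕ → EuclideanSpace ℝ ι} {S : ℕ → ι → ℝ} (hS : ∀ k i, S k i ≤ C * (k + 1))
    (hs : Summable fun k : ℕ =>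
      1 / √((k : ℝ) + 1) * ∑ i, rmsPreconditioner ε k (S k) i * gradient g (x k) i ^ 2) :
    ∃ᶠ k in atTop, g (x k) ≤ K := by
  intro above
  refine not_summable_one_div_succ ((summable_mul_right_iff (pow_pos hδ 2).ne').1
    ((hs.mul_left (√C + ε)).of_norm_bounded_eventually_nat ?_))
  filter_upwards [above] with k hk
  rw [Real.norm_of_nonneg (by positivity)]
  refine le_trans ?_ (one_div_succ_mul_norm_sq_le hε (hS k) _)
  gcongr
  exact hK _ (not_le.1 hk).le

/-- If the large increments are summable relative to the preconditioner, then a discrete Grönwall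
argument shows that the averaged squared stochastic gradients are bounded. -/
theorem exists_forall_le_mul_succ {s ξ : ℕ → ℝ} {ε c : ℝ} (hε : 0 ≤ ε) (hc : 0 ≤ c)
    (hs0 : ∀ k, 0 ≤ s k) (hξ0 : ∀ k, 0 ≤ ξ k) (hξ : Summable ξ)
    (hs : ∀ k : ℕ, s (k + 1) ≤ s k + (c + ξ k * (√(k + 1) * (√(s k) + ε * √(k + 1))))) :
    ∃ C, ∀ k : ℕ, s k ≤ C * (k + 1) := by
  have weight_le (k : ℕ) :
      √(k + 1) * (√(s k) + ε * √(k + 1)) ≤ s k + (1 + ε) * (k + 1) := by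
    have sq_succ : √((k : ℝ) + 1) ^ 2 = k + 1 := Real.sq_sqrt (by positivity)
    have sq_s : √(s k) ^ 2 = s k := Real.sq_sqrt (hs0 k)
    nlinarith [sq_nonneg (√((k : ℝ) + 1) - √(s k)), hs0 k]
  have growth (k : ℕ) : s (k + 1) + (1 + ε) * ((k + 1 : ℕ) + 1) ≤
      (1 + ξ k) * (s k + (1 + ε) * (k + 1)) + (c + 1 + ε) := by
    have := mul_le_mul_of_nonneg_left (weight_le k) (hξ0 k)
    push_cast
    linarith [hs k]
  set B := s 0 + (1 + ε) * ((0 : ℕ) + 1)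
  have hB : 0 ≤ B := add_nonneg (hs0 0) (by positivity)
  refine ⟨(B + (c + 1 + ε)) * Real.exp (∑' k, ξ k), fun n => ?_⟩
  have gronwall := discrete_gronwall (n₀ := 0) (u := fun k : ℕ => s k + (1 + ε) * (k + 1))
    hB (fun k _ => growth k) (fun k _ => hξ0 k) (fun _ _ => by positivity) n.zero_le
  rw [Finset.sum_const, Nat.card_Ico, Nat.sub_zero, nsmul_eq_mul, ← Finset.range_eq_Ico] at gronwall
  have exp_le : Real.exp (∑ k ∈ Finset.range n, ξ k) ≤ Real.exp (∑' k, ξ k) :=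
    Real.exp_le_exp.2 (hξ.sum_le_tsum _ fun k _ => hξ0 k)
  calc s n ≤ s n + (1 + ε) * (n + 1) := le_add_of_nonneg_right (by positivity)
    _ ≤ (B + n * (c + 1 + ε)) * Real.exp (∑' k, ξ k) := gronwall.trans (by gcongr)
    _ ≤ (B + (c + 1 + ε)) * (n + 1) * Real.exp (∑' k, ξ k) := by
        gcongr
        nlinarith [n.cast_nonneg (α := ℝ), mul_nonneg hB n.cast_nonneg]
    _ = (B + (c + 1 + ε)) * Real.exp (∑' k, ξ k) * (n + 1) := by ring

/-! ### Almost sure behaviour of RMSProp -/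

namespace IsPreconditionedSGD

variable {ι : Type*} [Fintype ι] {Ω : Type*} {m0 : MeasurableSpace Ω} {P : Measure Ω}
  [IsProbabilityMeasure P] {ℱ : Filtration ℕ m0} {g : EuclideanSpace ℝ ι → ℝ} {L σ₀ σ₁ ε : ℝ}
  {x : ℕ → Ω → EuclideanSpace ℝ ι} {X A : ℕ → Ω → ι → ℝ}

theorem integrable_const_mul_energy (h : IsPreconditionedSGD P ℱ g σ₀ σ₁ ε x X A)
    (hg : Continuous (gradient g)) (C : ℝ) (k : ℕ) :
    Integrable (fun ω =>
      C * (1 / √((k : ℝ) + 1) * ∑ i, A k ω i * gradient g (x k ω) i ^ 2)) P :=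
  (((h.boundedMeasurable_energy hg k).integrable (ℱ.le k)).const_mul _).const_mul _

theorem summable_integral_const_mul_energy (h : IsPreconditionedSGD P ℱ g σ₀ σ₁ ε x X A)
    (hg : IsSmoothObjective g L) (hσ₀ : 0 ≤ σ₀) (hσ₁ : 0 < σ₁) (hε : 0 < ε) (C : ℝ) :
    Summable fun k : ℕ =>
      ∫ ω, C * (1 / √((k : ℝ) + 1) * ∑ i, A k ω i * gradient g (x k ω) i ^ 2) ∂P := by
  simp only [integral_const_mul]
  exact (h.summable_integral_energy hg hσ₀ hσ₁ hε).mul_left C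

theorem ae_summable_energy (h : IsPreconditionedSGD P ℱ g σ₀ σ₁ ε x X A)
    (hg : IsSmoothObjective g L) (hσ₀ : 0 ≤ σ₀) (hσ₁ : 0 < σ₁) (hε : 0 < ε) :
    ∀ᵐ ω ∂P, Summable fun k : ℕ =>
      1 / √((k : ℝ) + 1) * ∑ i, A k ω i * gradient g (x k ω) i ^ 2 := by
  simpa only [one_mul] using ae_summable_of_summable_integral
    (h.integrable_const_mul_energy hg.continuous_gradient 1)
    (fun k ω => by have := h.energy_nonneg k ω; positivity)
    (h.summable_integral_const_mul_energy hg hσ₀ hσ₁ hε 1)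

theorem ae_summable_mul_sq_of_le_energy (h : IsPreconditionedSGD P ℱ g σ₀ σ₁ ε x X A)
    (hg : IsSmoothObjective g L) (hσ₀ : 0 ≤ σ₀) (hσ₁ : 0 < σ₁) (hε : 0 < ε) (i : ι)
    {f : ℕ → Ω → ℝ} (hf : ∀ k, BoundedMeasurable (ℱ k) (f k)) (hf0 : ∀ k ω, 0 ≤ f k ω) {C : ℝ}
    (hfC : ∀ k ω, f k ω * (σ₀ * gradient g (x k ω) i ^ 2 + σ₁) ≤
      C * (1 / √((k : ℝ) + 1) * ∑ i, A k ω i * gradient g (x k ω) i ^ 2)) :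
    ∀ᵐ ω ∂P, Summable fun k => f k ω * X k ω i ^ 2 :=
  h.ae_summable_mul_sq hg.continuous_gradient i hf hf0
    (h.integrable_const_mul_energy hg.continuous_gradient C) hfC
    (h.summable_integral_const_mul_energy hg hσ₀ hσ₁ hε C)

theorem ae_cauchySeq_noise_of_le_energy (h : IsPreconditionedSGD P ℱ g σ₀ σ₁ ε x X A)
    (hg : IsSmoothObjective g L) (hσ₀ : 0 ≤ σ₀) (hσ₁ : 0 < σ₁) (hε : 0 < ε) (i : ι)
    {f : ℕ → Ω → ℝ} (hf : ∀ k, BoundedMeasurable (ℱ k) (f k)) {C : ℝ}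
    (hfC : ∀ k ω, f k ω ^ 2 * (σ₀ * gradient g (x k ω) i ^ 2 + σ₁) ≤
      C * (1 / √((k : ℝ) + 1) * ∑ i, A k ω i * gradient g (x k ω) i ^ 2)) :
    ∀ᵐ ω ∂P, CauchySeq fun n =>
      ∑ k ∈ Finset.range n, f k ω * (gradient g (x k ω) i - X k ω i) :=
  h.ae_cauchySeq_noise hg.continuous_gradient i hf
    (h.integrable_const_mul_energy hg.continuous_gradient C) hfC
    (h.summable_integral_const_mul_energy hg hσ₀ hσ₁ hε C)

end IsPreconditionedSGD

/-- RMSProp with unbiased stochastic gradients `X k` of coordinate-wise affine variance, adapted to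
the filtration `ℱ` and started at a bounded random point; `S k` is the accumulated sum of squared
stochastic gradients, as in `IsRMSPropRun`. -/
structure IsRMSProp {ι : Type*} [Fintype ι] {Ω : Type*} {m0 : MeasurableSpace Ω} (P : Measure Ω)
    (ℱ : Filtration ℕ m0) (g : EuclideanSpace ℝ ι → ℝ) (σ₀ σ₁ ε : ℝ)
    (x : ℕ → Ω → EuclideanSpace ℝ ι) (X S : ℕ → Ω → ι → ℝ) : Prop where
  x_meas : ∀ k, StronglyMeasurable[ℱ k] (x k)
  S_zero_meas : ∀ i, StronglyMeasurable[ℱ 0] fun ω => S 0 ω i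
  X_meas : ∀ k i, StronglyMeasurable[ℱ (k + 1)] fun ω => X k ω i
  integrable_X_sq : ∀ k i, Integrable (fun ω => X k ω i ^ 2) P
  isRMSPropRun : ∀ ω, IsRMSPropRun ε (fun k => x k ω) (fun k => X k ω) (fun k => S k ω)
  exists_norm_zero_le : ∃ B, ∀ ω, ‖x 0 ω‖ ≤ B
  unbiased : ∀ k i, P[fun ω => X k ω i | ℱ k] =ᵐ[P] fun ω => gradient g (x k ω) i
  second_moment_le : ∀ k i, P[fun ω => X k ω i ^ 2 | ℱ k] ≤ᵐ[P]
    fun ω => σ₀ * gradient g (x k ω) i ^ 2 + σ₁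

namespace IsRMSProp

variable {ι : Type*} [Fintype ι] {Ω : Type*} {m0 : MeasurableSpace Ω} {P : Measure Ω}
  {ℱ : Filtration ℕ m0} {g : EuclideanSpace ℝ ι → ℝ} {L σ₀ σ₁ ε δ₀ δ₁ : ℝ}
  {x : ℕ → Ω → EuclideanSpace ℝ ι} {X S : ℕ → Ω → ι → ℝ}

theorem S_meas (h : IsRMSProp P ℱ g σ₀ σ₁ ε x X S) (k : ℕ) (i : ι) :
    StronglyMeasurable[ℱ k] fun ω => S k ω i := by
  induction k with
  | zero => exact h.S_zero_meas i
  | succ k ih =>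
    simp only [fun ω => (h.isRMSPropRun ω).sum_succ k i]
    exact (ih.mono (ℱ.mono k.le_succ)).add ((h.X_meas k i).pow 2)

theorem isPreconditionedSGD (h : IsRMSProp P ℱ g σ₀ σ₁ ε x X S) (hε : 0 < ε) :
    IsPreconditionedSGD P ℱ g σ₀ σ₁ ε x X fun k ω => rmsPreconditioner ε k (S k ω) where
  x_meas := h.x_meas
  A_meas k i := by
    unfold rmsPreconditioner
    exact (((h.S_meas k i).measurable.sqrt.add_const _).const_div 1).stronglyMeasurable
  X_meas := h.X_meas
  integrable_X_sq := h.integrable_X_sq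
  isPreconditionedStep k ω := (h.isRMSPropRun ω).isPreconditionedStep hε k
  A_le k _ _ := rmsPreconditioner_le hε k
  abs_mul_le_one k ω i := abs_rmsPreconditioner_mul_le_one hε (k + 1) <|
    (le_add_of_nonneg_left ((h.isRMSPropRun ω).sum_nonneg k i)).trans_eq
      ((h.isRMSPropRun ω).sum_succ k i).symm
  exists_norm_zero_le := h.exists_norm_zero_le
  unbiased := h.unbiased
  second_moment_le := h.second_moment_le

theorem boundedMeasurable_gate (h : IsRMSProp P ℱ g σ₀ σ₁ ε x X S) (hg : Continuous g)
    (hg' : Continuous (gradient g)) (R ν : ℝ) (k : ℕ) :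
    BoundedMeasurable (ℱ k) fun ω => gate g R ν k (x k ω) (S k ω) := by
  have gradient_meas := (hg'.norm.comp_stronglyMeasurable (h.x_meas k)).measurable
  have objective_meas := (hg.comp_stronglyMeasurable (h.x_meas k)).measurable
  have sum_meas : MeasurableSet[ℱ k] {ω | ∀ i, S k ω i ≤ R * (k + 1)} := by
    rw [Set.ofPred_forall]
    exact .iInter fun i => measurableSet_le (h.S_meas k i).measurable measurable_const
  have gate_meas : MeasurableSet[ℱ k] {ω | ν ≤ ‖gradient g (x k ω)‖ ∧ g (x k ω) ≤ R ∧
      ∀ i, S k ω i ≤ R * (k + 1)} :=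
    (measurableSet_le measurable_const gradient_meas).inter
      ((measurableSet_le objective_meas measurable_const).inter sum_meas)
  exact ⟨(stronglyMeasurable_const.ite gate_meas stronglyMeasurable_const), 1, fun ω =>
    (abs_of_nonneg gate_nonneg).trans_le gate_le_one⟩

variable [IsProbabilityMeasure P]

theorem ae_summable_indicator_mul_sq (h : IsRMSProp P ℱ g σ₀ σ₁ ε x X S)
    (hg : IsSmoothObjective g L) (hσ₀ : 0 ≤ σ₀) (hσ₁ : 0 < σ₁) (hε : 0 < ε) (hδ₀ : 0 < δ₀) (i : ι) :
    ∀ᵐ ω ∂P, Summable fun k => {ω | δ₀ < |gradient g (x k ω) i|}.indicator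
      (fun ω => 1 / √((k : ℝ) + 1) * rmsPreconditioner ε k (S k ω) i) ω * X k ω i ^ 2 := by
  have hsgd := h.isPreconditionedSGD hε
  have abs_gradient_meas (k : ℕ) := (hsgd.boundedMeasurable_comp k
    (φ := fun y => |gradient g y i|) (by have := hg.continuous_gradient; fun_prop)).1.measurable
  have weight_nonneg (k : ℕ) (ω : Ω) :
      0 ≤ 1 / √((k : ℝ) + 1) * rmsPreconditioner ε k (S k ω) i :=
    mul_nonneg (by positivity) (rmsPreconditioner_nonneg hε k)
  refine hsgd.ae_summable_mul_sq_of_le_energy hg hσ₀ hσ₁ hε i (C := σ₀ + σ₁ / δ₀ ^ 2)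
    (fun k => ((BoundedMeasurable.const _).mul (hsgd.boundedMeasurable_A k i)).indicator
      (measurableSet_lt measurable_const (abs_gradient_meas k)))
    (fun k ω => Set.indicator_nonneg (fun ω _ => weight_nonneg k ω) ω) fun k ω => ?_
  by_cases hω : ω ∈ {ω | δ₀ < |gradient g (x k ω) i|}
  · rw [Set.indicator_of_mem hω]
    calc 1 / √((k : ℝ) + 1) * rmsPreconditioner ε k (S k ω) i *
          (σ₀ * gradient g (x k ω) i ^ 2 + σ₁)
        ≤ 1 / √((k : ℝ) + 1) * rmsPreconditioner ε k (S k ω) i *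
          ((σ₀ + σ₁ / δ₀ ^ 2) * gradient g (x k ω) i ^ 2) :=
          mul_le_mul_of_nonneg_left (affine_moment_le hσ₁.le hδ₀ (le_of_lt hω))
            (weight_nonneg k ω)
      _ = (σ₀ + σ₁ / δ₀ ^ 2) * (1 / √((k : ℝ) + 1) *
          (rmsPreconditioner ε k (S k ω) i * gradient g (x k ω) i ^ 2)) := by ring
      _ ≤ _ := mul_le_mul_of_nonneg_left (rmsPreconditioner_mul_sq_le_energy hε _ i)
          (by positivity)
  · rw [Set.indicator_of_notMem hω, zero_mul]
    exact mul_nonneg (by positivity) (rmsPreconditioner_energy_nonneg hε _)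

theorem ae_exists_forall_le_mul_succ (h : IsRMSProp P ℱ g σ₀ σ₁ ε x X S)
    (hg : IsSmoothObjective g L) (hσ₀ : 0 ≤ σ₀) (hσ₁ : 0 < σ₁) (hε : 0 < ε) (hδ₀ : 0 < δ₀)
    (hsharp : ∀ᵐ ω ∂P, ∀ k i, |gradient g (x k ω) i| ≤ δ₀ → |X k ω i| ≤ δ₁) (i : ι) :
    ∀ᵐ ω ∂P, ∃ C, ∀ k : ℕ, S k ω i ≤ C * (k + 1) := by
  filter_upwards [h.ae_summable_indicator_mul_sq hg hσ₀ hσ₁ hε hδ₀ i, hsharp] with ω hsum hsharp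
  have hrun := h.isRMSPropRun ω
  refine exists_forall_le_mul_succ (c := δ₁ ^ 2) hε.le (sq_nonneg _)
    (fun k => hrun.sum_nonneg k i)
    (fun k => mul_nonneg (Set.indicator_nonneg (fun ω _ => mul_nonneg (by positivity)
      (rmsPreconditioner_nonneg hε k)) ω) (sq_nonneg _)) hsum fun k => ?_
  rw [hrun.sum_succ]
  gcongr
  by_cases hω : ω ∈ {ω | δ₀ < |gradient g (x k ω) i|}
  · refine le_add_of_nonneg_of_le (sq_nonneg _) (le_of_eq ?_)
    rw [Set.indicator_of_mem hω, rmsPreconditioner]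
    have : 0 < √(S k ω i) + ε * √((k : ℝ) + 1) := by positivity
    field_simp
  · rw [Set.indicator_of_notMem hω, zero_mul, zero_mul, add_zero, ← sq_abs]
    exact pow_le_pow_left₀ (abs_nonneg _) (hsharp k i (not_lt.1 hω)) 2

theorem ae_exists_forall_forall_le_mul_succ (h : IsRMSProp P ℱ g σ₀ σ₁ ε x X S)
    (hg : IsSmoothObjective g L) (hσ₀ : 0 ≤ σ₀) (hσ₁ : 0 < σ₁) (hε : 0 < ε) (hδ₀ : 0 < δ₀)
    (hsharp : ∀ᵐ ω ∂P, ∀ k i, |gradient g (x k ω) i| ≤ δ₀ → |X k ω i| ≤ δ₁) :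
    ∀ᵐ ω ∂P, ∃ C, ∀ k i, S k ω i ≤ C * ((k : ℝ) + 1) := by
  filter_upwards [ae_all_iff.2 fun i =>
    h.ae_exists_forall_le_mul_succ hg hσ₀ hσ₁ hε hδ₀ hsharp i] with ω hω
  choose C hC using hω
  refine ⟨∑ i, |C i|, fun k i => (hC i k).trans (mul_le_mul_of_nonneg_right ?_ (by positivity))⟩
  exact (le_abs_self _).trans
    (Finset.single_le_sum (f := fun i => |C i|) (fun i _ => abs_nonneg _) (Finset.mem_univ i))

theorem ae_summable_gate_mul_sq (h : IsRMSProp P ℱ g σ₀ σ₁ ε x X S)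
    (hg : IsSmoothObjective g L) (hσ₀ : 0 ≤ σ₀) (hσ₁ : 0 < σ₁) (hε : 0 < ε) (R : ℝ) {ν : ℝ}
    (hν : 0 < ν) (i : ι) :
    ∀ᵐ ω ∂P, Summable fun k : ℕ =>
      gate g R ν k (x k ω) (S k ω) * (1 / (k + 1)) * X k ω i ^ 2 :=
  (h.isPreconditionedSGD hε).ae_summable_mul_sq_of_le_energy hg hσ₀ hσ₁ hε i
    (fun k => (h.boundedMeasurable_gate hg.differentiable.continuous hg.continuous_gradient
      R ν k).mul (.const _))
    (fun _ _ => mul_nonneg gate_nonneg (by positivity))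
    fun _ _ => gate_mul_moment_le hε hν hσ₀ hσ₁.le i

theorem ae_cauchySeq_gate_noise (h : IsRMSProp P ℱ g σ₀ σ₁ ε x X S)
    (hg : IsSmoothObjective g L) (hσ₀ : 0 ≤ σ₀) (hσ₁ : 0 < σ₁) (hε : 0 < ε) (R : ℝ) {ν : ℝ}
    (hν : 0 < ν) (i : ι) {p : ℕ → Ω → ℝ} (hp : ∀ k, BoundedMeasurable (ℱ k) (p k)) {H : ℝ}
    (hH : 0 ≤ H) (hpH : ∀ k ω, g (x k ω) ≤ R → p k ω ^ 2 ≤ H) :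
    ∀ᵐ ω ∂P, CauchySeq fun n => ∑ k ∈ Finset.range n,
      gate g R ν k (x k ω) (S k ω) * rmsPreconditioner ε k (S k ω) i * p k ω
        * (gradient g (x k ω) i - X k ω i) := by
  have hsgd := h.isPreconditionedSGD hε
  refine hsgd.ae_cauchySeq_noise_of_le_energy hg hσ₀ hσ₁ hε i
    (C := H / ε ^ 2 * ((σ₀ + σ₁ / ν ^ 2) * (√R + ε)))
    (fun k => ((h.boundedMeasurable_gate hg.differentiable.continuous hg.continuous_gradient
      R ν k).mul (hsgd.boundedMeasurable_A k i)).mul (hp k)) fun k ω => ?_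
  calc (gate g R ν k (x k ω) (S k ω) * rmsPreconditioner ε k (S k ω) i * p k ω) ^ 2
        * (σ₀ * gradient g (x k ω) i ^ 2 + σ₁)
      ≤ H / ε ^ 2 * (gate g R ν k (x k ω) (S k ω) * (1 / (k + 1)))
        * (σ₀ * gradient g (x k ω) i ^ 2 + σ₁) :=
        mul_le_mul_of_nonneg_right (sq_gate_mul_rmsPreconditioner_mul_le hε (hpH k ω) i)
          (by positivity)
    _ ≤ _ := by
        rw [mul_assoc, mul_assoc (H / ε ^ 2)]
        exact mul_le_mul_of_nonneg_left (gate_mul_moment_le hε hν hσ₀ hσ₁.le i) (by positivity)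

theorem ae_gatedSeriesConverge (h : IsRMSProp P ℱ g σ₀ σ₁ ε x X S)
    (hg : IsSmoothObjective g L) (hσ₀ : 0 ≤ σ₀) (hσ₁ : 0 < σ₁) (hε : 0 < ε) :
    ∀ᵐ ω ∂P, ∀ R j : ℕ, GatedSeriesConverge g ε R (1 / (j + 1))
      (fun k => x k ω) (fun k => X k ω) (fun k => S k ω) := by
  simp only [ae_all_iff]
  intro R j
  have hL := hg.pos
  have hν : 0 < 1 / ((j : ℝ) + 1) := by positivity
  filter_upwards [
    ae_all_iff.2 fun i => h.ae_cauchySeq_gate_noise hg hσ₀ hσ₁ hε R hν i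
      (fun _ => .const 1) zero_le_one fun _ _ _ => (one_pow 2).le,
    ae_all_iff.2 fun i => h.ae_cauchySeq_gate_noise hg hσ₀ hσ₁ hε R hν i
      ((h.isPreconditionedSGD hε).boundedMeasurable_gradient hg.continuous_gradient · i)
      (H := 4 * L * R) (by positivity)
      fun k ω hR => ((sq_apply_le_norm_sq _ i).trans (hg.norm_gradient_sq_le _)).trans
        (by gcongr),
    ae_all_iff.2 fun i => h.ae_summable_gate_mul_sq hg hσ₀ hσ₁ hε R hν i]
    with ω noise gradient_noise squares
  exact ⟨by simpa only [mul_one] using noise, gradient_noise, squares⟩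

theorem ae_tendsto_gradient [Nonempty ι] (h : IsRMSProp P ℱ g σ₀ σ₁ ε x X S)
    (hg : IsSmoothObjective g L) (hσ₀ : 0 ≤ σ₀) (hσ₁ : 0 < σ₁) (hε : 0 < ε) (hδ₀ : 0 < δ₀)
    (hsharp : ∀ᵐ ω ∂P, ∀ k i, |gradient g (x k ω) i| ≤ δ₀ → |X k ω i| ≤ δ₁) {δ : ℝ} (hδ : 0 < δ)
    (hflat : ∀ᶠ y in Bornology.cobounded (EuclideanSpace ℝ ι), ∀ i, δ ≤ |gradient g y i|)
    (hcoer : Tendsto g (Bornology.cobounded (EuclideanSpace ℝ ι)) atTop)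
    (hsard : IsNowhereDense (g '' {y | gradient g y = 0})) :
    ∀ᵐ ω ∂P, Tendsto (fun k => gradient g (x k ω)) atTop (nhds 0) := by
  obtain ⟨K, -, hK⟩ := exists_forall_le_imp_of_cobounded hg.differentiable.continuous hflat
  have le_norm (y) (hy : K ≤ g y) : δ ≤ ‖gradient g y‖ :=
    (hK y hy (Classical.arbitrary ι)).trans (PiLp.norm_apply_le (gradient g y) _)
  filter_upwards [h.ae_gatedSeriesConverge hg hσ₀ hσ₁ hε, hsharp,
    (h.isPreconditionedSGD hε).ae_summable_energy hg hσ₀ hσ₁ hε,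
    h.ae_exists_forall_forall_le_mul_succ hg hσ₀ hσ₁ hε hδ₀ hsharp]
    with ω hgate hsharp henergy ⟨C, hC⟩
  have hrun := h.isRMSPropRun ω
  have hdescent := hrun.isPerturbedDescent hg hε hC hgate
  have hrecurrent := frequently_le_of_summable_energy hε hδ le_norm hC henergy
  obtain ⟨ℓ, hℓ⟩ := hdescent.exists_tendsto (fun k => by positivity) hg hcoer
    (fun R η hη => hrun.eventually_norm_step_le hε hδ₀ hC hsharp hgate R hη) hsard hrecurrent
  exact hdescent.tendsto_gradient (fun k => by positivity) not_summable_one_div_sqrt_succ hg hℓ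

end IsRMSProp

section Truncation

variable {Ω : Type*} {m0 : MeasurableSpace Ω} {P : Measure Ω} [IsFiniteMeasure P]
  {y : ℕ → Ω → ℝ}

theorem tendsto_integral_min_of_ae_tendsto_zero (hy : ∀ k, AEStronglyMeasurable (y k) P)
    (hy0 : ∀ k ω, 0 ≤ y k ω) (hlim : ∀ᵐ ω ∂P, Tendsto (fun k => y k ω) atTop (nhds 0)) {M : ℝ}
    (hM : 0 ≤ M) : Tendsto (fun k => ∫ ω, min (y k ω) M ∂P) atTop (nhds 0) := by
  have := tendsto_integral_of_dominated_convergence (μ := P) (f := fun _ => (0 : ℝ))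
    (F := fun k ω => min (y k ω) M) (fun _ => M)
    (fun k => (hy k).inf aestronglyMeasurable_const) (integrable_const M)
    (fun k => Eventually.of_forall fun ω =>
      (Real.norm_of_nonneg (le_min (hy0 k ω) hM)).trans_le (min_le_right _ _))
    (by
      filter_upwards [hlim] with ω hω
      simpa only [min_eq_left hM] using hω.min (tendsto_const_nhds (x := M)))
  simpa only [integral_zero] using this

theorem le_min_add_sq {a M : ℝ} (ha : 0 ≤ a) (hM : 0 < M) : a ≤ min a M + 1 / M * a ^ 2 := by
  rcases le_total a M with h | h
  · rw [min_eq_left h]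
    exact le_add_of_nonneg_right (by positivity)
  · refine le_add_of_nonneg_of_le (le_min ha hM.le) ?_
    rw [one_div_mul_eq_div, le_div_iff₀ hM, pow_two]
    gcongr

/-- A bound on the second moments gives uniform integrability, so that almost sure convergence
implies convergence of the means. -/
theorem tendsto_integral_of_ae_tendsto_zero_of_integral_sq_le (hy : ∀ k, MemLp (y k) 2 P)
    (hy0 : ∀ k ω, 0 ≤ y k ω) (hlim : ∀ᵐ ω ∂P, Tendsto (fun k => y k ω) atTop (nhds 0)) {C : ℝ}
    (hC : ∀ᶠ k in atTop, ∫ ω, y k ω ^ 2 ∂P ≤ C) :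
    Tendsto (fun k => ∫ ω, y k ω ∂P) atTop (nhds 0) := by
  refine tendsto_order.2 ⟨fun a ha => .of_forall fun k =>
    ha.trans_le (integral_nonneg (hy0 k)), fun η hη => ?_⟩
  set M := 2 * (|C| + 1) / η with hM
  have hM0 : 0 < M := by positivity
  have truncated := tendsto_integral_min_of_ae_tendsto_zero (fun k => (hy k).1) hy0 hlim hM0.le
  filter_upwards [hC, truncated.eventually_lt_const (half_pos hη)] with k hCk truncated_lt
  have y_int := (hy k).integrable one_le_two
  have min_int : Integrable (fun ω => min (y k ω) M) P := y_int.inf (integrable_const M)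
  have sq_int := (hy k).integrable_sq.const_mul (1 / M)
  have split := integral_mono y_int (min_int.add sq_int) fun ω => le_min_add_sq (hy0 k ω) hM0
  simp only [Pi.add_apply] at split
  rw [integral_add min_int sq_int, integral_const_mul] at split
  have tail_lt : 1 / M * ∫ ω, y k ω ^ 2 ∂P < η / 2 := by
    have : η / 2 * M = |C| + 1 := by rw [hM]; field_simp
    rw [one_div_mul_eq_div, div_lt_iff₀ hM0, this]
    linarith [le_abs_self C]
  linarith

end Truncation

theorem IsRMSProp.tendsto_integral_norm_gradient_sq {ι : Type*} [Fintype ι] [Nonempty ι] {Ω : Type*}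
    {m0 : MeasurableSpace Ω} {P : Measure Ω} [IsProbabilityMeasure P] {ℱ : Filtration ℕ m0}
    {g : EuclideanSpace ℝ ι → ℝ} {L σ₀ σ₁ ε δ δ₀ δ₁ : ℝ} {x : ℕ → Ω → EuclideanSpace ℝ ι}
    {X S : ℕ → Ω → ι → ℝ} (h : IsRMSProp P ℱ g σ₀ σ₁ ε x X S) (hg : IsSmoothObjective g L)
    (hσ₀ : 0 ≤ σ₀) (hσ₁ : 0 < σ₁) (hε : 0 < ε) (hδ₀ : 0 < δ₀)
    (hsharp : ∀ᵐ ω ∂P, ∀ k i, |gradient g (x k ω) i| ≤ δ₀ → |X k ω i| ≤ δ₁) (hδ : 0 < δ)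
    (hflat : ∀ᶠ y in Bornology.cobounded (EuclideanSpace ℝ ι), ∀ i, δ ≤ |gradient g y i|)
    (hcoer : Tendsto g (Bornology.cobounded (EuclideanSpace ℝ ι)) atTop)
    (hsard : IsNowhereDense (g '' {y | gradient g y = 0})) :
    Tendsto (fun k => ∫ ω, ‖gradient g (x k ω)‖ ^ 2 ∂P) atTop (nhds 0) := by
  have hsgd := h.isPreconditionedSGD hε
  obtain ⟨C, hC⟩ := hsgd.exists_integral_norm_gradient_pow_four_le hg hσ₀ hσ₁ hε hδ hflat
  have bounded (k) : BoundedMeasurable (ℱ k) fun ω => ‖gradient g (x k ω)‖ ^ 2 :=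
    (hsgd.boundedMeasurable_comp k hg.continuous_gradient.norm).pow 2
  refine tendsto_integral_of_ae_tendsto_zero_of_integral_sq_le (C := C)
    (fun k => (memLp_two_iff_integrable_sq
      ((bounded k).1.mono (ℱ.le k)).aestronglyMeasurable).2
        (((bounded k).pow 2).integrable (ℱ.le k))) (fun k ω => sq_nonneg _) ?_ ?_
  · filter_upwards [h.ae_tendsto_gradient hg hσ₀ hσ₁ hε hδ₀ hsharp hδ hflat hcoer hsard] with ω hω
    simpa using hω.norm.pow 2
  · simpa only [← pow_mul] using hC

/-! ### The recursion with running averages -/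

section Average

variable {ι : Type*} {ε : ℝ}

theorem rmsPreconditioner_succ_mul (ε : ℝ) (k : ℕ) (w : ι → ℝ) (i : ι) :
    rmsPreconditioner ε k (fun j => (k + 1) * w j) i = 1 / √(k + 1) / (√(w i) + ε) := by
  rw [rmsPreconditioner, Real.sqrt_mul (by positivity), div_div, mul_add, mul_comm ε]

theorem isRMSPropRun_of_average {θ G : ℕ → EuclideanSpace ℝ ι} {V : ℕ → ι → ℝ}
    (hV1 : ∀ i, 0 ≤ V 1 i)
    (hV : ∀ n : ℕ, 2 ≤ n → ∀ i,
      V n i = (1 - 1 / (n : ℝ)) * V (n - 1) i + 1 / (n : ℝ) * G n i ^ 2)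
    (hθ : ∀ n : ℕ, 2 ≤ n → ∀ i, θ (n + 1) i = θ n i - 1 / √n / (√(V n i) + ε) * G n i) :
    IsRMSPropRun ε (fun k => θ (k + 2)) (fun k i => G (k + 2) i)
      (fun k i => ((k : ℝ) + 1) * V (k + 1) i) where
  zero_nonneg i := mul_nonneg (by positivity) (hV1 i)
  sum_succ k i := by
    simp only [hV (k + 2) (by lia)]
    push_cast
    field_simp
    ring
  succ_eq_sub k i := by
    rw [rmsPreconditioner_succ_mul, hθ (k + 2) (by lia)]
    push_cast
    rw [add_assoc (k : ℝ) 1 1, one_add_one_eq_two]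

theorem abs_one_div_sqrt_add_mul_le (hε : 0 < ε) {c t w : ℝ} (hc : 0 < c) (h : c * t ^ 2 ≤ w) :
    |1 / (√w + ε) * t| ≤ 1 / √c := by
  have le_sqrt : √c * |t| ≤ √w + ε := by
    rw [← Real.sqrt_sq_eq_abs, ← Real.sqrt_mul hc.le]
    exact (Real.sqrt_le_sqrt h).trans (le_add_of_nonneg_right hε.le)
  have denom_pos : 0 < √w + ε := by positivity
  rw [one_div_mul_eq_div, abs_div, abs_of_pos denom_pos, div_le_div_iff₀ denom_pos (by positivity)]
  linarith

theorem norm_le_add_of_forall_abs_sub_le [Fintype ι] {y z : EuclideanSpace ℝ ι} {c : ℝ}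
    (h : ∀ i, |z i - y i| ≤ c) : ‖z‖ ≤ ‖y‖ + √(Fintype.card ι * c ^ 2) := by
  have sub_le : ‖z - y‖ ≤ √(Fintype.card ι * c ^ 2) := by
    refine Real.le_sqrt_of_sq_le ?_
    rw [EuclideanSpace.real_norm_sq_eq, ← nsmul_eq_mul]
    exact Finset.sum_le_card_nsmul _ _ _ fun i _ => sq_le_sq.2 ((h i).trans (le_abs_self c))
  linarith [norm_le_norm_add_norm_sub' z y]

end Average

section Coordinates

variable {ι : Type*} {Ω : Type*} {m m0 : MeasurableSpace Ω} {P : Measure Ω}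
  {Y : Ω → EuclideanSpace ℝ ι}

theorem stronglyMeasurable_apply (hY : StronglyMeasurable[m] Y) (i : ι) :
    StronglyMeasurable[m] fun ω => Y ω i :=
  (EuclideanSpace.proj (𝕜 := ℝ) i).continuous.comp_stronglyMeasurable hY

theorem integrable_sq_apply [Fintype ι] (hY : AEStronglyMeasurable Y P)
    (hY2 : Integrable (fun ω => ‖Y ω‖ ^ 2) P) (i : ι) : Integrable (fun ω => Y ω i ^ 2) P :=
  hY2.mono' (((EuclideanSpace.proj (𝕜 := ℝ) i).continuous.comp_aestronglyMeasurable hY).pow 2)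
    (.of_forall fun _ => (Real.norm_of_nonneg (sq_nonneg _)).trans_le (sq_apply_le_norm_sq _ i))

theorem condExp_apply_ae_eq [Fintype ι] (hY : Integrable Y P) (i : ι) :
    P[fun ω => Y ω i | m] =ᵐ[P] fun ω => (P[Y | m]) ω i :=
  ((EuclideanSpace.proj (𝕜 := ℝ) i).comp_condExp_comm hY).symm

end Coordinates

/-- The filtration `ℱ` started at time `1`. -/
def shiftedFiltration {Ω : Type*} {m0 : MeasurableSpace Ω} (ℱ : Filtration ℕ m0) :
    Filtration ℕ m0 where
  seq k := ℱ (k + 1)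
  mono' _ _ hkl := ℱ.mono (Nat.succ_le_succ hkl)
  le' k := ℱ.le (k + 1)

/-- The averages `V n` become sums after multiplication by `n`. Time is shifted by two steps because
the step leading to `θ 2` still uses a differently weighted `V 1`. -/
theorem isRMSProp_of_average {ι : Type*} [Fintype ι] {Ω : Type*} {m0 : MeasurableSpace Ω}
    {P : Measure Ω} {ℱ : Filtration ℕ m0} {g : EuclideanSpace ℝ ι → ℝ} {σ₀ σ₁ ε c : ℝ}
    {G θ : ℕ → Ω → EuclideanSpace ℝ ι} {V : ℕ → Ω → ι → ℝ} (hε : 0 < ε) (hc : 0 < c)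
    (hG_meas : ∀ n, 2 ≤ n → StronglyMeasurable[ℱ n] (G n))
    (hG_int : ∀ n, 2 ≤ n → Integrable (G n) P)
    (hG_sq_int : ∀ n, 2 ≤ n → Integrable (fun ω => ‖G n ω‖ ^ 2) P)
    (hθ_adapted : ∀ n, 2 ≤ n → StronglyMeasurable[ℱ (n - 1)] (θ n))
    (hθ_one : ∃ B, ∀ ω, ‖θ 1 ω‖ ≤ B)
    (hV_one_meas : ∀ i, StronglyMeasurable[ℱ 1] fun ω => V 1 ω i)
    (hV_one : ∀ ω i, c * G 1 ω i ^ 2 ≤ V 1 ω i)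
    (hV : ∀ n : ℕ, 2 ≤ n → ∀ ω i,
      V n ω i = (1 - 1 / (n : ℝ)) * V (n - 1) ω i + 1 / (n : ℝ) * G n ω i ^ 2)
    (hθ : ∀ n : ℕ, 1 ≤ n → ∀ ω i,
      θ (n + 1) ω i = θ n ω i - 1 / √n / (√(V n ω i) + ε) * G n ω i)
    (hG_unbiased : ∀ n, 2 ≤ n → P[G n | ℱ (n - 1)] =ᵐ[P] fun ω => gradient g (θ n ω))
    (hG_var : ∀ n, 2 ≤ n → ∀ i, P[fun ω => G n ω i ^ 2 | ℱ (n - 1)] ≤ᵐ[P]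
      fun ω => σ₀ * gradient g (θ n ω) i ^ 2 + σ₁) :
    IsRMSProp P (shiftedFiltration ℱ) g σ₀ σ₁ ε (fun k => θ (k + 2))
      (fun k ω i => G (k + 2) ω i) fun k ω i => ((k : ℝ) + 1) * V (k + 1) ω i where
  x_meas k := hθ_adapted (k + 2) (by lia)
  S_zero_meas i := (hV_one_meas i).const_mul _
  X_meas k := stronglyMeasurable_apply (hG_meas (k + 2) (by lia))
  integrable_X_sq k := integrable_sq_apply (hG_int (k + 2) (by lia)).1 (hG_sq_int (k + 2) (by lia))
  isRMSPropRun ω := isRMSPropRun_of_average (θ := (θ · ω))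
    (fun i => (mul_nonneg hc.le (sq_nonneg _)).trans (hV_one ω i))
    (fun n hn => hV n hn ω) fun n hn => hθ n (by lia) ω
  exists_norm_zero_le := by
    obtain ⟨B, hB⟩ := hθ_one
    have abs_sub_le (ω i) : |θ 2 ω i - θ 1 ω i| ≤ 1 / √c := by
      rw [hθ 1 le_rfl, Nat.cast_one, Real.sqrt_one, div_one, sub_sub_cancel_left, abs_neg]
      exact abs_one_div_sqrt_add_mul_le hε hc (hV_one ω i)
    exact ⟨_, fun ω => (norm_le_add_of_forall_abs_sub_le (abs_sub_le ω)).trans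
      (add_le_add_left (hB ω) _)⟩
  unbiased k i := (condExp_apply_ae_eq (hG_int (k + 2) (by lia)) i).trans <|
    (hG_unbiased (k + 2) (by lia)).fun_comp (· i)
  second_moment_le k := hG_var (k + 2) (by lia)

/-- Mean-square convergence of RMSProp (Theorem 6.6):
`lim_{n→∞} E[‖∇g(θ_n)‖²] = 0`. -/
theorem rmsprop_mean_square_convergence
    {d : ℕ} {Ω : Type*} {m0 : MeasurableSpace Ω} (P : Measure Ω) [IsProbabilityMeasure P]
    (ℱ : Filtration ℕ m0)
    (g : EuclideanSpace ℝ (Fin d) → ℝ)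
    (L σ₀ σ₁ v ε β₁ : ℝ)
    (hL : 0 < L) (hσ₀ : 0 ≤ σ₀) (hσ₁ : 0 ≤ σ₁) (hv : 0 < v) (hε : 0 < ε)
    (hβ₁ : β₁ ∈ Set.Ioo (0 : ℝ) 1)
    (hg_diff : ContDiff ℝ 1 g)
    (hg_nonneg : ∀ x, 0 ≤ g x)
    (hg_smooth : ∀ x y, ‖gradient g x - gradient g y‖ ≤ L * ‖x - y‖)
    (θ₁ : EuclideanSpace ℝ (Fin d))
    (G θ : ℕ → Ω → EuclideanSpace ℝ (Fin d))
    (V : ℕ → Ω → Fin d → ℝ)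
    (hG_meas : ∀ n, 1 ≤ n → StronglyMeasurable[ℱ n] (G n))
    (hG_int : ∀ n, 1 ≤ n → Integrable (G n) P)
    (hG_sq_int : ∀ n, 1 ≤ n → Integrable (fun ω => ‖G n ω‖ ^ 2) P)
    (hθ_adapted : ∀ n, 1 ≤ n → StronglyMeasurable[ℱ (n - 1)] (θ n))
    (hθ_init : ∀ ω, θ 1 ω = θ₁)
    (hV0 : ∀ ω i, V 0 ω i = v)
    (hV1 : ∀ ω i, V 1 ω i = β₁ * v + (1 - β₁) * G 1 ω i ^ 2)
    (hV_rec : ∀ n : ℕ, 2 ≤ n → ∀ ω i,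
      V n ω i = (1 - 1 / (n : ℝ)) * V (n - 1) ω i + (1 / (n : ℝ)) * G n ω i ^ 2)
    (hθ_rec : ∀ n : ℕ, 1 ≤ n → ∀ ω (i : Fin d),
      θ (n + 1) ω i = θ n ω i
        - (1 / Real.sqrt (n : ℝ)) / (Real.sqrt (V n ω i) + ε) * G n ω i)
    (hG_unbiased : ∀ n, 1 ≤ n →
      P[G n | ℱ (n - 1)] =ᵐ[P] fun ω => gradient g (θ n ω))
    (hG_var : ∀ n, 1 ≤ n → ∀ i : Fin d, ∀ᵐ ω ∂P,
      (P[fun ω => G n ω i ^ 2 | ℱ (n - 1)]) ω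
        ≤ σ₀ * gradient g (θ n ω) i ^ 2 + σ₁)
    (δt : ℝ) (hδt : 0 < δt)
    (hflat : ∀ i : Fin d, ∀ᶠ x in Bornology.cobounded (EuclideanSpace ℝ (Fin d)),
      δt < |gradient g x i|)
    (δ₀ δ₁ : ℝ) (hδ₀ : 0 < δ₀) (hδ₁ : 0 < δ₁)
    (hG_sharp : ∀ᵐ ω ∂P, ∀ n : ℕ, 1 ≤ n → ∀ i : Fin d,
      |gradient g (θ n ω) i| ≤ δ₀ → |G n ω i| ≤ δ₁)
    (hg_coercive : Filter.Tendsto g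
      (Bornology.cobounded (EuclideanSpace ℝ (Fin d))) Filter.atTop)
    (hg_sard : interior (closure {y : ℝ |
      ∃ x : EuclideanSpace ℝ (Fin d), gradient g x = 0 ∧ g x = y}) = ∅) :
    Filter.Tendsto (fun n : ℕ => ∫ ω, ‖gradient g (θ n ω)‖ ^ 2 ∂P)
      Filter.atTop (nhds 0) := by
  rcases isEmpty_or_nonempty (Fin d) with _ | _
  · simp [Subsingleton.elim _ (0 : EuclideanSpace ℝ (Fin d))]
  have hg : IsSmoothObjective g L := ⟨hL, hg_nonneg, hg_diff.differentiable one_ne_zero, hg_smooth⟩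
  have V_one_meas (i) : StronglyMeasurable[ℱ 1] fun ω => V 1 ω i := by
    simp only [hV1]
    exact stronglyMeasurable_const.add
      (((stronglyMeasurable_apply (hG_meas 1 le_rfl) i).pow 2).const_mul _)
  have le_V_one (ω i) : (1 - β₁) * G 1 ω i ^ 2 ≤ V 1 ω i :=
    hV1 ω i ▸ le_add_of_nonneg_left (mul_pos hβ₁.1 hv).le
  have run := isRMSProp_of_average (σ₁ := σ₁ + 1) hε (sub_pos.2 hβ₁.2)
    (fun n hn => hG_meas n (by lia)) (fun n hn => hG_int n (by lia))
    (fun n hn => hG_sq_int n (by lia)) (fun n hn => hθ_adapted n (by lia))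
    ⟨‖θ₁‖, fun ω => (congrArg norm (hθ_init ω)).le⟩ V_one_meas le_V_one hV_rec hθ_rec
    (fun n hn => hG_unbiased n (by lia))
    (fun n hn i => (hG_var n (by lia) i).mono fun _ hω =>
      hω.trans (add_le_add_right (lt_add_one σ₁).le _))
  exact (tendsto_add_atTop_iff_nat 2).1 <| run.tendsto_integral_norm_gradient_sq hg hσ₀
    (by positivity) hε hδ₀ (hG_sharp.mono fun ω hω k => hω (k + 2) (by lia)) hδt
    ((eventually_all.2 hflat).mono fun y hy i => (hy i).le) hg_coercive hg_sard
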